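/- arXiv:1408.5797 — 2 statements merged into one kernel-verified Lean document; each statement's English description precedes it below -/
import Mathlib

section
/- Let F ⊆ Sym²(ℝⁿ) be a convex ST-invariant cone subequation with finite Riesz characteristic p, where 2 < p < ∞, and set K_p(t) = −t^{2−p}. Let u be F-subharmonic and locally Lebesgue integrable on an open neighborhood of 0 in ℝⁿ. For x in this neighborhood and small t > 0 let V(u, x, t) denote the average of u over the closed ball B_t(x) = {y : |y−x| ≤ t}. Suppose that for some constant Θ ≥ 0 the rescaled functions u_r(x) = r^{p−2}·u(rx) converge to Θ·K_p(|x|) in L¹_loc(ℝⁿ) as r ↓ 0, i.e. ∫_{|x| ≤ R} |u_r(x) − Θ·K_p(|x|)| dx → 0 for every R > 0. Then for every x ≠ 0 sufficiently near 0 the volume density Θ^V(u, x) = lim_{t↓0} V(u, x, t)/K_p(t) exists, and Θ^V(u, x) → 0 as x → 0 with x ≠ 0. -/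
open Set Filter Topology Matrix

noncomputable section

abbrev EucSp (n : ℕ) := EuclideanSpace ℝ (Fin n)

/-- The rank-one orthogonal projection matrix `P_e = e eᵀ` associated to a vector `e`. -/
def projMat {n : ℕ} (e : EucSp n) : Matrix (Fin n) (Fin n) ℝ :=
  Matrix.of fun i j => e i * e j

/-- A (pure second-order, constant coefficient) subequation: a closed set of symmetric
matrices satisfying positivity `F + 𝒫 ⊆ F`. -/
def IsSubequation {n : ℕ} (F : Set (Matrix (Fin n) (Fin n) ℝ)) : Prop :=
  (∀ A ∈ F, A.IsSymm) ∧ IsClosed F ∧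
    ∀ A ∈ F, ∀ P : Matrix (Fin n) (Fin n) ℝ, P.PosSemidef → A + P ∈ F

/-- A cone subequation. -/
def IsConeSubequation {n : ℕ} (F : Set (Matrix (Fin n) (Fin n) ℝ)) : Prop :=
  IsSubequation F ∧ ∀ A ∈ F, ∀ t : ℝ, 0 ≤ t → t • A ∈ F

/-- `F` is invariant under a closed subgroup of `O(n)` acting transitively on the
unit sphere. -/
def STInvariant {n : ℕ} (F : Set (Matrix (Fin n) (Fin n) ℝ)) : Prop :=
  ∃ G : Set (Matrix (Fin n) (Fin n) ℝ),
    IsClosed G ∧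
    G ⊆ (Matrix.orthogonalGroup (Fin n) ℝ : Set (Matrix (Fin n) (Fin n) ℝ)) ∧
    (1 : Matrix (Fin n) (Fin n) ℝ) ∈ G ∧
    (∀ g ∈ G, ∀ h ∈ G, g * h ∈ G) ∧
    (∀ g ∈ G, g⁻¹ ∈ G) ∧
    (∀ x y : EucSp n, ‖x‖ = 1 → ‖y‖ = 1 → ∃ g ∈ G, Matrix.toEuclideanLin g x = y) ∧
    (∀ g ∈ G, ∀ A ∈ F, gᵀ * A * g ∈ F)

/-- The interior of `F` relative to the subspace `Sym²(ℝⁿ)` of symmetric matrices. -/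
def symInterior {n : ℕ} (F : Set (Matrix (Fin n) (Fin n) ℝ)) :
    Set (Matrix (Fin n) (Fin n) ℝ) :=
  {A | ∃ U ∈ 𝓝 A, ∀ B ∈ U, B.IsSymm → B ∈ F}

/-- The frontier of `F` relative to the subspace `Sym²(ℝⁿ)` of symmetric matrices. -/
def symFrontier {n : ℕ} (F : Set (Matrix (Fin n) (Fin n) ℝ)) :
    Set (Matrix (Fin n) (Fin n) ℝ) :=
  closure F \ symInterior F

/-- `F` has finite (increasing) Riesz characteristic `p`:
`P_{e⊥} − (p−1) P_e ∈ ∂F` for every unit vector `e`. -/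
def HasRieszChar {n : ℕ} (F : Set (Matrix (Fin n) (Fin n) ℝ)) (p : ℝ) : Prop :=
  1 ≤ p ∧ ∀ e : EucSp n, ‖e‖ = 1 →
    ((1 : Matrix (Fin n) (Fin n) ℝ) - projMat e) - (p - 1) • projMat e ∈ symFrontier F

/-- `F` has finite decreasing Riesz characteristic `q`:
`−P_{e⊥} + (q−1) P_e ∈ ∂F` for every unit vector `e`. -/
def HasDualRieszChar {n : ℕ} (F : Set (Matrix (Fin n) (Fin n) ℝ)) (q : ℝ) : Prop :=
  1 ≤ q ∧ ∀ e : EucSp n, ‖e‖ = 1 →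
    -((1 : Matrix (Fin n) (Fin n) ℝ) - projMat e) + (q - 1) • projMat e ∈ symFrontier F

/-- The Hessian matrix of a function `φ : ℝⁿ → ℝ` at `x`. -/
def hess {n : ℕ} (φ : EucSp n → ℝ) (x : EucSp n) : Matrix (Fin n) (Fin n) ℝ :=
  Matrix.of fun i j =>
    iteratedFDeriv ℝ 2 φ x ![EuclideanSpace.single i (1 : ℝ), EuclideanSpace.single j (1 : ℝ)]

/-- `u` is `F`-subharmonic (a viscosity subsolution) on `X`. -/
def IsFSubharmonicOn {n : ℕ} (F : Set (Matrix (Fin n) (Fin n) ℝ))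
    (X : Set (EucSp n)) (u : EucSp n → EReal) : Prop :=
  UpperSemicontinuousOn u X ∧ (∀ x ∈ X, u x < ⊤) ∧
    ∀ x₀ ∈ X, ∀ φ : EucSp n → ℝ, ContDiffAt ℝ 2 φ x₀ →
      (∀ᶠ x in 𝓝[X] x₀, u x ≤ ((φ x : ℝ) : EReal)) → u x₀ = ((φ x₀ : ℝ) : EReal) →
      hess φ x₀ ∈ F

/-- The dual subequation `F̃ = {A : −A ∉ Int F}` (interior relative to `Sym²(ℝⁿ)`). -/
def dualSubeq {n : ℕ} (F : Set (Matrix (Fin n) (Fin n) ℝ)) :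
    Set (Matrix (Fin n) (Fin n) ℝ) :=
  {A | A.IsSymm ∧ -A ∉ symInterior F}

/-- `u` is `F`-harmonic on `X`: `u` is `F`-subharmonic and `−u` is `F̃`-subharmonic. -/
def IsFHarmonicOn {n : ℕ} (F : Set (Matrix (Fin n) (Fin n) ℝ))
    (X : Set (EucSp n)) (u : EucSp n → ℝ) : Prop :=
  IsFSubharmonicOn F X (fun x => ((u x : ℝ) : EReal)) ∧
  IsFSubharmonicOn (dualSubeq F) X (fun x => ((-(u x) : ℝ) : EReal))

/-- The Riesz kernel `K_p`. -/
def rieszKernel (p t : ℝ) : ℝ :=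
  if p < 2 then t ^ (2 - p) else if p = 2 then Real.log t else -(t ^ (2 - p))

open MeasureTheory

/-- The volume average `V(u, x, t)` of `u` over the closed ball `B_t(x)`. -/
def ballAvg {n : ℕ} (u : EucSp n → EReal) (x : EucSp n) (t : ℝ) : ℝ :=
  ⨍ y in Metric.closedBall x t, (u y).toReal


section

open scoped SchwartzMap LineDeriv

/-- Second order operator `∑ ∂_{w k} ∂_{w k}` on Schwartz functions. -/
def opL {n : ℕ} (w : Fin n → EucSp n) (f : 𝓢(EucSp n, ℝ)) : 𝓢(EucSp n, ℝ) :=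
  ∑ k, ∂_{w k} (∂_{w k} f)

theorem opL_apply {n : ℕ} (w : Fin n → EucSp n) (f : 𝓢(EucSp n, ℝ)) (x : EucSp n) :
    opL w f x = ∑ k, (∂_{w k} (∂_{w k} f)) x := by
  simp [opL]

theorem opL_add {n : ℕ} (w : Fin n → EucSp n) (f g : 𝓢(EucSp n, ℝ)) :
    opL w (f + g) = opL w f + opL w g := by
  simp [opL, LineDeriv.lineDerivOp_add, Finset.sum_add_distrib]

theorem opL_smul {n : ℕ} (w : Fin n → EucSp n) (c : ℝ) (f : 𝓢(EucSp n, ℝ)) :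
    opL w (c • f) = c • opL w f := by
  simp [opL, LineDeriv.lineDerivOp_smul, Finset.smul_sum]

theorem opL_sub {n : ℕ} (w : Fin n → EucSp n) (f g : 𝓢(EucSp n, ℝ)) :
    opL w (f - g) = opL w f - opL w g := by
  have := opL_add w (f - g) g
  rw [sub_add_cancel] at this
  rw [this]; abel

theorem opL_symm {n : ℕ} (w : Fin n → EucSp n) (f g : 𝓢(EucSp n, ℝ)) :
    ∫ x, f x * opL w g x = ∫ x, opL w f x * g x := by
  have hi : ∀ a b : 𝓢(EucSp n, ℝ), Integrable (fun x => a x * b x) := by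
    intro a b
    have := (SchwartzMap.pairing (ContinuousLinearMap.mul ℝ ℝ) a b).integrable (μ := volume)
    exact this
  simp only [opL_apply, Finset.mul_sum, Finset.sum_mul]
  rw [integral_finsetSum _ (fun k _ => hi _ _), integral_finsetSum _ (fun k _ => hi _ _)]
  refine Finset.sum_congr rfl fun k _ => ?_
  rw [SchwartzMap.integral_mul_lineDerivOp_right_eq_neg_left,
    SchwartzMap.integral_mul_lineDerivOp_right_eq_neg_left]
  simp

/-- Solvability of `h - l L h = f` in the Schwartz space. -/
theorem exists_resolvent {n : ℕ} (w : Fin n → EucSp n) {l : ℝ} (hl : 0 ≤ l)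
    (f : 𝓢(EucSp n, ℝ)) : ∃ h : 𝓢(EucSp n, ℝ), h - l • opL w h = f := by
  classical
  -- the multiplier
  let c : ℝ := Real.sqrt l * (2 * Real.pi)
  let C : EucSp n →L[ℝ] EucSp n :=
    ∑ k, (c • innerSL ℝ (w k)).smulRight (EuclideanSpace.single k (1 : ℝ))
  have hC : ∀ ξ, ‖C ξ‖ ^ 2 = ∑ k, l * (2 * Real.pi) ^ 2 * (inner ℝ ξ (w k)) ^ 2 := by
    intro ξ
    rw [EuclideanSpace.norm_sq_eq]
    refine Finset.sum_congr rfl fun k _ => ?_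
    have : (C ξ) k = c * inner ℝ ξ (w k) := by
      simp [C, Finset.sum_apply, real_inner_comm, Pi.single_apply]
    rw [this, Real.norm_eq_abs, sq_abs, mul_pow, mul_pow, Real.sq_sqrt hl]
  let m : EucSp n → ℝ := fun ξ => (1 + ‖C ξ‖ ^ 2) ^ (-1 : ℝ)
  have hm : m.HasTemperateGrowth := by
    have h1 := Function.hasTemperateGrowth_one_add_norm_sq_rpow (EucSp n) (-1 : ℝ)
    exact h1.comp C.hasTemperateGrowth
  let fC : 𝓢(EucSp n, ℂ) := SchwartzMap.postcompCLM (Complex.ofRealCLM) f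
  let H : 𝓢(EucSp n, ℂ) := SchwartzMap.fourierMultiplierCLM ℂ m fC
  let h : 𝓢(EucSp n, ℝ) := SchwartzMap.postcompCLM (Complex.reCLM) H
  have hline : ∀ (v : EucSp n) (g : 𝓢(EucSp n, ℂ)), ∂_{v} (SchwartzMap.postcompCLM (Complex.reCLM) g)
      = SchwartzMap.postcompCLM (Complex.reCLM) (∂_{v} g) := by
    intro v g
    ext x
    rw [SchwartzMap.lineDerivOp_apply_eq_fderiv, SchwartzMap.postcompCLM_apply,
      SchwartzMap.lineDerivOp_apply_eq_fderiv]
    have : ⇑(SchwartzMap.postcompCLM (Complex.reCLM) g) = Complex.reCLM ∘ g := rfl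
    rw [this, (Complex.reCLM.hasFDerivAt.comp x g.differentiableAt.hasFDerivAt).fderiv]
    rfl
  have hdd : ∀ (v : EucSp n) (g : 𝓢(EucSp n, ℂ)), ∂_{v} (∂_{v} g) =
      SchwartzMap.fourierMultiplierCLM ℂ (fun ξ => - (2 * Real.pi) ^ 2 * (inner ℝ ξ v) ^ 2) g := by
    intro v g
    have e : (fun ξ : EucSp n => - (2 * Real.pi) ^ 2 * (inner ℝ ξ v) ^ 2) =
      (- (2 * Real.pi) ^ 2) • ((fun ξ : EucSp n => inner ℝ ξ v) * (fun ξ : EucSp n => inner ℝ ξ v)) := by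
      ext ξ; simp [sq]
    rw [e, SchwartzMap.fourierMultiplierCLM_smul (by fun_prop),
      _root_.smul_apply,
      ← SchwartzMap.fourierMultiplierCLM_fourierMultiplierCLM_apply (by fun_prop) (by fun_prop)]
    simp_rw [SchwartzMap.lineDeriv_eq_fourierMultiplierCLM]
    have hcs : ∀ (a : ℂ) (G : 𝓢(EucSp n, ℂ)),
        SchwartzMap.fourierMultiplierCLM ℂ (fun ξ : EucSp n => inner ℝ ξ v) (a • G) =
        a • SchwartzMap.fourierMultiplierCLM ℂ (fun ξ : EucSp n => inner ℝ ξ v) G := by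
      intro a G
      rw [← SchwartzMap.fourierMultiplierCLM_ofReal ℂ (by fun_prop),
        ← SchwartzMap.fourierMultiplierCLM_ofReal ℂ (by fun_prop), map_smul]
    rw [hcs, smul_smul]
    ext x
    simp only [_root_.smul_apply]
    simp only [smul_eq_mul, Complex.real_smul]
    congr 1
    push_cast
    ring_nf
    simp
  have hH : H - (l : ℝ) • ∑ k, ∂_{w k} (∂_{w k} H) = fC := by
    simp_rw [hdd]
    rw [← _root_.sum_apply, ← SchwartzMap.fourierMultiplierCLM_sum ℂ (by intro i _; fun_prop)]
    have h1 : H = SchwartzMap.fourierMultiplierCLM ℂ (fun _ : EucSp n => (1:ℝ)) H := by simp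
    rw [← _root_.smul_apply, ← SchwartzMap.fourierMultiplierCLM_smul (by fun_prop)]
    have htg : (fun ξ : EucSp n => ∑ i, -(2 * Real.pi) ^ 2 * (inner ℝ ξ (w i)) ^ 2).HasTemperateGrowth := by fun_prop
    have e2 : ∀ g : EucSp n → ℝ, g.HasTemperateGrowth → 
        SchwartzMap.fourierMultiplierCLM ℂ g H = SchwartzMap.fourierMultiplierCLM ℂ (g * m) fC :=
      fun g hg => SchwartzMap.fourierMultiplierCLM_fourierMultiplierCLM_apply hg hm fC
    have e3 : H - SchwartzMap.fourierMultiplierCLM ℂ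
        (l • fun ξ : EucSp n => ∑ i, -(2 * Real.pi) ^ 2 * (inner ℝ ξ (w i)) ^ 2) H
        = SchwartzMap.fourierMultiplierCLM ℂ (fun ξ : EucSp n => 
          1 + l * ∑ i, (2 * Real.pi) ^ 2 * (inner ℝ ξ (w i)) ^ 2) H := by
      have := congrArg (fun T => T H) (SchwartzMap.fourierMultiplierCLM_sum (𝕜 := ℝ) (E := EucSp n) (ι := Bool) (s := Finset.univ) ℂ
        (g := fun b : Bool => if b then (fun _ : EucSp n => (1:ℝ)) else (fun ξ : EucSp n => 
          l * ∑ i, (2 * Real.pi) ^ 2 * (inner ℝ ξ (w i)) ^ 2)) (by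
          intro i _; cases i <;> simp <;> fun_prop))
      simp only [Fintype.sum_bool, if_true] at this
      have h9 : (l • fun ξ : EucSp n => ∑ i, -(2 * Real.pi) ^ 2 * (inner ℝ ξ (w i)) ^ 2) = 
        (-1 : ℝ) • (fun ξ : EucSp n => l * ∑ i, (2 * Real.pi) ^ 2 * (inner ℝ ξ (w i)) ^ 2) := by
        ext ξ; simp [Finset.sum_neg_distrib]
      rw [h9, SchwartzMap.fourierMultiplierCLM_smul (by fun_prop)]
      simp only [Bool.false_eq_true, if_false] at this
      rw [this]
      simp
    rw [e3, e2 _ (by fun_prop)]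
    have e4 : (fun ξ : EucSp n => 1 + l * ∑ i, (2 * Real.pi) ^ 2 * (inner ℝ ξ (w i)) ^ 2) * m = fun _ => (1:ℝ) := by
      ext ξ
      have h5 : l * ∑ i, (2 * Real.pi) ^ 2 * (inner ℝ ξ (w i)) ^ 2 = ‖C ξ‖ ^ 2 := by
        rw [hC, Finset.mul_sum]; exact Finset.sum_congr rfl fun k _ => by ring
      simp only [Pi.mul_apply, h5, m]
      rw [Real.rpow_neg_one, mul_inv_cancel₀ (by positivity)]
    rw [e4]
    simp
  refine ⟨h, ?_⟩
  have h7 := congrArg (fun g => SchwartzMap.postcompCLM (Complex.reCLM) g) hH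
  ext x
  have h8 := congrArg (fun g : 𝓢(EucSp n, ℝ) => g x) h7
  simp only [SchwartzMap.postcompCLM_apply, _root_.sub_apply, _root_.smul_apply, _root_.sum_apply] at h8
  simp only [_root_.sub_apply, _root_.smul_apply, opL_apply]
  have h10 : ∀ k, (∂_{w k} (∂_{w k} h)) x = Complex.reCLM ((∂_{w k} (∂_{w k} H)) x) := by
    intro k
    simp only [h, hline]; rfl
  simp only [h10]
  have h11 : h x = Complex.reCLM (H x) := rfl
  have h12 : Complex.reCLM (fC x) = f x := by
    show (Complex.reCLM (Complex.ofRealCLM (f x))) = f x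
    simp
  rw [h11, ← h12, ← h8]
  simp


open scoped SchwartzMap LineDeriv

theorem second_diff_bound (h h' : ℝ → ℝ) (a ε s : ℝ) (hs : 0 ≤ s)
    (hd : ∀ t, |t| ≤ s → HasDerivAt h (h' t) t)
    (hb : ∀ t, |t| ≤ s → |h' t - h' 0 - t * a| ≤ ε * |t|) :
    |h s + h (-s) - 2 * h 0 - s ^ 2 * a| ≤ 2 * ε * s ^ 2 := by
  have key := norm_image_sub_le_of_norm_deriv_le_segment' (f := fun t => h t + h (-t) - t ^ 2 * a)
    (f' := fun t => h' t - h' (-t) - 2 * t * a) (a := 0) (b := s) (C := 2 * ε * s) ?_ ?_ s ⟨hs, le_rfl⟩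
  · simp only [Real.norm_eq_abs, sub_zero, neg_zero] at key
    have e1 : h s + h (-s) - 2 * h 0 - s ^ 2 * a = h s + h (-s) - s ^ 2 * a - (h 0 + h 0 - 0 ^ 2 * a) := by ring
    rw [e1]
    exact key.trans (le_of_eq (by ring))
  · intro t ht
    have ht' : |t| ≤ s := by rw [abs_of_nonneg ht.1]; exact ht.2
    have h1 := hd t ht'
    have h2 := (hd (-t) (by rwa [abs_neg])).scomp t (hasDerivAt_neg t)
    have h3 := ((hasDerivAt_pow 2 t).mul_const a)
    have := ((h1.add h2).sub h3).hasDerivWithinAt (s := Icc 0 s)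
    refine this.congr_deriv ?_
    simp only [smul_eq_mul, Nat.cast_ofNat]
    ring
  · intro t ht
    have ht' : |t| ≤ s := by rw [abs_of_nonneg ht.1]; exact ht.2.le
    have h1 := hb t ht'
    have h2 := hb (-t) (by rwa [abs_neg])
    rw [abs_neg] at h2
    rw [Real.norm_eq_abs]
    have h3 : |h' t - h' (-t) - 2 * t * a| ≤ ε * |t| + ε * |t| := by
      have : h' t - h' (-t) - 2 * t * a = (h' t - h' 0 - t * a) - (h' (-t) - h' 0 - (-t) * a) := by ring
      rw [this]
      exact (abs_sub _ _).trans (add_le_add h1 h2)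
    have h4 : ε * |t| ≤ ε * s := by
      rcases eq_or_ne t 0 with h0 | h0
      · subst h0
        have hb' := hb s (by rw [abs_of_nonneg hs])
        have := (abs_nonneg _).trans hb'
        rw [abs_of_nonneg hs] at this
        simpa using this
      · have hε : 0 ≤ ε := by
          have := (abs_nonneg _).trans h1
          exact nonneg_of_mul_nonneg_left this (abs_pos.mpr h0)
        gcongr
    linarith

theorem schwartz_line {n : ℕ} (f : 𝓢(EucSp n, ℝ)) (x w : EucSp n) (t : ℝ) :
    HasDerivAt (fun t : ℝ => f (x + t • w)) ((∂_{w} f) (x + t • w)) t := by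
  rw [SchwartzMap.lineDerivOp_apply_eq_fderiv]
  have h1 : HasDerivAt (fun t : ℝ => x + t • w) w t := by
    simpa using ((hasDerivAt_id t).smul_const w).const_add x
  exact (f.hasFDerivAt (x + t • w)).comp_hasDerivAt t h1

theorem schwartz_bdd {n : ℕ} (f : 𝓢(EucSp n, ℝ)) : ∃ C : ℝ, 0 ≤ C ∧ ∀ x, |f x| ≤ C := by
  refine ⟨SchwartzMap.seminorm ℝ 0 0 f, apply_nonneg _ _, fun x => ?_⟩
  exact f.norm_le_seminorm ℝ x

theorem schwartz_third {n : ℕ} (f : 𝓢(EucSp n, ℝ)) : ∃ C : ℝ, 0 ≤ C ∧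
    ∀ w x : EucSp n, |(∂_{w} (∂_{w} (∂_{w} f))) x| ≤ C * ‖w‖ ^ 3 := by
  refine ⟨SchwartzMap.seminorm ℝ 0 3 f, apply_nonneg _ _, fun w x => ?_⟩
  have h1 : (∂_{w} (∂_{w} (∂_{w} f))) x = iteratedFDeriv ℝ 3 f x (fun _ => w) := by
    rw [← SchwartzMap.iteratedLineDerivOp_eq_iteratedFDeriv]
    rfl
  rw [h1]
  have h2 := (iteratedFDeriv ℝ 3 f x).le_opNorm (fun _ => w)
  have h3 := f.norm_iteratedFDeriv_le_seminorm ℝ 3 x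
  simp only [Finset.prod_const, Finset.card_univ, Fintype.card_fin] at h2
  exact h2.trans (by gcongr)

theorem schwartz_second_diff {n : ℕ} (f : 𝓢(EucSp n, ℝ)) : ∃ C : ℝ, 0 ≤ C ∧
    ∀ (w x : EucSp n) (s : ℝ), 0 ≤ s →
      |f (x + s • w) + f (x - s • w) - 2 * f x - s ^ 2 * (∂_{w} (∂_{w} f)) x| ≤ C * ‖w‖ ^ 3 * s ^ 3 := by
  obtain ⟨C, hC, hb⟩ := schwartz_third f
  refine ⟨2 * C, by positivity, fun w x s hs => ?_⟩
  have key := second_diff_bound (fun t => f (x + t • w)) (fun t => (∂_{w} f) (x + t • w))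
    ((∂_{w} (∂_{w} f)) x) (C * ‖w‖ ^ 3 * s) s hs (fun t _ => schwartz_line f x w t) ?_
  · simp only [zero_smul, add_zero, neg_smul, ← sub_eq_add_neg] at key
    refine key.trans (le_of_eq (by ring))
  · -- second derivative estimate
    have h2 : ∀ t : ℝ, |t| ≤ s → |(∂_{w} (∂_{w} f)) (x + t • w) - (∂_{w} (∂_{w} f)) x| ≤ C * ‖w‖ ^ 3 * s := by
      intro t ht
      have := Convex.norm_image_sub_le_of_norm_hasDerivWithin_le (s := univ)
        (f := fun t : ℝ => (∂_{w} (∂_{w} f)) (x + t • w)) (x := 0) (y := t) (C := C * ‖w‖ ^ 3)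
        (fun t _ => (schwartz_line (∂_{w} (∂_{w} f)) x w t).hasDerivWithinAt)
        (fun t _ => hb w _) convex_univ (mem_univ _) (mem_univ _)
      simp only [zero_smul, add_zero, sub_zero, Real.norm_eq_abs] at this
      exact this.trans (by gcongr)
    intro t ht
    have := Convex.norm_image_sub_le_of_norm_hasDerivWithin_le (s := Icc (-s) s)
        (f := fun t : ℝ => (∂_{w} f) (x + t • w) - t * (∂_{w} (∂_{w} f)) x)
        (f' := fun t : ℝ => (∂_{w} (∂_{w} f)) (x + t • w) - (∂_{w} (∂_{w} f)) x)
        (x := 0) (y := t) (C := C * ‖w‖ ^ 3 * s)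
        (fun t _ => by
          have h5 := ((schwartz_line (∂_{w} f) x w t).sub ((hasDerivAt_id t).mul_const ((∂_{w} (∂_{w} f)) x))).hasDerivWithinAt (s := Icc (-s) s)
          exact h5.congr_deriv (by simp))
        (fun t ht => h2 t (abs_le.mpr ht)) (convex_Icc _ _) ⟨by linarith, hs⟩ (abs_le.mp ht)
    simp only [zero_smul, add_zero, sub_zero, Real.norm_eq_abs, zero_mul] at this ⊢
    convert this using 2
    ring

theorem lineDD_nonpos_of_isLocalMax {n : ℕ} (f : 𝓢(EucSp n, ℝ)) (x w : EucSp n)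
    (h : IsLocalMax f x) : (∂_{w} (∂_{w} f)) x ≤ 0 := by
  obtain ⟨C, hC, hb⟩ := schwartz_second_diff f
  by_contra hcon
  push Not at hcon
  set a := (∂_{w} (∂_{w} f)) x
  have t1 : Tendsto (fun s : ℝ => x + s • w) (𝓝[>] 0) (𝓝 x) := by
    have : Continuous (fun s : ℝ => x + s • w) := by fun_prop
    have := this.tendsto 0
    simp only [zero_smul, add_zero] at this
    exact this.mono_left nhdsWithin_le_nhds
  have t2 : Tendsto (fun s : ℝ => x - s • w) (𝓝[>] 0) (𝓝 x) := by
    have : Continuous (fun s : ℝ => x - s • w) := by fun_prop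
    have := this.tendsto 0
    simp only [zero_smul, sub_zero] at this
    exact this.mono_left nhdsWithin_le_nhds
  have t3 : Tendsto (fun s : ℝ => C * ‖w‖ ^ 3 * s) (𝓝[>] 0) (𝓝 0) := by
    have : Continuous (fun s : ℝ => C * ‖w‖ ^ 3 * s) := by fun_prop
    have := this.tendsto 0
    simp only [mul_zero] at this
    exact this.mono_left nhdsWithin_le_nhds
  obtain ⟨s, hs1, hs2, hs3, hs4⟩ := ((t1.eventually h).and ((t2.eventually h).and
    ((t3.eventually (gt_mem_nhds hcon)).and self_mem_nhdsWithin))).exists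
  have hs : 0 < s := hs4
  have := (abs_le.mp (hb w x s hs.le)).1
  have h6 : 0 < s ^ 2 * (a - C * ‖w‖ ^ 3 * s) := by
    apply mul_pos (by positivity); linarith
  nlinarith

theorem opL_nonpos_of_isLocalMax {n : ℕ} (w : Fin n → EucSp n) (f : 𝓢(EucSp n, ℝ)) (x : EucSp n)
    (h : IsLocalMax f x) : opL w f x ≤ 0 := by
  rw [opL_apply]
  exact Finset.sum_nonpos fun k _ => lineDD_nonpos_of_isLocalMax f x (w k) h

theorem opL_neg {n : ℕ} (w : Fin n → EucSp n) (f : 𝓢(EucSp n, ℝ)) :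
    opL w (-f) = - opL w f := by
  have := opL_smul w (-1) f
  simpa using this

theorem opL_nonneg_of_isLocalMin {n : ℕ} (w : Fin n → EucSp n) (f : 𝓢(EucSp n, ℝ)) (x : EucSp n)
    (h : IsLocalMin f x) : 0 ≤ opL w f x := by
  have h1 : IsLocalMax (-f : 𝓢(EucSp n, ℝ)) x := by
    filter_upwards [h] with y hy
    simpa using hy
  have := opL_nonpos_of_isLocalMax w (-f) x h1
  rw [opL_neg] at this
  simpa using this

theorem resolvent_le {n : ℕ} (w : Fin n → EucSp n) {l : ℝ} (hl : 0 ≤ l) {f h : 𝓢(EucSp n, ℝ)}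
    (hh : h - l • opL w h = f) {C : ℝ} (hC : 0 ≤ C) (hf : ∀ x, f x ≤ C) (x : EucSp n) : h x ≤ C := by
  by_contra hcon
  push Not at hcon
  have hz : Tendsto h (cocompact (EucSp n)) (𝓝 0) := zero_at_infty h
  obtain ⟨x0, hx0⟩ := h.continuous.exists_forall_ge' x
    ((hz.eventually (gt_mem_nhds (hC.trans_lt hcon))).mono fun y hy => hy.le)
  have h1 := opL_nonpos_of_isLocalMax w h x0 (Eventually.of_forall hx0)
  have h2 := congrArg (fun g : 𝓢(EucSp n, ℝ) => g x0) hh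
  simp only [_root_.sub_apply, _root_.smul_apply, smul_eq_mul] at h2
  have h3 := hf x0
  have h4 := hx0 x
  nlinarith [mul_nonneg hl (neg_nonneg.mpr h1)]

theorem resolvent_neg {n : ℕ} (w : Fin n → EucSp n) {l : ℝ} {f h : 𝓢(EucSp n, ℝ)}
    (hh : h - l • opL w h = f) : (-h) - l • opL w (-h) = -f := by
  rw [opL_neg, ← hh]; simp; abel

theorem resolvent_nonneg {n : ℕ} (w : Fin n → EucSp n) {l : ℝ} (hl : 0 ≤ l) {f h : 𝓢(EucSp n, ℝ)}
    (hh : h - l • opL w h = f) (hf : ∀ x, 0 ≤ f x) (x : EucSp n) : 0 ≤ h x := by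
  have := resolvent_le w hl (resolvent_neg w hh) le_rfl (fun y => by simpa using hf y) x
  simpa using this

theorem resolvent_abs_le {n : ℕ} (w : Fin n → EucSp n) {l : ℝ} (hl : 0 ≤ l) {f h : 𝓢(EucSp n, ℝ)}
    (hh : h - l • opL w h = f) {C : ℝ} (hf : ∀ x, |f x| ≤ C) (x : EucSp n) : |h x| ≤ C := by
  have hC : 0 ≤ C := (abs_nonneg _).trans (hf x)
  rw [abs_le]
  constructor
  · have := resolvent_le w hl (resolvent_neg w hh) hC
      (fun y => by simpa using (neg_le_abs _).trans (hf y)) x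
    simp at this
    linarith
  · exact resolvent_le w hl hh hC (fun y => (le_abs_self _).trans (hf y)) x

theorem resolvent_opL {n : ℕ} (w : Fin n → EucSp n) {l : ℝ} {f h : 𝓢(EucSp n, ℝ)}
    (hh : h - l • opL w h = f) : opL w h - l • opL w (opL w h) = opL w f := by
  rw [← hh, opL_sub, opL_smul]

theorem resolvent_expand1 {n : ℕ} (w : Fin n → EucSp n) {l : ℝ} (hl : 0 ≤ l) {f h : 𝓢(EucSp n, ℝ)}
    (hh : h - l • opL w h = f) {C : ℝ} (hf : ∀ x, |opL w f x| ≤ C) (x : EucSp n) :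
    |h x - f x| ≤ l * C := by
  have h1 := resolvent_abs_le w hl (resolvent_opL w hh) hf x
  have h2 := congrArg (fun g : 𝓢(EucSp n, ℝ) => g x) hh
  simp only [_root_.sub_apply, _root_.smul_apply, smul_eq_mul] at h2
  have h3 : h x - f x = l * opL w h x := by linarith
  rw [h3, abs_mul, abs_of_nonneg hl]
  gcongr

theorem resolvent_expand2 {n : ℕ} (w : Fin n → EucSp n) {l : ℝ} (hl : 0 ≤ l) {f h : 𝓢(EucSp n, ℝ)}
    (hh : h - l • opL w h = f) {C : ℝ} (hf : ∀ x, |opL w (opL w f) x| ≤ C) (x : EucSp n) :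
    |h x - f x - l * opL w f x| ≤ l ^ 2 * C := by
  have h1 := resolvent_expand1 w hl (resolvent_opL w hh) hf x
  have h2 := congrArg (fun g : 𝓢(EucSp n, ℝ) => g x) hh
  simp only [_root_.sub_apply, _root_.smul_apply, smul_eq_mul] at h2
  have h3 : h x - f x - l * opL w f x = l * (opL w h x - opL w f x) := by linarith
  rw [h3, abs_mul, abs_of_nonneg hl, sq, mul_assoc]
  gcongr

theorem resolvent_symm {n : ℕ} (w : Fin n → EucSp n) {l : ℝ} {f g hf hg : 𝓢(EucSp n, ℝ)}
    (h1 : hf - l • opL w hf = f) (h2 : hg - l • opL w hg = g) :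
    ∫ x, hf x * g x = ∫ x, f x * hg x := by
  have hi : ∀ a b : 𝓢(EucSp n, ℝ), Integrable (fun x => a x * b x) := by
    intro a b
    have := (SchwartzMap.pairing (ContinuousLinearMap.mul ℝ ℝ) a b).integrable (μ := volume)
    exact this
  subst h1 h2
  simp only [_root_.sub_apply, _root_.smul_apply, smul_eq_mul, mul_sub, sub_mul]
  have e1 : ∀ x, hf x * (l * opL w hg x) = l * (hf x * opL w hg x) := fun x => by ring
  have e2 : ∀ x, l * opL w hf x * hg x = l * (opL w hf x * hg x) := fun x => by ring
  simp only [e1, e2]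
  rw [integral_sub (hi _ _) ((hi _ _).const_mul _), integral_sub (hi _ _) ((hi _ _).const_mul _),
    integral_const_mul, integral_const_mul, opL_symm]


open scoped SchwartzMap LineDeriv ContDiff Manifold

theorem exists_smooth_above {n : ℕ} (f : EucSp n → ℝ) (hf : UpperSemicontinuous f)
    (h0 : ∀ x, 0 ≤ f x) (hi : Integrable f) {r : ℝ} (hr : 0 < r)
    (hsupp : ∀ x, r < ‖x‖ → f x = 0) {ε : ℝ} (hε : 0 < ε) :
    ∃ φ : 𝓢(EucSp n, ℝ), (∀ x, f x ≤ φ x) ∧ ∫ x, φ x ≤ (∫ x, f x) + ε := by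
  obtain ⟨g, hfg, hg, hgi, hgtop, hgint⟩ := exists_lt_lowerSemicontinuous_integral_lt f hi hε
  obtain ⟨φ0, hφ0⟩ := exists_contMDiffMap_forall_mem_convex_of_local_const (n := (⊤ : ℕ∞)) (𝓘(ℝ, EucSp n))
    (t := fun x => {c : ℝ | f x < c ∧ (c : EReal) < g x}) (by
      intro x a ha b hb s t hs ht hst
      have hab : min a b ≤ s • a + t • b := by
        simp only [smul_eq_mul]
        have h1 := mul_le_mul_of_nonneg_left (min_le_left a b) hs
        have h2 := mul_le_mul_of_nonneg_left (min_le_right a b) ht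
        have h3 : min a b = s * min a b + t * min a b := by rw [← add_mul, hst, one_mul]
        linarith
      have hab2 : s • a + t • b ≤ max a b := by
        simp only [smul_eq_mul]
        have h1 := mul_le_mul_of_nonneg_left (le_max_left a b) hs
        have h2 := mul_le_mul_of_nonneg_left (le_max_right a b) ht
        have h3 : max a b = s * max a b + t * max a b := by rw [← add_mul, hst, one_mul]
        linarith
      refine ⟨lt_of_lt_of_le (lt_min ha.1 hb.1) hab, lt_of_le_of_lt (EReal.coe_le_coe_iff.mpr hab2) ?_⟩
      rcases max_choice a b with h | h <;> rw [h]
      · exact ha.2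
      · exact hb.2) (by
      intro x
      obtain ⟨c, hc1, hc2⟩ := EReal.lt_iff_exists_real_btwn.mp (hfg x)
      refine ⟨c, ?_⟩
      filter_upwards [hf x c (EReal.coe_lt_coe_iff.mp hc1), hg x c hc2] with y h1 h2
      exact ⟨h1, h2⟩)
  let κ : ContDiffBump (0 : EucSp n) := ⟨r, 2 * r, hr, by linarith⟩
  have hsm : ContDiff ℝ ∞ (fun x => κ x * φ0 x) :=
    κ.contDiff.mul (contMDiff_iff_contDiff.mp φ0.contMDiff)
  have hcs : HasCompactSupport (fun x => κ x * φ0 x) := κ.hasCompactSupport.mul_right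
  let φ : 𝓢(EucSp n, ℝ) := hcs.toSchwartzMap hsm
  have hφ : ∀ x, φ x = κ x * φ0 x := fun x => rfl
  have hφ0pos : ∀ x, 0 ≤ φ0 x := fun x => (h0 x).trans (hφ0 x).1.le
  refine ⟨φ, fun x => ?_, ?_⟩
  · rw [hφ]
    by_cases hx : ‖x‖ ≤ r
    · rw [κ.one_of_mem_closedBall (by simpa using hx), one_mul]
      exact (hφ0 x).1.le
    · rw [hsupp x (not_le.mp hx)]
      exact mul_nonneg κ.nonneg (hφ0pos x)
  · refine le_trans ?_ hgint.le
    refine integral_mono_ae φ.integrable hgi ?_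
    filter_upwards [hgtop] with x hx
    rw [hφ]
    have h1 : κ x * φ0 x ≤ φ0 x := mul_le_of_le_one_left (hφ0pos x) κ.le_one
    refine h1.trans ?_
    have hbot : g x ≠ ⊥ := ((EReal.bot_lt_coe (f x)).trans (hfg x)).ne'
    have := (hφ0 x).2
    rw [← EReal.coe_toReal hx.ne hbot] at this
    exact (EReal.coe_lt_coe_iff.mp this).le

def bumpS {n : ℕ} (κ : ContDiffBump (0 : EucSp n)) : 𝓢(EucSp n, ℝ) :=
  κ.hasCompactSupport.toSchwartzMap κ.contDiff

theorem bumpS_apply {n : ℕ} (κ : ContDiffBump (0 : EucSp n)) (x : EucSp n) : bumpS κ x = κ x := rfl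

theorem distrib_bounded {n : ℕ} (w : Fin n → EucSp n) (v : EucSp n → ℝ) {ρ M : ℝ} (hρ : 0 < ρ)
    (hv : UpperSemicontinuous v) (hv0 : ∀ x, 0 ≤ v x) (hM : ∀ x, v x ≤ M)
    (hout : ∀ x, ρ < ‖x‖ → v x = 0)
    (hvisc : ∀ x0 : EucSp n, ‖x0‖ < ρ → ∀ (f : 𝓢(EucSp n, ℝ)) (c : ℝ),
      (∀ᶠ x in 𝓝 x0, v x ≤ f x + c) → v x0 = f x0 + c → 0 ≤ opL w f x0)
    (η : 𝓢(EucSp n, ℝ)) (hη : ∀ x, 0 ≤ η x) (hηs : tsupport η ⊆ Metric.closedBall 0 (ρ / 2)) :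
    0 ≤ ∫ x, v x * opL w η x := by
  have hM0 : 0 ≤ M := (hv0 0).trans (hM 0)
  let κ1 : ContDiffBump (0 : EucSp n) := ⟨ρ, 2 * ρ, hρ, by linarith⟩
  let κ2 : ContDiffBump (0 : EucSp n) := ⟨ρ / 2, ρ, by linarith, by linarith⟩
  let χ : 𝓢(EucSp n, ℝ) := bumpS κ1 - bumpS κ2
  have hχ : ∀ x, χ x = κ1 x - κ2 x := fun x => rfl
  have hχ0 : ∀ x, 0 ≤ χ x := by
    intro x
    rw [hχ]
    by_cases hx : ‖x‖ ≤ ρ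
    · rw [κ1.one_of_mem_closedBall (by simpa [κ1] using hx)]
      linarith [κ2.le_one (x := x)]
    · rw [κ2.zero_of_le_dist (by simpa [κ2] using (not_le.mp hx).le)]
      linarith [κ1.nonneg (x := x)]
  have hχsph : ∀ x : EucSp n, ‖x‖ = ρ → χ x = 1 := by
    intro x hx
    rw [hχ, κ1.one_of_mem_closedBall (by simpa [κ1] using hx.le),
      κ2.zero_of_le_dist (by simpa [κ2] using hx.ge)]
    ring
  have hχin : ∀ x : EucSp n, ‖x‖ ≤ ρ / 2 → χ x = 0 := by
    intro x hx
    rw [hχ, κ1.one_of_mem_closedBall (by simpa [κ1] using by linarith),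
      κ2.one_of_mem_closedBall (by simpa [κ2] using hx)]
    ring
  have hχout : ∀ x : EucSp n, 2 * ρ < ‖x‖ → χ x = 0 := by
    intro x hx
    rw [hχ, κ1.zero_of_le_dist (by simpa [κ1] using hx.le),
      κ2.zero_of_le_dist (by simpa [κ2] using by linarith)]
    ring
  have hvint : Integrable v := by
    have : IntegrableOn v (Metric.closedBall 0 ρ) := by
      refine Measure.integrableOn_of_bounded (M := M) (isCompact_closedBall _ _).measure_lt_top.ne
        hv.measurable.aestronglyMeasurable ?_
      refine Eventually.of_forall fun x => ?_
      rw [Real.norm_eq_abs, abs_of_nonneg (hv0 x)]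
      exact hM x
    refine (integrableOn_iff_integrable_of_support_subset ?_).mp this
    intro x hx
    by_contra hcon
    exact hx (hout x (by simpa using hcon))
  let v0 : EucSp n → ℝ := fun x => v x + 2 * M * χ x
  have hv0int : Integrable v0 := hvint.add (χ.integrable.const_mul _)
  have hv0usc : UpperSemicontinuous v0 :=
    hv.add (Continuous.upperSemicontinuous (by fun_prop))
  have hv00 : ∀ x, 0 ≤ v0 x := fun x => add_nonneg (hv0 x) (mul_nonneg (by positivity) (hχ0 x))
  have hvv0 : ∀ x, v x ≤ v0 x := fun x => le_add_of_nonneg_right (mul_nonneg (by positivity) (hχ0 x))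
  obtain ⟨Cχ, hCχ, hCχb⟩ := schwartz_bdd (opL w χ)
  obtain ⟨C2, hC2, hC2b⟩ := schwartz_bdd (opL w (opL w η))
  obtain ⟨Cη, hCη, hCηb⟩ := schwartz_bdd η
  have hηz : ∀ x : EucSp n, ρ / 2 < ‖x‖ → η x = 0 := by
    intro x hx
    by_contra hcon
    have := hηs (subset_tsupport _ hcon)
    simp at this
    linarith
  have hLz : ∀ x : EucSp n, ρ / 2 < ‖x‖ → opL w η x = 0 := by
    intro x hx
    rw [opL_apply]
    refine Finset.sum_eq_zero fun k _ => ?_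
    by_contra hcon
    have h1 : x ∈ tsupport (∂_{w k} (∂_{w k} η) : 𝓢(EucSp n, ℝ)) := subset_tsupport _ hcon
    have := hηs (SchwartzMap.tsupport_lineDerivOp_subset _ _ (SchwartzMap.tsupport_lineDerivOp_subset _ _ h1))
    simp at this
    linarith
  -- product integrability
  have hprod : ∀ (a : EucSp n → ℝ) (b : 𝓢(EucSp n, ℝ)), Integrable a → Integrable (fun x => a x * b x) := by
    intro a b ha
    obtain ⟨C, hC, hb⟩ := schwartz_bdd b
    exact ha.mul_bdd (c := C) b.continuous.aestronglyMeasurable (Eventually.of_forall hb)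
  -- key inequality at scale l
  have key : ∀ l : ℝ, 0 < l → l * Cχ ≤ 1 / 2 →
      - (l * (C2 * ∫ x, v0 x)) ≤ ∫ x, v x * opL w η x := by
    intro l hl hl2
    obtain ⟨hE, hEeq⟩ := exists_resolvent w hl.le η
    have hE0 : ∀ x, 0 ≤ hE x := resolvent_nonneg w hl.le hEeq hη
    have hEC : ∀ x, |hE x| ≤ Cη := resolvent_abs_le w hl.le hEeq hCηb
    have step1 : ∀ ε : ℝ, 0 < ε → ∫ x, v0 x * η x ≤ (∫ x, v0 x * hE x) + ε * Cη := by
      intro ε hε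
      obtain ⟨φ, hφ, hφint⟩ := exists_smooth_above v0 hv0usc hv00 hv0int (r := 2 * ρ) (by linarith)
        (fun x hx => by simp [v0, hout x (by linarith), hχout x hx]) hε
      obtain ⟨h, hh⟩ := exists_resolvent w hl.le φ
      obtain ⟨X, hX⟩ := exists_resolvent w hl.le χ
      have hXlow : ∀ x, χ x - 1 / 2 ≤ X x := by
        intro x
        have := (abs_le.mp (resolvent_expand1 w hl.le hX hCχb x)).1
        linarith
      have hhX : ∀ x, 2 * M * X x ≤ h x := by
        intro x
        have e : (h - (2 * M) • X) - l • opL w (h - (2 * M) • X) = φ - (2 * M) • χ := by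
          rw [opL_sub, opL_smul, ← hh, ← hX]
          simp only [smul_sub, smul_comm (2 * M) l]
          abel
        have := resolvent_nonneg w hl.le e (fun y => by
          have := hφ y
          simp only [v0] at this
          simp only [_root_.sub_apply, _root_.smul_apply, smul_eq_mul]
          linarith [hv0 y]) x
        simp only [_root_.sub_apply, _root_.smul_apply, smul_eq_mul] at this
        linarith
      have hcomp : ∀ x : EucSp n, ‖x‖ ≤ ρ → v x ≤ h x := by
        by_contra! hcon
        obtain ⟨x1, hx1, hx1'⟩ := hcon
        obtain ⟨x0, hx0, hmax⟩ := UpperSemicontinuousOn.exists_isMaxOn (s := Metric.closedBall (0 : EucSp n) ρ)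
          (f := fun x => v x + (-h) x) ⟨x1, by simpa using hx1⟩ (isCompact_closedBall _ _)
          ((hv.add ((-h).continuous.upperSemicontinuous)).upperSemicontinuousOn _)
        have hx0ρ : ‖x0‖ ≤ ρ := by simpa using hx0
        have hpos : 0 < v x0 - h x0 := by
          have := hmax (show x1 ∈ Metric.closedBall (0 : EucSp n) ρ by simpa using hx1)
          simp only [Set.mem_ofPred_eq, _root_.neg_apply] at this
          linarith
        rcases hx0ρ.lt_or_eq with hlt | heq
        · have hL := hvisc x0 hlt h (v x0 - h x0) (by
            have : Metric.ball (0 : EucSp n) ρ ∈ 𝓝 x0 := Metric.isOpen_ball.mem_nhds (by simpa using hlt)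
            filter_upwards [this] with y hy
            have := hmax (Metric.ball_subset_closedBall hy)
            simp only [Set.mem_ofPred_eq, _root_.neg_apply] at this
            linarith) (by ring)
          have h2 := congrArg (fun g : 𝓢(EucSp n, ℝ) => g x0) hh
          simp only [_root_.sub_apply, _root_.smul_apply, smul_eq_mul] at h2
          have h3 := hφ x0
          have h4 := hvv0 x0
          nlinarith [mul_nonneg hl.le hL]
        · have h1 := hhX x0
          have h2 := hXlow x0
          rw [hχsph x0 heq] at h2
          have h3 := hM x0
          nlinarith
      have i1 : ∫ x, v0 x * η x ≤ ∫ x, h x * η x := by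
        refine integral_mono (hprod _ _ hv0int) (hprod _ _ h.integrable) fun x => ?_
        by_cases hx : ‖x‖ ≤ ρ / 2
        · have : v0 x = v x := by simp [v0, hχin x hx]
          show v0 x * η x ≤ h x * η x
          rw [this]
          exact mul_le_mul_of_nonneg_right (hcomp x (by linarith)) (hη x)
        · simp [hηz x (not_le.mp hx)]
      rw [resolvent_symm w hh hEeq] at i1
      have hsub : Integrable (fun x => φ x - v0 x) := φ.integrable.sub hv0int
      have hsubE : Integrable (fun x => (φ x - v0 x) * hE x) := hprod _ _ hsub
      have i2 : ∫ x, φ x * hE x = (∫ x, v0 x * hE x) + ∫ x, (φ x - v0 x) * hE x := by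
        rw [← integral_add (hprod _ _ hv0int) hsubE]
        refine integral_congr_ae (Eventually.of_forall fun x => ?_)
        simp only; ring
      have i3 : ∫ x, (φ x - v0 x) * hE x ≤ ∫ x, (φ x - v0 x) * Cη := by
        refine integral_mono hsubE (hsub.mul_const _) fun x => ?_
        exact mul_le_mul_of_nonneg_left ((le_abs_self _).trans (hEC x)) (sub_nonneg.mpr (hφ x))
      rw [integral_mul_const, integral_sub φ.integrable hv0int] at i3
      have i4 : ((∫ x, φ x) - ∫ x, v0 x) * Cη ≤ ε * Cη := by
        gcongr; linarith
      linarith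
    have step2 : ∫ x, v0 x * η x ≤ ∫ x, v0 x * hE x := by
      refine le_of_forall_pos_le_add fun ε hε => ?_
      have := step1 (ε / (Cη + 1)) (by positivity)
      have h2 : ε / (Cη + 1) * Cη ≤ ε := by
        rw [div_mul_eq_mul_div, div_le_iff₀ (by positivity)]
        nlinarith
      linarith
    have step3 : ∫ x, v0 x * hE x ≤ (∫ x, v0 x * η x) + l * (∫ x, v0 x * opL w η x) + l ^ 2 * C2 * ∫ x, v0 x := by
      have j1 : Integrable (fun x => l * (v0 x * opL w η x)) := (hprod _ _ hv0int).const_mul _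
      have j2 : Integrable (fun x => v0 x * η x + l * (v0 x * opL w η x)) := (hprod _ _ hv0int).add j1
      have j3 : Integrable (fun x => l ^ 2 * C2 * v0 x) := hv0int.const_mul _
      rw [← integral_const_mul, ← integral_const_mul, ← integral_add (hprod _ _ hv0int) j1,
        ← integral_add j2 j3]
      refine integral_mono (hprod _ _ hv0int) (j2.add j3) fun x => ?_
      have := (abs_le.mp (resolvent_expand2 w hl.le hEeq hC2b x)).2
      have h0 := hv00 x
      show v0 x * hE x ≤ v0 x * η x + l * (v0 x * opL w η x) + l ^ 2 * C2 * v0 x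
      nlinarith [mul_nonneg h0 (sub_nonneg.mpr this)]
    have step4 : ∫ x, v0 x * opL w η x = ∫ x, v x * opL w η x := by
      refine integral_congr_ae (Eventually.of_forall fun x => ?_)
      show v0 x * opL w η x = v x * opL w η x
      by_cases hx : ‖x‖ ≤ ρ / 2
      · simp [v0, hχin x hx]
      · simp [hLz x (not_le.mp hx)]
    rw [step4] at step3
    have : 0 ≤ l * ((∫ x, v x * opL w η x) + l * (C2 * ∫ x, v0 x)) := by nlinarith
    have := nonneg_of_mul_nonneg_right this hl
    linarith
  -- let l tend to zero
  have hlim : Tendsto (fun l : ℝ => - (l * (C2 * ∫ x, v0 x))) (𝓝[>] 0) (𝓝 0) := by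
    have : Continuous (fun l : ℝ => - (l * (C2 * ∫ x, v0 x))) := by fun_prop
    have := this.tendsto 0
    simp only [zero_mul, neg_zero] at this
    exact this.mono_left nhdsWithin_le_nhds
  have hlim2 : Tendsto (fun l : ℝ => l * Cχ) (𝓝[>] 0) (𝓝 0) := by
    have : Continuous (fun l : ℝ => l * Cχ) := by fun_prop
    have := this.tendsto 0
    simp only [zero_mul] at this
    exact this.mono_left nhdsWithin_le_nhds
  refine le_of_tendsto hlim ?_
  filter_upwards [hlim2.eventually (gt_mem_nhds (show (0:ℝ) < 1 / 2 by norm_num)), self_mem_nhdsWithin] with l h1 h2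
  exact key l h2 h1.le


open scoped SchwartzMap LineDeriv ContDiff

def quad {n : ℕ} (A : Matrix (Fin n) (Fin n) ℝ) (w : EucSp n) : ℝ :=
  ∑ i, ∑ j, w i * w j * A i j

def GoodFrame {n : ℕ} (F : Set (Matrix (Fin n) (Fin n) ℝ)) (w : Fin n → EucSp n) : Prop :=
  ∀ A ∈ F, 0 ≤ ∑ k, quad A (w k)

theorem lineDD_eq_quad {n : ℕ} (f : 𝓢(EucSp n, ℝ)) (c : ℝ) (x w : EucSp n) :
    (∂_{w} (∂_{w} f)) x = quad (hess (fun y => f y + c) x) w := by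
  have h1 : (∂_{w} (∂_{w} f)) x = iteratedFDeriv ℝ 2 f x (fun _ => w) := by
    rw [← SchwartzMap.iteratedLineDerivOp_eq_iteratedFDeriv]
    rfl
  have h2 : iteratedFDeriv ℝ 2 (fun y => f y + c) x = iteratedFDeriv ℝ 2 f x := by
    have : (fun y => f y + c) = (f : EucSp n → ℝ) + (fun _ => c) := rfl
    rw [this, iteratedFDeriv_add_apply ((f.smooth 2).contDiffAt) contDiffAt_const,
      iteratedFDeriv_const_of_ne (by norm_num)]
    simp
  have hw : w = ∑ i, w i • EuclideanSpace.single i (1 : ℝ) := by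
    ext j
    simp [Finset.sum_apply, Pi.single_apply]
  simp only [quad, hess, Matrix.of_apply]
  rw [h1, h2]
  have h3 : ∀ a b : EucSp n, iteratedFDeriv ℝ 2 f x ![a, b] = fderiv ℝ (fderiv ℝ f) x a b := by
    intro a b
    rw [iteratedFDeriv_two_apply]
    simp
  have h4 : (fun _ : Fin 2 => w) = ![w, w] := by
    ext i; fin_cases i <;> rfl
  rw [h4, h3]
  simp only [h3]
  conv_lhs => rw [hw]
  simp only [map_sum, map_smul, _root_.smul_apply, smul_eq_mul, Finset.mul_sum,
    _root_.sum_apply]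
  rw [Finset.sum_comm]
  refine Finset.sum_congr rfl fun i _ => Finset.sum_congr rfl fun j _ => ?_
  ring

theorem opL_eq_quad {n : ℕ} (w : Fin n → EucSp n) (f : 𝓢(EucSp n, ℝ)) (c : ℝ) (x : EucSp n) :
    opL w f x = ∑ k, quad (hess (fun y => f y + c) x) (w k) := by
  rw [opL_apply]
  exact Finset.sum_congr rfl fun k _ => lineDD_eq_quad f c x (w k)

theorem opL_support {n : ℕ} (w : Fin n → EucSp n) (η : 𝓢(EucSp n, ℝ)) {r : ℝ}
    (hηs : tsupport η ⊆ Metric.closedBall 0 r) (x : EucSp n) (hx : r < ‖x‖) : opL w η x = 0 := by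
  rw [opL_apply]
  refine Finset.sum_eq_zero fun k _ => ?_
  by_contra hcon
  have h1 : x ∈ tsupport (∂_{w k} (∂_{w k} η) : 𝓢(EucSp n, ℝ)) := subset_tsupport _ hcon
  have := hηs (SchwartzMap.tsupport_lineDerivOp_subset _ _ (SchwartzMap.tsupport_lineDerivOp_subset _ _ h1))
  simp at this
  linarith

theorem integral_opL {n : ℕ} (w : Fin n → EucSp n) (η : 𝓢(EucSp n, ℝ)) {ρ : ℝ} (hρ : 0 < ρ)
    (hηs : tsupport η ⊆ Metric.closedBall 0 (ρ / 2)) : ∫ x, opL w η x = 0 := by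
  let κ1 : ContDiffBump (0 : EucSp n) := ⟨ρ, 2 * ρ, hρ, by linarith⟩
  have hone : ∀ x : EucSp n, ‖x‖ ≤ ρ → bumpS κ1 x = 1 := fun x hx => by
    rw [bumpS_apply]
    exact κ1.one_of_mem_closedBall (by simpa [κ1] using hx)
  have h1 := opL_symm w (bumpS κ1) η
  have h2 : ∫ x, bumpS κ1 x * opL w η x = ∫ x, opL w η x := by
    refine integral_congr_ae (Eventually.of_forall fun x => ?_)
    show bumpS κ1 x * opL w η x = opL w η x
    by_cases hx : ‖x‖ ≤ ρ
    · rw [hone x hx, one_mul]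
    · rw [opL_support w η hηs x (by linarith), mul_zero]
  rw [← h2, h1]
  have : (fun x => opL w (bumpS κ1) x * η x) = fun _ => 0 := by
    funext x
    by_cases hx : ‖x‖ < ρ
    · have hc : ∀ᶠ y in 𝓝 x, bumpS κ1 y = bumpS κ1 x := by
        filter_upwards [Metric.isOpen_ball.mem_nhds (show x ∈ Metric.ball (0 : EucSp n) ρ by simpa using hx)] with y hy
        rw [hone x hx.le, hone y (by simpa using (Metric.mem_ball.mp hy).le)]
      have := opL_nonneg_of_isLocalMin w (bumpS κ1) x (hc.mono fun y hy => hy.ge)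
      have := opL_nonpos_of_isLocalMax w (bumpS κ1) x (hc.mono fun y hy => hy.le)
      have : opL w (bumpS κ1) x = 0 := by linarith
      rw [this, zero_mul]
    · have : η x = 0 := by
        by_contra hcon
        have := hηs (subset_tsupport _ hcon)
        simp at this
        linarith
      rw [this, mul_zero]
  rw [this, integral_zero]

theorem distrib_main {n : ℕ} {F : Set (Matrix (Fin n) (Fin n) ℝ)} {w : Fin n → EucSp n}
    (hw : GoodFrame F w) {Ω : Set (EucSp n)} (hΩ : IsOpen Ω) {u : EucSp n → EReal}
    (hu : IsFSubharmonicOn F Ω u)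
    (hloc : LocallyIntegrableOn (fun y => (u y).toReal) Ω (volume : Measure (EucSp n)))
    (hae : ∀ᵐ y ∂(volume : Measure (EucSp n)), y ∈ Ω → u y ≠ ⊥) {ρ : ℝ} (hρ : 0 < ρ)
    (hsub : Metric.closedBall 0 ρ ⊆ Ω)
    (η : 𝓢(EucSp n, ℝ)) (hη : ∀ x, 0 ≤ η x) (hηs : tsupport η ⊆ Metric.closedBall 0 (ρ / 2)) :
    0 ≤ ∫ x, (u x).toReal * opL w η x := by
  obtain ⟨husc, hutop, huvisc⟩ := hu
  obtain ⟨xm, hxm, hmax⟩ := UpperSemicontinuousOn.exists_isMaxOn (s := Metric.closedBall (0 : EucSp n) ρ)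
    (f := u) ⟨0, by simpa using hρ.le⟩ (isCompact_closedBall _ _) (husc.mono hsub)
  have hin : ∀ x : EucSp n, ‖x‖ ≤ ρ → x ∈ Ω := fun x hx => hsub (by simpa using hx)
  have hcoe : ∀ (a : EReal) (b : ℝ), a < ⊤ → (((max a (b : EReal)).toReal : ℝ) : EReal) = max a (b : EReal) := by
    intro a b ha
    refine EReal.coe_toReal ?_ ?_
    · exact (max_lt ha (EReal.coe_lt_top b)).ne
    · exact ((EReal.bot_lt_coe b).trans_le (le_max_right _ _)).ne'
  let v : ℕ → EucSp n → ℝ := fun N x => if ‖x‖ ≤ ρ then (max (u x) ((-(N:ℝ) : ℝ) : EReal)).toReal + N else 0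
  have hge : ∀ (N : ℕ) x, ‖x‖ ≤ ρ → -(N:ℝ) ≤ (max (u x) ((-(N:ℝ) : ℝ) : EReal)).toReal := by
    intro N x hx
    rw [← EReal.coe_le_coe_iff, hcoe _ _ (hutop x (hin x hx))]
    exact le_max_right _ _
  have hv0 : ∀ N x, 0 ≤ v N x := by
    intro N x
    simp only [v]
    split_ifs with h
    · linarith [hge N x h]
    · exact le_rfl
  have hvout : ∀ N x, ρ < ‖x‖ → v N x = 0 := fun N x hx => if_neg (not_le.mpr hx)
  have hvM : ∀ N x, v N x ≤ (max (u xm) ((-(N:ℝ) : ℝ) : EReal)).toReal + N := by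
    intro N x
    by_cases h : ‖x‖ ≤ ρ
    · simp only [v, if_pos h]
      gcongr
      rw [← EReal.coe_le_coe_iff, hcoe _ _ (hutop x (hin x h)), hcoe _ _ (hutop xm (hsub hxm))]
      exact max_le_max (hmax (by simpa using h)) le_rfl
    · rw [hvout N x (not_le.mp h)]
      linarith [hge N xm (by simpa using hxm)]
  have hvusc : ∀ N, UpperSemicontinuous (v N) := by
    intro N x y hy
    by_cases h : ‖x‖ ≤ ρ
    · have hy0 : 0 < y := (hv0 N x).trans_lt hy
      simp only [v, if_pos h] at hy
      have h1 : u x < ((y - N : ℝ) : EReal) := by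
        refine (le_max_left _ ((-(N:ℝ) : ℝ) : EReal)).trans_lt ?_
        rw [← hcoe (u x) (-(N:ℝ)) (hutop x (hin x h)), EReal.coe_lt_coe_iff]
        linarith
      have h2 := husc x (hin x h) _ h1
      rw [hΩ.nhdsWithin_eq (hin x h)] at h2
      filter_upwards [h2] with z hz
      simp only [v]
      split_ifs with hz'
      · have : (max (u z) ((-(N:ℝ) : ℝ) : EReal)).toReal < y - N := by
          rw [← EReal.coe_lt_coe_iff, hcoe _ _ (hutop z (hin z hz'))]
          refine max_lt hz ?_
          rw [EReal.coe_lt_coe_iff]; linarith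
        linarith
      · exact hy0
    · have : (Metric.closedBall (0 : EucSp n) ρ)ᶜ ∈ 𝓝 x :=
        Metric.isClosed_closedBall.isOpen_compl.mem_nhds (by simpa using h)
      filter_upwards [this] with z hz
      rw [hvout N z (by simpa using hz)]
      rwa [hvout N x (not_le.mp h)] at hy
  have hvisc : ∀ N, ∀ x0 : EucSp n, ‖x0‖ < ρ → ∀ (f : 𝓢(EucSp n, ℝ)) (c : ℝ),
      (∀ᶠ x in 𝓝 x0, v N x ≤ f x + c) → v N x0 = f x0 + c → 0 ≤ opL w f x0 := by
    intro N x0 hx0 f c h1 h2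
    have hx0Ω := hin x0 hx0.le
    by_cases hN : ((-(N:ℝ) : ℝ) : EReal) ≤ u x0
    · rw [opL_eq_quad w f (c - N)]
      refine hw _ (huvisc x0 hx0Ω _ ?_ ?_ ?_)
      · exact ((f.smooth 2).contDiffAt).add contDiffAt_const
      · refine Filter.Eventually.filter_mono nhdsWithin_le_nhds ?_
        filter_upwards [h1, Metric.isOpen_ball.mem_nhds (show x0 ∈ Metric.ball (0 : EucSp n) ρ by simpa using hx0)] with z hz hzb
        have hz' : ‖z‖ ≤ ρ := by simpa using (Metric.mem_ball.mp hzb).le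
        simp only [v, if_pos hz'] at hz
        refine (le_max_left _ ((-(N:ℝ) : ℝ) : EReal)).trans ?_
        rw [← hcoe _ _ (hutop z (hin z hz')), EReal.coe_le_coe_iff]
        linarith
      · simp only [v, if_pos hx0.le] at h2
        rw [← max_eq_left hN, ← hcoe _ _ (hutop x0 hx0Ω), EReal.coe_eq_coe_iff]
        linarith
    · refine opL_nonneg_of_isLocalMin w f x0 ?_
      have h3 : v N x0 = 0 := by
        simp only [v, if_pos hx0.le]
        rw [max_eq_right (not_le.mp hN).le, EReal.toReal_coe]
        ring
      filter_upwards [h1] with z hz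
      have := hv0 N z
      linarith
  have hmain : ∀ N, 0 ≤ ∫ x, v N x * opL w η x := fun N =>
    distrib_bounded w (v N) hρ (hvusc N) (hv0 N) (hvM N) (hvout N) (hvisc N) η hη hηs
  -- integrability
  have hvint : ∀ N, Integrable (v N) := by
    intro N
    have : IntegrableOn (v N) (Metric.closedBall 0 ρ) := by
      refine Measure.integrableOn_of_bounded (M := (max (u xm) ((-(N:ℝ) : ℝ) : EReal)).toReal + N)
        (isCompact_closedBall _ _).measure_lt_top.ne (hvusc N).measurable.aestronglyMeasurable ?_
      refine Eventually.of_forall fun x => ?_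
      rw [Real.norm_eq_abs, abs_of_nonneg (hv0 N x)]
      exact hvM N x
    refine (integrableOn_iff_integrable_of_support_subset ?_).mp this
    intro x hx
    by_contra hcon
    exact hx (hvout N x (by simpa using hcon))
  obtain ⟨CL, hCL, hCLb⟩ := schwartz_bdd (opL w η)
  have hLz : ∀ x : EucSp n, ρ < ‖x‖ → opL w η x = 0 := fun x hx =>
    opL_support w η hηs x (by linarith)
  have heq : ∀ (N : ℕ) x, (max (u x) ((-(N:ℝ) : ℝ) : EReal)).toReal * opL w η x = v N x * opL w η x - N * opL w η x := by
    intro N x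
    by_cases h : ‖x‖ ≤ ρ
    · simp only [v, if_pos h]; ring
    · rw [hLz x (not_le.mp h)]; ring
  have hi1 : ∀ N, Integrable (fun x => v N x * opL w η x) := fun N =>
    (hvint N).mul_bdd (c := CL) (opL w η).continuous.aestronglyMeasurable (Eventually.of_forall hCLb)
  have hi2 : ∀ N : ℕ, Integrable (fun x => (N : ℝ) * opL w η x) := fun N => (opL w η).integrable.const_mul _
  have hi3 : ∀ N : ℕ, Integrable (fun x => (max (u x) ((-(N:ℝ) : ℝ) : EReal)).toReal * opL w η x) := by
    intro N
    simp only [heq]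
    exact (hi1 N).sub (hi2 N)
  have hpos : ∀ N : ℕ, 0 ≤ ∫ x, (max (u x) ((-(N:ℝ) : ℝ) : EReal)).toReal * opL w η x := by
    intro N
    simp only [heq]
    rw [integral_sub (hi1 N) (hi2 N), integral_const_mul, integral_opL w η hρ hηs, mul_zero, sub_zero]
    exact hmain N
  have huI : IntegrableOn (fun y => (u y).toReal) (Metric.closedBall 0 ρ) :=
    hloc.integrableOn_compact_subset hsub (isCompact_closedBall _ _)
  have hbI : Integrable (fun x => |(u x).toReal| * |opL w η x|) := by
    have : IntegrableOn (fun x => |(u x).toReal| * |opL w η x|) (Metric.closedBall 0 ρ) :=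
      Integrable.mul_bdd (c := CL) huI.abs (opL w η).continuous.abs.aestronglyMeasurable
        (Eventually.of_forall fun x => by rw [Real.norm_eq_abs, abs_abs]; exact hCLb x)
    refine (integrableOn_iff_integrable_of_support_subset ?_).mp this
    intro x hx
    by_contra hcon
    apply hx
    simp [hLz x (by simpa using hcon)]
  refine ge_of_tendsto' (tendsto_integral_of_dominated_convergence _ (fun N => (hi3 N).aestronglyMeasurable) hbI ?_ ?_) hpos
  · intro N
    filter_upwards [hae] with x hx
    rw [norm_mul, Real.norm_eq_abs, Real.norm_eq_abs]
    by_cases h : ‖x‖ ≤ ρ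
    · refine mul_le_mul_of_nonneg_right ?_ (abs_nonneg _)
      have hΩx := hin x h
      have e := EReal.coe_toReal (hutop x hΩx).ne (hx hΩx)
      rw [← e, ← EReal.coe_strictMono.monotone.map_max, EReal.toReal_coe, EReal.toReal_coe]
      have hN : (0:ℝ) ≤ N := Nat.cast_nonneg N
      rcases max_choice ((u x).toReal) (-(N:ℝ)) with h' | h'
      · rw [h']
      · rw [h']
        have := le_max_left ((u x).toReal) (-(N:ℝ))
        rw [h'] at this
        rw [abs_neg, abs_of_nonneg hN, abs_of_nonpos (by linarith)]
        linarith
    · rw [hLz x (not_le.mp h)]; simp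
  · filter_upwards [hae] with x hx
    by_cases h : ‖x‖ ≤ ρ
    · refine Tendsto.mul_const _ ?_
      refine tendsto_const_nhds.congr' ?_
      have hΩx := hin x h
      have e := EReal.coe_toReal (hutop x hΩx).ne (hx hΩx)
      filter_upwards [(tendsto_natCast_atTop_atTop (R := ℝ)).eventually_ge_atTop (-(u x).toReal)] with N hN
      rw [← e, ← EReal.coe_strictMono.monotone.map_max, EReal.toReal_coe, EReal.toReal_coe, max_eq_left (by linarith)]
    · rw [hLz x (not_le.mp h)]; simp



theorem quad_eq {n : ℕ} (A : Matrix (Fin n) (Fin n) ℝ) (w : EucSp n) :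
    quad A w = w.ofLp ⬝ᵥ (A *ᵥ w.ofLp) := by
  simp only [quad, dotProduct, Matrix.mulVec, Finset.mul_sum]
  refine Finset.sum_congr rfl fun i _ => Finset.sum_congr rfl fun j _ => ?_
  ring

theorem quad_add {n : ℕ} (A B : Matrix (Fin n) (Fin n) ℝ) (w : EucSp n) :
    quad (A + B) w = quad A w + quad B w := by
  simp [quad, mul_add, Finset.sum_add_distrib]

theorem quad_sub {n : ℕ} (A B : Matrix (Fin n) (Fin n) ℝ) (w : EucSp n) :
    quad (A - B) w = quad A w - quad B w := by
  simp [quad, mul_sub, Finset.sum_sub_distrib]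

theorem quad_smul {n : ℕ} (c : ℝ) (A : Matrix (Fin n) (Fin n) ℝ) (w : EucSp n) :
    quad (c • A) w = c * quad A w := by
  simp only [quad, Matrix.smul_apply, smul_eq_mul, Finset.mul_sum]
  refine Finset.sum_congr rfl fun i _ => Finset.sum_congr rfl fun j _ => ?_
  ring

theorem quad_one {n : ℕ} (w : EucSp n) : quad (1 : Matrix (Fin n) (Fin n) ℝ) w = ‖w‖ ^ 2 := by
  rw [quad_eq, Matrix.one_mulVec, EuclideanSpace.real_norm_sq_eq]
  simp [dotProduct, sq]

theorem quad_projMat {n : ℕ} (e w : EucSp n) : quad (projMat e) w = (inner ℝ e w) ^ 2 := by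
  simp only [quad, projMat, Matrix.of_apply, PiLp.inner_apply, RCLike.inner_apply, conj_trivial, sq,
    Finset.sum_mul_sum]
  refine Finset.sum_congr rfl fun i _ => Finset.sum_congr rfl fun j _ => ?_
  ring

def rieszMat {n : ℕ} (p : ℝ) (e : EucSp n) : Matrix (Fin n) (Fin n) ℝ :=
  ((1 : Matrix (Fin n) (Fin n) ℝ) - projMat e) - (p - 1) • projMat e

theorem quad_rieszMat {n : ℕ} (p : ℝ) (e w : EucSp n) :
    quad (rieszMat p e) w = ‖w‖ ^ 2 - p * (inner ℝ e w) ^ 2 := by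
  rw [rieszMat, quad_sub, quad_sub, quad_smul, quad_one, quad_projMat]
  ring

theorem projMat_posSemidef {n : ℕ} (e : EucSp n) : (projMat e).PosSemidef := by
  refine Matrix.PosSemidef.of_dotProduct_mulVec_nonneg ?_ ?_
  · ext i j; simp [projMat, mul_comm]
  · intro x
    have := quad_eq (projMat e) (WithLp.toLp 2 x)
    rw [quad_projMat] at this
    simp only [star_trivial]
    rw [← this]; positivity

theorem riesz_not_mem {n : ℕ} {F : Set (Matrix (Fin n) (Fin n) ℝ)} (hn : 1 ≤ n) (hF : IsConeSubequation F)
    {p : ℝ} (hchar : HasRieszChar F p) (e : EucSp n) (he : ‖e‖ = 1) {ε : ℝ} (hε : 0 < ε) :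
    rieszMat p e - ε • (1 : Matrix (Fin n) (Fin n) ℝ) ∉ F := by
  intro hmem
  refine (hchar.2 e he).2 ?_
  change rieszMat p e ∈ symInterior F
  have hn' : (0:ℝ) < n := by exact_mod_cast hn
  refine ⟨{B | ∀ i j, |B i j - rieszMat p e i j| < ε / n}, ?_, ?_⟩
  · have : ∀ i j, ∀ᶠ B : Matrix (Fin n) (Fin n) ℝ in 𝓝 (rieszMat p e), |B i j - rieszMat p e i j| < ε / n := by
      intro i j
      have hc : Continuous (fun B : Matrix (Fin n) (Fin n) ℝ => |B i j - rieszMat p e i j|) := by fun_prop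
      have := hc.tendsto (rieszMat p e)
      rw [sub_self, abs_zero] at this
      exact this.eventually (gt_mem_nhds (by positivity))
    exact eventually_all.mpr fun i => eventually_all.mpr fun j => this i j
  · intro B hB hBs
    have hAs : (rieszMat p e).IsSymm := by
      ext i j
      by_cases h : i = j
      · subst h; rfl
      · simp [rieszMat, projMat, h, Ne.symm h, mul_comm]
    have key := hF.1.2.2 _ hmem (B - rieszMat p e + ε • (1 : Matrix (Fin n) (Fin n) ℝ)) ?_
    · convert key using 1; abel
    · refine Matrix.PosSemidef.of_dotProduct_mulVec_nonneg ?_ ?_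
      · rw [Matrix.IsHermitian, Matrix.conjTranspose_eq_transpose_of_trivial]
        simp [hBs.eq, hAs.eq]
      · intro x
        simp only [star_trivial]
        have e1 := quad_eq (B - rieszMat p e + ε • (1 : Matrix (Fin n) (Fin n) ℝ)) (WithLp.toLp 2 x)
        change _ = x ⬝ᵥ (_ *ᵥ x) at e1
        rw [← e1, quad_add, quad_smul, quad_one, EuclideanSpace.real_norm_sq_eq]
        have e2 : ∀ i j, -(ε / n * ((x i ^ 2 + x j ^ 2) / 2)) ≤ x i * x j * (B - rieszMat p e) i j := by
          intro i j
          have h1 := hB i j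
          rw [Matrix.sub_apply]
          set d := B i j - rieszMat p e i j
          have h2 : |x i * x j * d| ≤ (x i ^ 2 + x j ^ 2) / 2 * (ε / n) := by
            rw [abs_mul]
            refine mul_le_mul ?_ h1.le (abs_nonneg _) (by positivity)
            rw [abs_le]; constructor <;> nlinarith [sq_nonneg (x i - x j), sq_nonneg (x i + x j)]
          have := (abs_le.mp h2).1
          linarith
        have e3 : quad (B - rieszMat p e) (WithLp.toLp 2 x) ≥ ∑ i : Fin n, ∑ j : Fin n, -(ε / n * ((x i ^ 2 + x j ^ 2) / 2)) :=
          Finset.sum_le_sum fun i _ => Finset.sum_le_sum fun j _ => e2 i j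
        have e4 : ∑ i : Fin n, ∑ j : Fin n, -(ε / n * ((x i ^ 2 + x j ^ 2) / 2)) = - (ε * ∑ i, x i ^ 2) := by
          simp only [Finset.sum_neg_distrib, ← Finset.mul_sum, ← Finset.sum_div, Finset.sum_add_distrib, Finset.sum_const,
            Finset.card_univ, Fintype.card_fin, nsmul_eq_mul]
          field_simp
          ring
        rw [e4] at e3
        simp only [] at e3 ⊢
        linarith

theorem matrix_locallyConvex (n : ℕ) : LocallyConvexSpace ℝ (Matrix (Fin n) (Fin n) ℝ) :=
  inferInstanceAs (LocallyConvexSpace ℝ (Fin n → Fin n → ℝ))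

open scoped MatrixOrder in
theorem posSemidef_factor {n : ℕ} {S : Matrix (Fin n) (Fin n) ℝ} (hS : S.PosSemidef) :
    ∃ C : Matrix (Fin n) (Fin n) ℝ, S = star C * C := by
  refine ⟨CFC.sqrt S, ?_⟩
  have h1 : star (CFC.sqrt S) = CFC.sqrt S := (CFC.sqrt_nonneg S).posSemidef.isHermitian
  rw [h1, CFC.sqrt_mul_sqrt_self S hS.nonneg]

theorem exists_frame {n : ℕ} {F : Set (Matrix (Fin n) (Fin n) ℝ)} (hn : 1 ≤ n) (hF : IsConeSubequation F)
    (hFconv : Convex ℝ F) {p : ℝ} (hchar : HasRieszChar F p) (e : EucSp n) (he : ‖e‖ = 1) {ε : ℝ} (hε : 0 < ε) :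
    ∃ w : Fin n → EucSp n, GoodFrame F w ∧
      ∑ k, (‖w k‖ ^ 2 - p * (inner ℝ e (w k)) ^ 2) < ε * ∑ k, ‖w k‖ ^ 2 := by
  have := matrix_locallyConvex n
  obtain ⟨f, c, hf1, hf2⟩ := geometric_hahn_banach_point_closed hFconv hF.1.2.1 (riesz_not_mem hn hF hchar e he hε)
  have hAF : rieszMat p e ∈ F := by
    have := (hchar.2 e he).1
    rwa [hF.1.2.1.closure_eq] at this
  have h0F : (0 : Matrix (Fin n) (Fin n) ℝ) ∈ F := by simpa using hF.2 _ hAF 0 le_rfl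
  have hc0 : c < 0 := by simpa using hf2 0 h0F
  have hfpos : ∀ A ∈ F, 0 ≤ f A := by
    intro A hA
    by_contra hcon
    push Not at hcon
    have := hf2 _ (hF.2 A hA (c / f A) (div_nonneg_of_nonpos hc0.le hcon.le))
    rw [map_smul, smul_eq_mul, div_mul_cancel₀ _ hcon.ne] at this
    exact lt_irrefl _ this
  let S : Matrix (Fin n) (Fin n) ℝ := Matrix.of fun i j => (f (Matrix.single i j 1) + f (Matrix.single j i 1)) / 2
  have hfS : ∀ A : Matrix (Fin n) (Fin n) ℝ, A.IsSymm → f A = ∑ i, ∑ j, A i j * S i j := by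
    intro A hA
    have h1 : f A = ∑ i, ∑ j, A i j * f (Matrix.single i j 1) := by
      conv_lhs => rw [Matrix.matrix_eq_sum_single A]
      simp only [map_sum]
      refine Finset.sum_congr rfl fun i _ => Finset.sum_congr rfl fun j _ => ?_
      rw [← smul_eq_mul, ← map_smul, Matrix.smul_single, smul_eq_mul, mul_one]
    have h2 : f A = ∑ i, ∑ j, A i j * f (Matrix.single j i 1) := by
      rw [h1, Finset.sum_comm]
      refine Finset.sum_congr rfl fun i _ => Finset.sum_congr rfl fun j _ => ?_
      rw [hA.apply i j]
    have h3 : ∑ i, ∑ j, A i j * S i j = (∑ i, ∑ j, A i j * f (Matrix.single i j 1) + ∑ i, ∑ j, A i j * f (Matrix.single j i 1)) / 2 := by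
      rw [← Finset.sum_add_distrib, Finset.sum_div]
      refine Finset.sum_congr rfl fun i _ => ?_
      rw [← Finset.sum_add_distrib, Finset.sum_div]
      refine Finset.sum_congr rfl fun j _ => ?_
      simp only [S, Matrix.of_apply]; ring
    rw [h3, ← h1, ← h2]; ring
  have hSpsd : S.PosSemidef := by
    refine Matrix.PosSemidef.of_dotProduct_mulVec_nonneg ?_ ?_
    · ext i j; simp [S, add_comm]
    · intro x
      have h1 := projMat_posSemidef (WithLp.toLp 2 x)
      have h2 := hfpos _ (by simpa using hF.1.2.2 0 h0F _ h1)
      rw [hfS _ (by ext i j; simp [projMat, mul_comm])] at h2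
      simp only [star_trivial]
      have h3 := quad_eq S (WithLp.toLp 2 x)
      change _ = x ⬝ᵥ (_ *ᵥ x) at h3
      rw [← h3]
      exact h2
  obtain ⟨C, hC⟩ := posSemidef_factor hSpsd
  let w : Fin n → EucSp n := fun k => WithLp.toLp 2 (C k)
  have hSw : ∀ A : Matrix (Fin n) (Fin n) ℝ, A.IsSymm → ∑ k, quad A (w k) = f A := by
    intro A hA
    rw [hfS A hA]
    simp only [quad]
    rw [Finset.sum_comm]
    refine Finset.sum_congr rfl fun i _ => ?_
    rw [Finset.sum_comm]
    refine Finset.sum_congr rfl fun j _ => ?_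
    rw [hC, Matrix.mul_apply, Finset.mul_sum]
    refine Finset.sum_congr rfl fun k _ => ?_
    simp [w, Matrix.star_apply]
    ring
  have hAs := hF.1.1 _ hAF
  refine ⟨w, fun A hA => ?_, ?_⟩
  · rw [hSw A (hF.1.1 A hA)]; exact hfpos A hA
  · have h1 : f (rieszMat p e - ε • (1 : Matrix (Fin n) (Fin n) ℝ)) < 0 := hf1.trans hc0
    rw [← hSw _ (hAs.sub (by simp [Matrix.IsSymm]))] at h1
    simp only [quad_sub, quad_smul, quad_one, quad_rieszMat] at h1
    rw [Finset.sum_sub_distrib, ← Finset.mul_sum] at h1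
    linarith

theorem frame_nonneg {n : ℕ} {F : Set (Matrix (Fin n) (Fin n) ℝ)} (hF : IsConeSubequation F)
    {p : ℝ} (hchar : HasRieszChar F p) (e : EucSp n) (he : ‖e‖ = 1) {w : Fin n → EucSp n} (hw : GoodFrame F w) :
    0 ≤ ∑ k, (‖w k‖ ^ 2 - p * (inner ℝ e (w k)) ^ 2) := by
  have hAF : rieszMat p e ∈ F := by
    have := (hchar.2 e he).1
    rwa [hF.1.2.1.closure_eq] at this
  have := hw _ hAF
  simpa only [quad_rieszMat] using this

theorem riesz_le_dim {n : ℕ} {F : Set (Matrix (Fin n) (Fin n) ℝ)} (hn : 1 ≤ n) (hF : IsConeSubequation F)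
    (hFconv : Convex ℝ F) {p : ℝ} (hchar : HasRieszChar F p) : p ≤ n := by
  have he0 : ∀ i : Fin n, ‖(EuclideanSpace.single i (1:ℝ) : EucSp n)‖ = 1 := by intro i; simp
  obtain ⟨w, hw, hlt⟩ := exists_frame hn hF hFconv hchar _ (he0 ⟨0, hn⟩) one_pos
  have hpos : 0 < ∑ k, ‖w k‖ ^ 2 := by
    have := frame_nonneg hF hchar _ (he0 ⟨0, hn⟩) hw
    linarith
  have h1 : 0 ≤ ∑ i : Fin n, ∑ k, (‖w k‖ ^ 2 - p * (inner ℝ (EuclideanSpace.single i (1:ℝ) : EucSp n) (w k)) ^ 2) :=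
    Finset.sum_nonneg fun i _ => frame_nonneg hF hchar _ (he0 i) hw
  rw [Finset.sum_comm] at h1
  have h2 : ∀ k, ∑ i : Fin n, (‖w k‖ ^ 2 - p * (inner ℝ (EuclideanSpace.single i (1:ℝ) : EucSp n) (w k)) ^ 2) = (n - p) * ‖w k‖ ^ 2 := by
    intro k
    have : ∀ i, inner ℝ (EuclideanSpace.single i (1:ℝ) : EucSp n) (w k) = w k i := by intro i; simp [EuclideanSpace.inner_single_left]
    simp only [this, Finset.sum_sub_distrib, ← Finset.mul_sum, Finset.sum_const, Finset.card_univ, Fintype.card_fin,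
      nsmul_eq_mul]
    rw [← EuclideanSpace.real_norm_sq_eq]; ring
  simp only [h2, ← Finset.mul_sum] at h1
  have := nonneg_of_mul_nonneg_left h1 hpos
  linarith

theorem goodFrame_rotate {n : ℕ} {F : Set (Matrix (Fin n) (Fin n) ℝ)} {w : Fin n → EucSp n} (hw : GoodFrame F w)
    (g : Matrix (Fin n) (Fin n) ℝ) (hg : ∀ A ∈ F, gᵀ * A * g ∈ F) :
    GoodFrame F (fun k => Matrix.toEuclideanLin g (w k)) := by
  intro A hA
  have := hw _ (hg A hA)
  refine this.trans (le_of_eq (Finset.sum_congr rfl fun k _ => ?_))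
  rw [quad_eq, quad_eq]
  simp only [Matrix.toLpLin_apply]
  rw [← Matrix.mulVec_mulVec, ← Matrix.mulVec_mulVec, Matrix.dotProduct_mulVec _ gᵀ, Matrix.vecMul_transpose]



theorem second_diff_eventually (h h' : ℝ → ℝ) (a : ℝ)
    (hd : ∀ᶠ t in 𝓝 (0:ℝ), HasDerivAt h (h' t) t) (hd2 : HasDerivAt h' a 0) {ε : ℝ} (hε : 0 < ε) :
    ∀ᶠ s in 𝓝[>] (0:ℝ), |h s + h (-s) - 2 * h 0 - s ^ 2 * a| ≤ ε * s ^ 2 := by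
  have h1 := (hasDerivAt_iff_isLittleO_nhds_zero.mp hd2).def (show 0 < ε / 2 by linarith)
  simp only [zero_add, smul_eq_mul, Real.norm_eq_abs] at h1
  obtain ⟨δ, hδ, hball⟩ := Metric.eventually_nhds_iff.mp (hd.and h1)
  have : ∀ᶠ s in 𝓝[>] (0:ℝ), s < δ := nhdsWithin_le_nhds (gt_mem_nhds hδ)
  filter_upwards [this, self_mem_nhdsWithin] with s hs hs0
  have hs0' : 0 < s := hs0
  have := second_diff_bound h h' a (ε / 2) s hs0'.le
    (fun t ht => (hball (by rw [Real.dist_eq, sub_zero]; linarith)).1)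
    (fun t ht => (hball (by rw [Real.dist_eq, sub_zero]; linarith)).2)
  linarith

theorem norm_rpow_second_diff {n : ℕ} (p : ℝ) (y w : EucSp n) (hy : y ≠ 0) {ε : ℝ} (hε : 0 < ε) :
    ∀ᶠ s in 𝓝[>] (0:ℝ), |‖y + s • w‖ ^ (2 - p) + ‖y - s • w‖ ^ (2 - p) - 2 * ‖y‖ ^ (2 - p)
      - s ^ 2 * ((2 - p) * ‖y‖ ^ (-p) * (‖w‖ ^ 2 - p * (inner ℝ (‖y‖⁻¹ • y) w) ^ 2))| ≤ ε * s ^ 2 := by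
  have hr : 0 < ‖y‖ := norm_pos_iff.mpr hy
  let q : ℝ → ℝ := fun t => ‖y‖ ^ 2 + 2 * t * inner ℝ y w + t ^ 2 * ‖w‖ ^ 2
  have hq : ∀ t, ‖y + t • w‖ ^ 2 = q t := by
    intro t
    rw [norm_add_sq_real, inner_smul_right, norm_smul, mul_pow, Real.norm_eq_abs, sq_abs]
    simp only [q]; ring
  have hq0 : q 0 = ‖y‖ ^ 2 := by simp [q]
  have hqpos : 0 < q 0 := by rw [hq0]; positivity
  have hqd : ∀ t, HasDerivAt q (2 * inner ℝ y w + 2 * t * ‖w‖ ^ 2) t := by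
    intro t
    have h1 : HasDerivAt (fun t : ℝ => 2 * t * inner ℝ y w) (2 * inner ℝ y w) t := by
      simpa using ((hasDerivAt_id t).const_mul 2).mul_const (inner ℝ y w)
    have h2 : HasDerivAt (fun t : ℝ => t ^ 2 * ‖w‖ ^ 2) (2 * t * ‖w‖ ^ 2) t := by
      simpa using (hasDerivAt_pow 2 t).mul_const (‖w‖ ^ 2)
    exact ((h1.const_add (‖y‖ ^ 2)).add h2)
  let m : ℝ := (2 - p) / 2
  have hpw : ∀ t, ‖y + t • w‖ ^ (2 - p) = (q t) ^ m := by
    intro t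
    rw [← hq, ← Real.rpow_natCast, ← Real.rpow_mul (norm_nonneg _)]
    congr 1; simp only [m]; push_cast; ring
  have hev : ∀ᶠ t in 𝓝 (0:ℝ), 0 < q t := (hqd 0).continuousAt.eventually (lt_mem_nhds hqpos)
  have hd1 : ∀ᶠ t in 𝓝 (0:ℝ), HasDerivAt (fun t => (q t) ^ m)
      ((2 * inner ℝ y w + 2 * t * ‖w‖ ^ 2) * m * (q t) ^ (m - 1)) t := by
    filter_upwards [hev] with t ht
    exact (hqd t).rpow_const (Or.inl ht.ne')
  have hd2 : HasDerivAt (fun t => (2 * inner ℝ y w + 2 * t * ‖w‖ ^ 2) * m * (q t) ^ (m - 1))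
      ((2 - p) * ‖y‖ ^ (-p) * (‖w‖ ^ 2 - p * (inner ℝ (‖y‖⁻¹ • y) w) ^ 2)) 0 := by
    have h1 : HasDerivAt (fun t : ℝ => (2 * inner ℝ y w + 2 * t * ‖w‖ ^ 2) * m) (2 * ‖w‖ ^ 2 * m) 0 := by
      have : HasDerivAt (fun t : ℝ => 2 * t * ‖w‖ ^ 2) (2 * ‖w‖ ^ 2) 0 := by
        simpa using ((hasDerivAt_id (0:ℝ)).const_mul 2).mul_const (‖w‖ ^ 2)
      exact (this.const_add _).mul_const m
    have h2 := (hqd 0).rpow_const (p := m - 1) (Or.inl hqpos.ne')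
    have h3 := h1.mul h2
    refine h3.congr_deriv ?_
    have e1 : q 0 ^ (m - 1) = ‖y‖ ^ (-p) := by
      rw [hq0, ← Real.rpow_natCast, ← Real.rpow_mul (norm_nonneg _)]
      congr 1; simp only [m]; push_cast; ring
    have e2 : q 0 ^ (m - 1 - 1) = ‖y‖ ^ (-p) * (‖y‖ ^ 2)⁻¹ := by
      rw [Real.rpow_sub_one hqpos.ne', e1, hq0]; rfl
    rw [e1, e2, inner_smul_left]
    simp only [m, conj_trivial]
    field_simp
    ring
  have := second_diff_eventually _ _ _ hd1 hd2 hε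
  filter_upwards [this] with s hs
  have e0 := hpw 0
  have e1 := hpw (-s)
  simp only [zero_smul, add_zero, neg_smul, ← sub_eq_add_neg] at e0 e1
  rw [hpw s, e1, e0]
  exact hs

set_option maxHeartbeats 400000 in
theorem annulus_max {n : ℕ} {F : Set (Matrix (Fin n) (Fin n) ℝ)} (hn : 1 ≤ n) (hF : IsConeSubequation F)
    (hFconv : Convex ℝ F) {p : ℝ} (hp : 2 < p) (hchar : HasRieszChar F p)
    (W : EucSp n → ℝ) {a b : ℝ} (ha : 0 < a)
    (hWc : ContinuousOn W (Metric.closedBall 0 b))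
    (hW : ∀ y, a < ‖y‖ → ‖y‖ < b → ∀ w : Fin n → EucSp n, GoodFrame F w →
      ∃ C, ∀ᶠ s in 𝓝[>] (0:ℝ), -(C * s ^ 3) ≤ ∑ k, (W (y + s • w k) + W (y - s • w k) - 2 * W y))
    (α β : ℝ) (hWa : ∀ y, ‖y‖ = a → W y ≤ α - β * a ^ (2 - p))
    (hWb : ∀ y, ‖y‖ = b → W y ≤ α - β * b ^ (2 - p)) (y : EucSp n) (hy1 : a ≤ ‖y‖) (hy2 : ‖y‖ ≤ b) :
    W y ≤ α - β * ‖y‖ ^ (2 - p) := by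
  have main : ∀ δ : ℝ, 0 < δ → W y ≤ α - β * ‖y‖ ^ (2 - p) + δ * b ^ 2 := by
    intro δ hδ
    let D : Set (EucSp n) := {z | a ≤ ‖z‖ ∧ ‖z‖ ≤ b}
    have hDc : IsCompact D := by
      refine (isCompact_closedBall (0 : EucSp n) b).of_isClosed_subset ?_ ?_
      · exact (isClosed_le continuous_const continuous_norm).inter (isClosed_le continuous_norm continuous_const)
      · intro z hz; simpa using hz.2
    let g : EucSp n → ℝ := fun z => W z + β * ‖z‖ ^ (2 - p) + δ * ‖z‖ ^ 2
    have hgc : ContinuousOn g D := by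
      refine ContinuousOn.add (ContinuousOn.add (hWc.mono fun z hz => by simpa using hz.2) ?_) (by fun_prop)
      refine continuousOn_const.mul ?_
      exact continuous_norm.continuousOn.rpow_const fun z hz => Or.inl (ha.trans_le hz.1).ne'
    obtain ⟨y0, hy0, hmax⟩ := hDc.exists_isMaxOn ⟨y, hy1, hy2⟩ hgc
    have hbound : g y0 ≤ α + δ * b ^ 2 := by
      rcases hy0.1.eq_or_lt with h1 | h1
      · have := hWa y0 h1.symm
        have h2 : ‖y0‖ ^ 2 ≤ b ^ 2 := by gcongr; exact hy0.2
        simp only [g]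
        rw [← h1] at h2 ⊢
        nlinarith
      rcases hy0.2.eq_or_lt with h2 | h2
      · have := hWb y0 h2
        simp only [g]
        rw [h2]
        linarith
      exfalso
      have hr0 : 0 < ‖y0‖ := ha.trans h1
      have hy00 : y0 ≠ 0 := norm_pos_iff.mp hr0
      have he : ‖(‖y0‖⁻¹ • y0)‖ = 1 := by
        rw [norm_smul, norm_inv, norm_norm, inv_mul_cancel₀ hr0.ne']
      let e : EucSp n := ‖y0‖⁻¹ • y0
      let B : ℝ := |β| * ((p - 2) * ‖y0‖ ^ (-p))
      have hB : 0 ≤ B := by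
        have : 0 ≤ ‖y0‖ ^ (-p) := by positivity
        have : 0 ≤ p - 2 := by linarith
        positivity
      obtain ⟨w, hw, hlt⟩ := exists_frame hn hF hFconv hchar e he (ε := δ / (B + 1)) (by positivity)
      have hge := frame_nonneg hF hchar e he hw
      set Q := ∑ k, (‖w k‖ ^ 2 - p * (inner ℝ e (w k)) ^ 2) with hQ
      set T := ∑ k, ‖w k‖ ^ 2 with hT
      clear_value Q T
      have hTpos : 0 < T := by
        have : 0 < δ / (B + 1) := by positivity
        by_contra hcon
        push Not at hcon
        nlinarith
      obtain ⟨C, hC⟩ := hW y0 h1 h2 w hw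
      -- smallness of the kernel term
      have hkern : -(δ * T) ≤ β * ((2 - p) * ‖y0‖ ^ (-p) * Q) := by
        have h3 : |β * ((2 - p) * ‖y0‖ ^ (-p) * Q)| = B * Q := by
          have : 0 ≤ ‖y0‖ ^ (-p) := by positivity
          rw [abs_mul, abs_mul, abs_mul, abs_of_nonneg hge, abs_of_nonneg this, abs_of_neg (by linarith : 2 - p < 0)]
          simp only [B]; ring
        have h4 : B * Q ≤ δ * T := by
          have h5 : B * Q ≤ B * (δ / (B + 1) * T) := mul_le_mul_of_nonneg_left hlt.le hB
          have h6 : B * (δ / (B + 1)) ≤ δ := by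
            rw [mul_div_assoc', div_le_iff₀ (by positivity)]; nlinarith
          nlinarith
        have := neg_abs_le (β * ((2 - p) * ‖y0‖ ^ (-p) * Q))
        linarith
      -- local maximum
      have hloc : ∀ k, ∀ᶠ s in 𝓝[>] (0:ℝ), g (y0 + s • w k) + g (y0 - s • w k) - 2 * g y0 ≤ 0 := by
        intro k
        have hD : D ∈ 𝓝 y0 := by
          have o1 : ∀ᶠ z in 𝓝 y0, a < ‖z‖ := continuous_norm.continuousAt.eventually (lt_mem_nhds h1)
          have o2 : ∀ᶠ z in 𝓝 y0, ‖z‖ < b := continuous_norm.continuousAt.eventually (gt_mem_nhds h2)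
          filter_upwards [o1, o2] with z hz1 hz2
          exact ⟨hz1.le, hz2.le⟩
        have t1 : Tendsto (fun s : ℝ => y0 + s • w k) (𝓝[>] 0) (𝓝 y0) := by
          have : Continuous (fun s : ℝ => y0 + s • w k) := by fun_prop
          have := this.tendsto 0
          simp only [zero_smul, add_zero] at this
          exact this.mono_left nhdsWithin_le_nhds
        have t2 : Tendsto (fun s : ℝ => y0 - s • w k) (𝓝[>] 0) (𝓝 y0) := by
          have : Continuous (fun s : ℝ => y0 - s • w k) := by fun_prop
          have := this.tendsto 0
          simp only [zero_smul, sub_zero] at this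
          exact this.mono_left nhdsWithin_le_nhds
        filter_upwards [t1.eventually hD, t2.eventually hD] with s hs1 hs2
        have m1 : g (y0 + s • w k) ≤ g y0 := hmax hs1
        have m2 : g (y0 - s • w k) ≤ g y0 := hmax hs2
        linarith
      let ε' : ℝ := δ * T / (2 * (|β| + 1) * (n + 1))
      have hn0 : (0:ℝ) ≤ n := Nat.cast_nonneg n
      have hb0 := abs_nonneg β
      have hε' : 0 < ε' := by
        have h3 : 0 < (n:ℝ) + 1 := by linarith
        have h4 : 0 < |β| + 1 := by linarith
        exact div_pos (mul_pos hδ hTpos) (mul_pos (mul_pos two_pos h4) h3)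
      have hk : ∀ k, ∀ᶠ s in 𝓝[>] (0:ℝ), _ := fun k => norm_rpow_second_diff p y0 (w k) hy00 hε'
      have hCs : ∀ᶠ s in 𝓝[>] (0:ℝ), C * s < δ * T / 2 := by
        have : Continuous (fun s : ℝ => C * s) := by fun_prop
        have := this.tendsto 0
        simp only [mul_zero] at this
        exact (this.mono_left nhdsWithin_le_nhds).eventually (gt_mem_nhds (by positivity))
      obtain ⟨s, hs1, hs2, hs3, hs4, hs5⟩ := (hC.and ((eventually_all.mpr hloc).and ((eventually_all.mpr hk).and
        (hCs.and self_mem_nhdsWithin)))).exists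
      have hs0 : 0 < s := hs5
      have hsum : ∑ k, (g (y0 + s • w k) + g (y0 - s • w k) - 2 * g y0) ≤ 0 := Finset.sum_nonpos fun k _ => hs2 k
      have hsq : ∀ k, ‖y0 + s • w k‖ ^ 2 + ‖y0 - s • w k‖ ^ 2 - 2 * ‖y0‖ ^ 2 = 2 * s ^ 2 * ‖w k‖ ^ 2 := by
        intro k
        rw [norm_add_sq_real, norm_sub_sq_real, norm_smul, mul_pow, Real.norm_eq_abs, sq_abs]; ring
      have hsumeq : ∑ k, (g (y0 + s • w k) + g (y0 - s • w k) - 2 * g y0) =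
          ∑ k, (W (y0 + s • w k) + W (y0 - s • w k) - 2 * W y0)
          + ∑ k, β * (‖y0 + s • w k‖ ^ (2 - p) + ‖y0 - s • w k‖ ^ (2 - p) - 2 * ‖y0‖ ^ (2 - p))
          + δ * (2 * s ^ 2 * T) := by
        rw [hT, Finset.mul_sum, Finset.mul_sum, ← Finset.sum_add_distrib, ← Finset.sum_add_distrib]
        refine Finset.sum_congr rfl fun k _ => ?_
        rw [← hsq]; simp only [g]; ring
      have hkk : ∀ k, β * (s ^ 2 * ((2 - p) * ‖y0‖ ^ (-p) * (‖w k‖ ^ 2 - p * (inner ℝ e (w k)) ^ 2))) - |β| * (ε' * s ^ 2)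
          ≤ β * (‖y0 + s • w k‖ ^ (2 - p) + ‖y0 - s • w k‖ ^ (2 - p) - 2 * ‖y0‖ ^ (2 - p)) := by
        intro k
        have h3 := mul_le_mul_of_nonneg_left (hs3 k) (abs_nonneg β)
        rw [← abs_mul] at h3
        have := (abs_le.mp h3).1
        simp only [e]
        linarith
      have hksum := Finset.sum_le_sum fun k (_ : k ∈ Finset.univ) => hkk k
      rw [Finset.sum_sub_distrib, Finset.sum_const, Finset.card_univ, Fintype.card_fin, nsmul_eq_mul] at hksum
      have hQs : ∑ k, β * (s ^ 2 * ((2 - p) * ‖y0‖ ^ (-p) * (‖w k‖ ^ 2 - p * (inner ℝ e (w k)) ^ 2))) =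
          s ^ 2 * (β * ((2 - p) * ‖y0‖ ^ (-p) * Q)) := by
        rw [hQ]; simp only [Finset.mul_sum]
        refine Finset.sum_congr rfl fun k _ => ?_
        ring
      rw [hQs] at hksum
      have hsm : (n:ℝ) * (|β| * (ε' * s ^ 2)) ≤ δ * T / 2 * s ^ 2 := by
        have : (n:ℝ) * (|β| * ε') ≤ δ * T / 2 := by
          simp only [ε']
          rw [mul_div_assoc', mul_div_assoc', div_le_div_iff₀ (by positivity) (by norm_num)]
          have hb := abs_nonneg β
          have hn0 : (0:ℝ) ≤ n := Nat.cast_nonneg n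
          have : 0 < δ * T := by positivity
          nlinarith [mul_nonneg hb hn0, mul_nonneg this.le hb, mul_nonneg this.le hn0]
        nlinarith [sq_nonneg s]
      have h7 := mul_le_mul_of_nonneg_left hkern (sq_nonneg s)
      have h8 : C * s ^ 3 < δ * T / 2 * s ^ 2 := by
        have := mul_lt_mul_of_pos_right hs4 (show 0 < s ^ 2 by positivity)
        nlinarith
      nlinarith
    have h1 := hmax (show y ∈ D from ⟨hy1, hy2⟩)
    simp only [Set.mem_ofPred_eq] at h1
    have h2 : g y ≤ α + δ * b ^ 2 := h1.trans hbound
    simp only [g] at h2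
    have : 0 ≤ δ * ‖y‖ ^ 2 := by positivity
    linarith
  have hlim : Tendsto (fun δ : ℝ => α - β * ‖y‖ ^ (2 - p) + δ * b ^ 2) (𝓝[>] 0) (𝓝 (α - β * ‖y‖ ^ (2 - p))) := by
    have : Continuous (fun δ : ℝ => α - β * ‖y‖ ^ (2 - p) + δ * b ^ 2) := by fun_prop
    have := this.tendsto 0
    simp only [zero_mul, add_zero] at this
    exact this.mono_left nhdsWithin_le_nhds
  exact ge_of_tendsto hlim (eventually_mem_nhdsWithin.mono fun δ hδ => main δ hδ)



theorem exists_avg {n : ℕ} {F : Set (Matrix (Fin n) (Fin n) ℝ)} (hST : STInvariant F) :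
    ∃ (H : Type) (_ : TopologicalSpace H) (_ : CompactSpace H) (_ : SecondCountableTopology H)
      (_ : MeasurableSpace H) (_ : BorelSpace H) (μ : Measure H) (_ : IsProbabilityMeasure μ)
      (T : H → (EucSp n ≃ₗᵢ[ℝ] EucSp n)),
      Continuous (fun q : H × EucSp n => T q.1 q.2) ∧
      (∀ h w, GoodFrame F w → GoodFrame F (fun k => T h (w k))) ∧
      (∀ (φ : EucSp n → ℝ) (x y : EucSp n), ‖x‖ = ‖y‖ → ∫ h, φ (T h x) ∂μ = ∫ h, φ (T h y) ∂μ) := by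
  obtain ⟨G, hGc, hGO, hG1, hGm, hGi, hGt, hGF⟩ := hST
  have hinv : ∀ g : Matrix.orthogonalGroup (Fin n) ℝ, ((g⁻¹ : Matrix.orthogonalGroup (Fin n) ℝ) : Matrix (Fin n) (Fin n) ℝ)
      = (g : Matrix (Fin n) (Fin n) ℝ)⁻¹ := by
    intro g
    symm
    refine Matrix.inv_eq_left_inv ?_
    have := congrArg (Subtype.val) (inv_mul_cancel g)
    simpa using this
  let Gs : Subgroup (Matrix.orthogonalGroup (Fin n) ℝ) :=
    { carrier := {g | (g : Matrix (Fin n) (Fin n) ℝ) ∈ G}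
      mul_mem' := fun {a b} ha hb => hGm _ ha _ hb
      one_mem' := hG1
      inv_mem' := fun {a} ha => by
        show ((a⁻¹ : Matrix.orthogonalGroup (Fin n) ℝ) : Matrix (Fin n) (Fin n) ℝ) ∈ G
        rw [hinv]; exact hGi _ ha }
  let ι : Gs → Matrix (Fin n) (Fin n) ℝ := fun g => ((g : Matrix.orthogonalGroup (Fin n) ℝ) : Matrix (Fin n) (Fin n) ℝ)
  have hι : Topology.IsEmbedding ι := Topology.IsEmbedding.subtypeVal.comp Topology.IsEmbedding.subtypeVal
  have hιG : ∀ h, ι h ∈ G := fun h => h.2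
  have hrange : ι '' univ = G := by
    ext A
    constructor
    · rintro ⟨h, -, rfl⟩; exact hιG h
    · intro hA
      exact ⟨⟨⟨A, hGO hA⟩, hA⟩, mem_univ _, rfl⟩
  have hGcomp : IsCompact G := by
    have hbox : IsCompact (Set.pi univ (fun _ : Fin n => Set.pi univ fun _ : Fin n => Icc (-1 : ℝ) 1)) :=
      isCompact_univ_pi fun _ => isCompact_univ_pi fun _ => isCompact_Icc
    refine hbox.of_isClosed_subset hGc ?_
    intro A hA i _ j _
    have := entry_norm_bound_of_unitary (hGO hA) i j
    rw [Real.norm_eq_abs] at this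
    exact abs_le.mp this
  have hHc : CompactSpace Gs := by
    rw [← isCompact_univ_iff, hι.isCompact_iff, hrange]
    exact hGcomp
  letI mH : MeasurableSpace Gs := borel Gs
  have bH : BorelSpace Gs := ⟨rfl⟩
  have scM : SecondCountableTopology (Matrix (Fin n) (Fin n) ℝ) :=
    inferInstanceAs (SecondCountableTopology (Fin n → Fin n → ℝ))
  have scH : SecondCountableTopology Gs := hι.secondCountableTopology
  let μ : Measure Gs := Measure.haarMeasure ⊤
  have hμ : IsProbabilityMeasure μ := ⟨by
    have := Measure.haarMeasure_self (K₀ := (⊤ : TopologicalSpace.PositiveCompacts Gs))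
    simpa using this⟩
  have hnorm : ∀ (A : Matrix (Fin n) (Fin n) ℝ), A ∈ Matrix.orthogonalGroup (Fin n) ℝ → ∀ x : EucSp n,
      ‖Matrix.toEuclideanLin A x‖ = ‖x‖ := by
    intro A hA x
    have h1 : ‖Matrix.toEuclideanLin A x‖ ^ 2 = ‖x‖ ^ 2 := by
      rw [← quad_one, ← quad_one, quad_eq, quad_eq]
      simp only [Matrix.toLpLin_apply, Matrix.one_mulVec]
      rw [Matrix.dotProduct_mulVec, ← Matrix.mulVec_transpose, Matrix.mulVec_mulVec]
      have : Aᵀ * A = 1 := (Matrix.mem_orthogonalGroup_iff' (Fin n) ℝ).mp hA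
      rw [this, Matrix.one_mulVec]
    exact (pow_left_inj₀ (norm_nonneg _) (norm_nonneg _) two_ne_zero).mp h1
  let T : Gs → (EucSp n ≃ₗᵢ[ℝ] EucSp n) := fun h =>
    LinearIsometry.toLinearIsometryEquiv ⟨Matrix.toEuclideanLin (ι h⁻¹), hnorm _ (hGO (hιG h⁻¹))⟩ rfl
  have hT : ∀ h x, T h x = Matrix.toEuclideanLin (ι h⁻¹) x := fun h x => rfl
  have hιmul : ∀ a b, ι (a * b) = ι a * ι b := fun a b => rfl
  refine ⟨Gs, inferInstance, hHc, scH, mH, bH, μ, hμ, T, ?_, ?_, ?_⟩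
  · have hc : Continuous (fun q : Gs × EucSp n => ι q.1⁻¹) := hι.continuous.comp (continuous_inv.comp continuous_fst)
    simp only [hT, Matrix.toLpLin_apply]
    refine (PiLp.continuous_toLp 2 _).comp ?_
    exact hc.matrix_mulVec ((PiLp.continuous_ofLp 2 _).comp continuous_snd)
  · intro h w hw
    exact goodFrame_rotate hw _ (fun A hA => hGF _ (hιG h⁻¹) A hA)
  · intro φ x y hxy
    by_cases hx : x = 0
    · have hy : y = 0 := by rw [hx, norm_zero] at hxy; exact norm_eq_zero.mp hxy.symm
      rw [hx, hy]
    · have hr : 0 < ‖x‖ := norm_pos_iff.mpr hx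
      obtain ⟨g, hg, hgx⟩ := hGt (‖x‖⁻¹ • x) (‖x‖⁻¹ • y) (by
        rw [norm_smul, norm_inv, norm_norm, inv_mul_cancel₀ hr.ne']) (by
        rw [norm_smul, norm_inv, norm_norm, ← hxy, inv_mul_cancel₀ hr.ne'])
      rw [map_smul] at hgx
      have hgx' : Matrix.toEuclideanLin g x = y := smul_right_injective _ (inv_ne_zero hr.ne') hgx
      let g0 : Gs := ⟨⟨g, hGO hg⟩, hg⟩
      rw [← integral_mul_left_eq_self (fun h => φ (T h x)) g0⁻¹]
      refine integral_congr_ae (Eventually.of_forall fun h => ?_)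
      show φ (T (g0⁻¹ * h) x) = φ (T h y)
      rw [hT, hT, _root_.mul_inv_rev, _root_.inv_inv, hιmul, ← hgx']
      simp only [Matrix.toLpLin_apply, Matrix.mulVec_mulVec]
      rfl


open scoped SchwartzMap LineDeriv ContDiff

theorem lineD_shift {n : ℕ} (f g : 𝓢(EucSp n, ℝ)) (z : EucSp n) (hfg : ∀ y, g y = f (y - z))
    (w y : EucSp n) : (∂_{w} g) y = (∂_{w} f) (y - z) := by
  have h1 := schwartz_line g y w 0
  have h2 := schwartz_line f (y - z) w 0
  have h3 : (fun t : ℝ => g (y + t • w)) = fun t : ℝ => f (y - z + t • w) := by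
    funext t
    rw [hfg, add_sub_right_comm]
  rw [h3] at h1
  simpa using h1.unique h2

theorem opL_shift {n : ℕ} (f g : 𝓢(EucSp n, ℝ)) (z : EucSp n) (hfg : ∀ y, g y = f (y - z))
    (w : Fin n → EucSp n) (y : EucSp n) : opL w g y = opL w f (y - z) := by
  rw [opL_apply, opL_apply]
  refine Finset.sum_congr rfl fun k _ => ?_
  exact lineD_shift _ _ z (fun y => lineD_shift f g z hfg (w k) y) (w k) y

/-- Mollification. -/
def mollv {n : ℕ} (f : EucSp n → ℝ) (κ : ContDiffBump (0 : EucSp n)) (z : EucSp n) : ℝ :=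
  ∫ y, f y * κ (y - z)

theorem moll_integrable {n : ℕ} {f : EucSp n → ℝ} (hf : Integrable f) (κ : ContDiffBump (0 : EucSp n))
    (z : EucSp n) : Integrable (fun y => f y * κ (y - z)) := by
  refine hf.mul_bdd (c := 1) ?_ (Eventually.of_forall fun y => ?_)
  · exact (κ.continuous.comp (continuous_id.sub continuous_const)).aestronglyMeasurable
  · rw [Real.norm_eq_abs, abs_of_nonneg κ.nonneg]; exact κ.le_one

theorem mollv_abs_le {n : ℕ} {f : EucSp n → ℝ} (hf : Integrable f) (κ : ContDiffBump (0 : EucSp n))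
    (z : EucSp n) : |mollv f κ z| ≤ ∫ y, |f y| := by
  refine (abs_integral_le_integral_abs).trans ?_
  refine integral_mono (moll_integrable hf κ z).abs hf.abs fun y => ?_
  show |f y * κ (y - z)| ≤ |f y|
  rw [abs_mul, abs_of_nonneg (a := κ (y - z)) κ.nonneg]
  exact mul_le_of_le_one_right (abs_nonneg _) κ.le_one

theorem mollv_continuous {n : ℕ} {f : EucSp n → ℝ} (hf : Integrable f) (κ : ContDiffBump (0 : EucSp n)) :
    Continuous (mollv f κ) := by
  refine continuous_of_dominated (bound := fun y => |f y|) (fun z => (moll_integrable hf κ z).1) ?_ hf.abs ?_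
  · intro z
    refine Eventually.of_forall fun y => ?_
    rw [Real.norm_eq_abs, abs_mul, abs_of_nonneg (a := κ (y - z)) κ.nonneg]
    exact mul_le_of_le_one_right (abs_nonneg _) κ.le_one
  · refine Eventually.of_forall fun y => ?_
    exact continuous_const.mul (κ.continuous.comp (continuous_const.sub continuous_id))

theorem moll_second_diff {n : ℕ} {F : Set (Matrix (Fin n) (Fin n) ℝ)} {f : EucSp n → ℝ} (hf : Integrable f)
    {R : ℝ} (hP : ∀ w, GoodFrame F w → ∀ η : 𝓢(EucSp n, ℝ), (∀ x, 0 ≤ η x) →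
      tsupport η ⊆ Metric.closedBall 0 R → 0 ≤ ∫ x, f x * opL w η x)
    (κ : ContDiffBump (0 : EucSp n)) :
    ∃ C : ℝ, 0 ≤ C ∧ ∀ z, ‖z‖ + κ.rOut ≤ R → ∀ w, GoodFrame F w → ∀ s : ℝ, 0 ≤ s →
      -(C * (∑ k, ‖w k‖ ^ 3) * s ^ 3) ≤
        ∑ k, (mollv f κ (z + s • w k) + mollv f κ (z - s • w k) - 2 * mollv f κ z) := by
  obtain ⟨C, hC0, hC⟩ := schwartz_second_diff (bumpS κ)
  refine ⟨C * ∫ y, |f y|, mul_nonneg hC0 (integral_nonneg fun y => abs_nonneg _), ?_⟩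
  intro z hz w hw s hs
  have hcs : HasCompactSupport (fun y => κ (y - z)) :=
    κ.hasCompactSupport.comp_homeomorph (Homeomorph.subRight z)
  have hcd : ContDiff ℝ (⊤ : ℕ∞) (fun y => κ (y - z)) := κ.contDiff.comp (contDiff_id.sub contDiff_const)
  let η : 𝓢(EucSp n, ℝ) := hcs.toSchwartzMap hcd
  have hηe : ∀ y, η y = bumpS κ (y - z) := fun y => rfl
  have hηs : tsupport η ⊆ Metric.closedBall 0 R := by
    refine closure_minimal ?_ Metric.isClosed_closedBall
    intro y hy
    have h1 : κ (y - z) ≠ 0 := hy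
    have h2 : y - z ∈ Function.support κ := h1
    rw [κ.support_eq, mem_ball_zero_iff] at h2
    rw [mem_closedBall_zero_iff]
    have := norm_add_le (y - z) z
    rw [sub_add_cancel] at this
    linarith
  have hpos := hP w hw η (fun x => κ.nonneg) hηs
  have hD : ∀ k, Integrable (fun y => f y * (∂_{w k} (∂_{w k} (bumpS κ))) (y - z)) := by
    intro k
    obtain ⟨B, hB0, hB⟩ := schwartz_bdd (∂_{w k} (∂_{w k} (bumpS κ)))
    refine hf.mul_bdd (c := B) ?_ (Eventually.of_forall fun y => hB _)
    exact ((∂_{w k} (∂_{w k} (bumpS κ))).continuous.comp (continuous_id.sub continuous_const)).aestronglyMeasurable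
  have hsum : ∫ x, f x * opL w η x = ∑ k, ∫ y, f y * (∂_{w k} (∂_{w k} (bumpS κ))) (y - z) := by
    rw [← integral_finsetSum _ (fun k _ => hD k)]
    refine integral_congr_ae (Eventually.of_forall fun y => ?_)
    show f y * opL w η y = _
    rw [opL_shift (bumpS κ) η z hηe, opL_apply, Finset.mul_sum]
  have hk : ∀ k, s ^ 2 * (∫ y, f y * (∂_{w k} (∂_{w k} (bumpS κ))) (y - z)) - C * ‖w k‖ ^ 3 * s ^ 3 * ∫ y, |f y| ≤
      mollv f κ (z + s • w k) + mollv f κ (z - s • w k) - 2 * mollv f κ z := by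
    intro k
    have hI : Integrable (fun y => f y * κ (y - (z + s • w k)) + f y * κ (y - (z - s • w k))) :=
      (moll_integrable hf κ (z + s • w k)).add (moll_integrable hf κ (z - s • w k))
    unfold mollv
    rw [← integral_const_mul, ← integral_const_mul, ← integral_const_mul, ← integral_add (moll_integrable hf _ _) (moll_integrable hf _ _),
      ← integral_sub ((hD k).const_mul _) (hf.abs.const_mul _),
      ← integral_sub hI ((moll_integrable hf _ _).const_mul _)]
    refine integral_mono (((hD k).const_mul _).sub (hf.abs.const_mul _))
      (hI.sub ((moll_integrable hf _ _).const_mul _)) fun y => ?_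
    have h1 := hC (w k) (y - z) s hs
    simp only [bumpS_apply] at h1
    have e1 : y - (z + s • w k) = y - z - s • w k := by abel
    have e2 : y - (z - s • w k) = y - z + s • w k := by abel
    show s ^ 2 * (f y * (∂_{w k} (∂_{w k} (bumpS κ))) (y - z)) - C * ‖w k‖ ^ 3 * s ^ 3 * |f y| ≤
      f y * κ (y - (z + s • w k)) + f y * κ (y - (z - s • w k)) - 2 * (f y * κ (y - z))
    rw [e1, e2]
    have h2 := mul_le_mul_of_nonneg_left h1 (abs_nonneg (f y))
    rw [← abs_mul] at h2
    have h3 := (abs_le.mp h2).1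
    nlinarith [h3]
  have := Finset.sum_le_sum (s := Finset.univ) fun k _ => hk k
  refine le_trans ?_ this
  rw [Finset.sum_sub_distrib, ← Finset.mul_sum, ← hsum, ← Finset.sum_mul, ← Finset.sum_mul, ← Finset.mul_sum]
  nlinarith [mul_nonneg (sq_nonneg s) hpos]


open scoped SchwartzMap LineDeriv ContDiff

set_option maxHeartbeats 1600000 in
theorem moll_conv {n : ℕ} {F : Set (Matrix (Fin n) (Fin n) ℝ)} (hn : 1 ≤ n) (hF : IsConeSubequation F)
    (hFconv : Convex ℝ F) (hST : STInvariant F) {p : ℝ} (hp : 2 < p) (hchar : HasRieszChar F p)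
    {f : EucSp n → ℝ} (hf : Integrable f)
    {R : ℝ} (hP : ∀ w, GoodFrame F w → ∀ η : 𝓢(EucSp n, ℝ), (∀ x, 0 ≤ η x) →
      tsupport η ⊆ Metric.closedBall 0 R → 0 ≤ ∫ x, f x * opL w η x)
    (κ : ContDiffBump (0 : EucSp n)) (x : EucSp n) {t1 t t2 l : ℝ} (h1 : 0 < t1) (h1t : t1 < t) (ht2 : t < t2)
    (hl : t ^ (2 - p) = l * t1 ^ (2 - p) + (1 - l) * t2 ^ (2 - p))
    (hR : ‖x‖ + t2 + κ.rOut ≤ R) :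
    ∫ y in Metric.closedBall (0 : EucSp n) 1, mollv f κ (x + t • y) ≤
      l * (∫ y in Metric.closedBall (0 : EucSp n) 1, mollv f κ (x + t1 • y)) +
      (1 - l) * ∫ y in Metric.closedBall (0 : EucSp n) 1, mollv f κ (x + t2 • y) := by
  obtain ⟨H, _, _, _, _, _, μ, _, T, hTc, hTg, hTr⟩ := exists_avg hST
  obtain ⟨C, hC0, hC⟩ := moll_second_diff hf hP κ
  set v := mollv f κ with hv
  have hvc : Continuous v := mollv_continuous hf κ
  have hvb : ∀ z, |v z| ≤ ∫ y, |f y| := mollv_abs_le hf κ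
  clear_value v
  have hjc : Continuous (fun q : H × EucSp n => v (x + T q.1 q.2)) := hvc.comp (continuous_const.add hTc)
  have hIntg : ∀ y, Integrable (fun h => v (x + T h y)) μ := by
    intro y
    refine Integrable.of_bound (C := ∫ y, |f y|) ?_ (Eventually.of_forall fun h => hvb _)
    exact (hjc.comp (continuous_id.prodMk continuous_const)).aestronglyMeasurable
  let W : EucSp n → ℝ := fun y => ∫ h, v (x + T h y) ∂μ
  have hWc : Continuous W := by
    refine continuous_of_dominated (bound := fun _ => ∫ y, |f y|) (fun y => (hIntg y).1) ?_ (integrable_const _) ?_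
    · exact fun y => Eventually.of_forall fun h => hvb _
    · exact Eventually.of_forall fun h => hvc.comp (continuous_const.add (T h).continuous)
  have hWr : ∀ y z, ‖y‖ = ‖z‖ → W y = W z := fun y z hyz => hTr (fun q => v (x + q)) y z hyz
  have hWd : ∀ y, ‖x‖ + ‖y‖ + κ.rOut ≤ R → ∀ w : Fin n → EucSp n, GoodFrame F w → ∀ s : ℝ, 0 ≤ s →
      -(C * (∑ k, ‖w k‖ ^ 3) * s ^ 3) ≤ ∑ k, (W (y + s • w k) + W (y - s • w k) - 2 * W y) := by
    intro y hy w hw s hs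
    have hI : ∀ k, Integrable (fun h => v (x + T h (y + s • w k)) + v (x + T h (y - s • w k))) μ :=
      fun k => (hIntg _).add (hIntg _)
    have hI2 : ∀ k, Integrable (fun h => v (x + T h (y + s • w k)) + v (x + T h (y - s • w k)) - 2 * v (x + T h y)) μ :=
      fun k => (hI k).sub ((hIntg _).const_mul 2)
    have e : ∑ k, (W (y + s • w k) + W (y - s • w k) - 2 * W y) =
        ∫ h, ∑ k, (v (x + T h (y + s • w k)) + v (x + T h (y - s • w k)) - 2 * v (x + T h y)) ∂μ := by
      rw [integral_finsetSum _ (fun k _ => hI2 k)]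
      refine Finset.sum_congr rfl fun k _ => ?_
      rw [integral_sub (hI k) ((hIntg _).const_mul 2), integral_add (hIntg _) (hIntg _), integral_const_mul]
    rw [e]
    have e2 : -(C * (∑ k, ‖w k‖ ^ 3) * s ^ 3) = ∫ h, -(C * (∑ k, ‖w k‖ ^ 3) * s ^ 3) ∂μ := by simp
    rw [e2]
    refine integral_mono (integrable_const _) (integrable_finsetSum _ fun k _ => hI2 k) fun h => ?_
    have hz : ‖x + T h y‖ + κ.rOut ≤ R := by
      have := norm_add_le x (T h y)
      rw [(T h).norm_map] at this
      linarith
    have := hC (x + T h y) hz _ (hTg h w hw) s hs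
    simpa [map_add, map_sub, map_smul, add_assoc, add_sub_assoc] using this
  have key : ∀ y : EucSp n, ‖y‖ ≤ 1 → W (t • y) ≤ l * W (t1 • y) + (1 - l) * W (t2 • y) := by
    intro y hy
    by_cases hy0 : y = 0
    · simp only [hy0, smul_zero]; linarith
    have hr : 0 < ‖y‖ := norm_pos_iff.mpr hy0
    have ht : 0 < t := h1.trans h1t
    have ht2' : 0 < t2 := ht.trans ht2
    have n0 : ∀ c : ℝ, 0 < c → ‖c • y‖ = c * ‖y‖ := fun c hc => by
      rw [norm_smul, Real.norm_eq_abs, abs_of_pos hc]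
    have hlt : t2 ^ (2 - p) < t1 ^ (2 - p) := Real.rpow_lt_rpow_of_neg h1 (h1t.trans ht2) (by linarith)
    have hd : 0 < t1 ^ (2 - p) - t2 ^ (2 - p) := by linarith
    have hrp : 0 < ‖y‖ ^ (2 - p) := Real.rpow_pos_of_pos hr _
    let β := (W (t2 • y) - W (t1 • y)) / (t1 ^ (2 - p) - t2 ^ (2 - p)) / ‖y‖ ^ (2 - p)
    let α := W (t1 • y) + β * (t1 * ‖y‖) ^ (2 - p)
    have hβ : β * ‖y‖ ^ (2 - p) * (t1 ^ (2 - p) - t2 ^ (2 - p)) = W (t2 • y) - W (t1 • y) := by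
      simp only [β]; field_simp
    have m : ∀ c : ℝ, 0 < c → (c * ‖y‖) ^ (2 - p) = c ^ (2 - p) * ‖y‖ ^ (2 - p) := fun c hc =>
      Real.mul_rpow hc.le hr.le
    have res := annulus_max hn hF hFconv hp hchar W (a := t1 * ‖y‖) (b := t2 * ‖y‖) (by positivity)
      hWc.continuousOn (fun z hz1 hz2 w hw => ⟨C * (∑ k, ‖w k‖ ^ 3), by
        filter_upwards [self_mem_nhdsWithin] with s hs
        refine hWd z ?_ w hw s (le_of_lt hs)
        have : t2 * ‖y‖ ≤ t2 := mul_le_of_le_one_right ht2'.le hy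
        linarith⟩) α β
      (fun z hz => by rw [hWr z (t1 • y) (by rw [hz, n0 _ h1])]; simp only [α]; linarith)
      (fun z hz => by
        rw [hWr z (t2 • y) (by rw [hz, n0 _ ht2'])]; simp only [α]; rw [m _ h1, m _ ht2']; linarith)
      (t • y) (by rw [n0 _ ht]; gcongr) (by rw [n0 _ ht]; gcongr)
    rw [n0 _ ht, m _ ht] at res
    refine res.trans (le_of_eq ?_)
    simp only [α]
    rw [m _ h1, hl]
    linear_combination (1 - l) * hβ
  have hWint : ∀ c : ℝ, ∫ y in Metric.closedBall (0 : EucSp n) 1, W (c • y) =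
      ∫ y in Metric.closedBall (0 : EucSp n) 1, v (x + c • y) := by
    intro c
    have hsw : ∫ y in Metric.closedBall (0 : EucSp n) 1, W (c • y) =
        ∫ h, ∫ y in Metric.closedBall (0 : EucSp n) 1, v (x + T h (c • y)) ∂volume ∂μ := by
      have hfin : IsFiniteMeasure ((volume : Measure (EucSp n)).restrict (Metric.closedBall 0 1)) :=
        ⟨by rw [Measure.restrict_apply_univ]; exact measure_closedBall_lt_top⟩
      refine integral_integral_swap (f := fun y h => v (x + T h (c • y))) ?_
      refine Integrable.of_bound (C := ∫ y, |f y|) ?_ (Eventually.of_forall fun h => hvb _)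
      have : Continuous (Function.uncurry fun (y : EucSp n) (h : H) => v (x + T h (c • y))) :=
        hjc.comp (continuous_snd.prodMk (continuous_fst.const_smul c))
      exact this.aestronglyMeasurable
    rw [hsw]
    have : ∀ h, ∫ y in Metric.closedBall (0 : EucSp n) 1, v (x + T h (c • y)) =
        ∫ y in Metric.closedBall (0 : EucSp n) 1, v (x + c • y) := by
      intro h
      have hpre : (T h) ⁻¹' (Metric.closedBall (0 : EucSp n) 1) = Metric.closedBall 0 1 := by
        ext z; simp
      have := (T h).measurePreserving.setIntegral_preimage_emb
        (T h).toHomeomorph.measurableEmbedding (fun y => v (x + c • y)) (Metric.closedBall (0 : EucSp n) 1)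
      rw [hpre] at this
      rw [← this]
      simp only [map_smul]
    simp only [this]
    simp
  rw [← hWint, ← hWint, ← hWint, ← integral_const_mul, ← integral_const_mul]
  have hWi : ∀ c : ℝ, IntegrableOn (fun y => W (c • y)) (Metric.closedBall (0 : EucSp n) 1) := fun c =>
    (hWc.comp (continuous_id.const_smul c)).continuousOn.integrableOn_compact (isCompact_closedBall _ _)
  rw [← integral_add ((hWi _).const_mul _) ((hWi _).const_mul _)]
  refine setIntegral_mono_on (hWi _) (((hWi _).const_mul _).add ((hWi _).const_mul _)) measurableSet_closedBall ?_
  intro y hy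
  exact key y (by simpa using hy)


open scoped SchwartzMap LineDeriv ContDiff Pointwise

theorem ball_scale {n : ℕ} (f : EucSp n → ℝ) (x : EucSp n) {t : ℝ} (ht : 0 < t) :
    ∫ y in Metric.closedBall (0 : EucSp n) 1, f (x + t • y) = (t ^ n)⁻¹ * ∫ y in Metric.closedBall x t, f y := by
  rw [Measure.setIntegral_comp_smul_of_pos volume (fun z => f (x + z)) _ ht, finrank_euclideanSpace_fin, smul_eq_mul]
  congr 1
  have hs : t • Metric.closedBall (0 : EucSp n) 1 = Metric.closedBall 0 t := by
    rw [smul_unitClosedBall, Real.norm_eq_abs, abs_of_pos ht]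
  rw [hs]
  have hpre : (fun z => x + z) ⁻¹' (Metric.closedBall x t) = Metric.closedBall (0 : EucSp n) t := by
    ext z; simp [dist_eq_norm]
  have := (measurePreserving_add_left (volume : Measure (EucSp n)) x).setIntegral_preimage_emb
    (measurableEmbedding_addLeft x) f (Metric.closedBall x t)
  rw [hpre] at this
  exact this

theorem ball_integral_continuous {n : ℕ} (hn : 1 ≤ n) {f : EucSp n → ℝ} (hf : Integrable f) (t : ℝ) :
    Continuous (fun x => ∫ y in Metric.closedBall x t, f y) := by
  have : Nonempty (Fin n) := ⟨⟨0, hn⟩⟩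
  have e : (fun x => ∫ y in Metric.closedBall x t, f y) =
      fun x => ∫ y, (Metric.closedBall x t).indicator f y := by
    funext x; rw [integral_indicator measurableSet_closedBall]
  rw [e, continuous_iff_continuousAt]
  intro x
  refine continuousAt_of_dominated (bound := fun y => ‖f y‖) ?_ ?_ hf.norm ?_
  · exact Eventually.of_forall fun z => (hf.indicator measurableSet_closedBall).1
  · exact Eventually.of_forall fun z => Eventually.of_forall fun y => norm_indicator_le_norm_self _ _
  · have h0 : volume (Metric.sphere x t) = 0 := Measure.addHaar_sphere volume x t
    have : ∀ᵐ y : EucSp n, y ∉ Metric.sphere x t := measure_eq_zero_iff_ae_notMem.mp h0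
    filter_upwards [this] with y hy
    have hne : dist y x ≠ t := hy
    have hc : Continuous fun z => dist y z := continuous_const.dist continuous_id
    rcases lt_or_gt_of_ne hne with h | h
    · have : ∀ᶠ z in 𝓝 x, f y = (Metric.closedBall z t).indicator f y := by
        filter_upwards [hc.continuousAt.eventually_lt continuousAt_const h] with z hz
        rw [indicator_of_mem]; exact le_of_lt hz
      exact continuousAt_const.congr this
    · have : ∀ᶠ z in 𝓝 x, 0 = (Metric.closedBall z t).indicator f y := by
        filter_upwards [continuousAt_const.eventually_lt hc.continuousAt h] with z hz
        rw [indicator_of_notMem]; exact not_le.mpr hz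
      exact continuousAt_const.congr this

theorem moll_ball {n : ℕ} {f : EucSp n → ℝ} (hf : Integrable f) (hfm : StronglyMeasurable f)
    (κ : ContDiffBump (0 : EucSp n)) (x : EucSp n) (t : ℝ) :
    ∫ y in Metric.closedBall (0 : EucSp n) 1, mollv f κ (x + t • y) =
      ∫ z, κ z * ∫ y in Metric.closedBall (0 : EucSp n) 1, f (x + z + t • y) := by
  have h1 : ∀ y : EucSp n, mollv f κ (x + t • y) = ∫ z, κ z * f (x + z + t • y) := by
    intro y
    unfold mollv
    rw [← integral_add_right_eq_self _ (x + t • y)]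
    refine integral_congr_ae (Eventually.of_forall fun z => ?_)
    show f (z + (x + t • y)) * κ (z + (x + t • y) - (x + t • y)) = κ z * f (x + z + t • y)
    rw [add_sub_cancel_right, mul_comm]
    congr 2
    abel
  have hfin : IsFiniteMeasure ((volume : Measure (EucSp n)).restrict (Metric.closedBall 0 1)) :=
    ⟨by rw [Measure.restrict_apply_univ]; exact measure_closedBall_lt_top⟩
  simp only [h1]
  rw [integral_integral_swap]
  · simp only [integral_const_mul]
  have hm : Measurable (Function.uncurry fun (y z : EucSp n) => κ z * f (x + z + t • y)) := by
    have := hfm.measurable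
    have hκ := κ.continuous.measurable
    unfold Function.uncurry
    fun_prop
  have hs : ∀ y : EucSp n, Integrable (fun z => f (x + z + t • y)) := by
    intro y
    have := hf.comp_add_right (x + t • y)
    refine this.congr (Eventually.of_forall fun z => ?_)
    show f _ = f _
    congr 1; abel
  have hs2 : ∀ y : EucSp n, ∫ z, |f (x + z + t • y)| = ∫ z, |f z| := by
    intro y
    rw [← integral_add_right_eq_self (fun z => |f z|) (x + t • y)]
    refine integral_congr_ae (Eventually.of_forall fun z => ?_)
    show |f _| = |f _|
    congr 2; abel
  have hle : ∀ y z : EucSp n, |κ z * f (x + z + t • y)| ≤ |f (x + z + t • y)| := by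
    intro y z
    rw [abs_mul, abs_of_nonneg (a := κ z) κ.nonneg]
    exact mul_le_of_le_one_left (abs_nonneg _) κ.le_one
  have hs3 : ∀ y : EucSp n, Integrable (fun z => κ z * f (x + z + t • y)) := fun y =>
    (hs y).mono (hm.comp (measurable_prodMk_left (x := y))).aestronglyMeasurable
      (Eventually.of_forall fun z => hle y z)
  rw [integrable_prod_iff hm.aestronglyMeasurable]
  refine ⟨Eventually.of_forall hs3, ?_⟩
  refine Integrable.of_bound (C := ∫ z, |f z|) ?_ (Eventually.of_forall fun y => ?_)
  · exact (hm.stronglyMeasurable.norm.integral_prod_right').aestronglyMeasurable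
  · rw [Real.norm_eq_abs, abs_of_nonneg (integral_nonneg fun z => norm_nonneg _), ← hs2 y]
    exact integral_mono (hs3 y).norm (hs y).abs fun z => hle y z

theorem ball_conv {n : ℕ} {F : Set (Matrix (Fin n) (Fin n) ℝ)} (hn : 1 ≤ n) (hF : IsConeSubequation F)
    (hFconv : Convex ℝ F) (hST : STInvariant F) {p : ℝ} (hp : 2 < p) (hchar : HasRieszChar F p)
    {f : EucSp n → ℝ} (hf : Integrable f) (hfm : StronglyMeasurable f)
    {R : ℝ} (hP : ∀ w, GoodFrame F w → ∀ η : 𝓢(EucSp n, ℝ), (∀ x, 0 ≤ η x) →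
      tsupport η ⊆ Metric.closedBall 0 R → 0 ≤ ∫ x, f x * opL w η x)
    (x : EucSp n) {t1 t t2 l : ℝ} (h1 : 0 < t1) (h1t : t1 < t) (ht2 : t < t2)
    (hl : t ^ (2 - p) = l * t1 ^ (2 - p) + (1 - l) * t2 ^ (2 - p))
    (hR : ‖x‖ + t2 < R) :
    ∫ y in Metric.closedBall (0 : EucSp n) 1, f (x + t • y) ≤
      l * (∫ y in Metric.closedBall (0 : EucSp n) 1, f (x + t1 • y)) +
      (1 - l) * ∫ y in Metric.closedBall (0 : EucSp n) 1, f (x + t2 • y) := by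
  by_contra hcon
  rw [not_le] at hcon
  have gc : ∀ c : ℝ, 0 < c → Continuous (fun z => ∫ y in Metric.closedBall (0 : EucSp n) 1, f (z + c • y)) := by
    intro c hc
    simp only [ball_scale f _ hc]
    exact continuous_const.mul (ball_integral_continuous hn hf c)
  have ht : 0 < t := h1.trans h1t
  have ht2' : 0 < t2 := ht.trans ht2
  have hmb := fun κ (c : ℝ) => moll_ball hf hfm κ x c
  have c1 := gc t1 h1
  have c0 := gc t ht
  have c2 := gc t2 ht2'
  set g : ℝ → EucSp n → ℝ := fun c z => ∫ y in Metric.closedBall (0 : EucSp n) 1, f (z + c • y) with hg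
  have cΨ : Continuous fun z => g t z - (l * g t1 z + (1 - l) * g t2 z) :=
    c0.sub ((c1.const_mul l).add (c2.const_mul (1 - l)))
  set Ψ : EucSp n → ℝ := fun z => g t z - (l * g t1 z + (1 - l) * g t2 z) with hΨ
  have hx : 0 < Ψ x := by
    simp only [hΨ, hg]; linarith
  have cΨ' : Continuous fun z => Ψ (x + z) := cΨ.comp (continuous_const.add continuous_id)
  have hev : ∀ᶠ z in 𝓝 (0 : EucSp n), 0 < Ψ (x + z) :=
    cΨ'.continuousAt.eventually (lt_mem_nhds (by simpa using hx))
  obtain ⟨ε, hε, hball⟩ := Metric.eventually_nhds_iff.mp hev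
  let r := min ε (R - ‖x‖ - t2)
  have hr : 0 < r := lt_min hε (by linarith)
  let κ : ContDiffBump (0 : EucSp n) := ⟨r / 2, r, by linarith, by linarith⟩
  have hmc := moll_conv hn hF hFconv hST hp hchar hf hP κ x h1 h1t ht2 hl (by
    have : r ≤ R - ‖x‖ - t2 := min_le_right _ _
    show ‖x‖ + t2 + r ≤ R
    linarith)
  rw [hmb κ, hmb κ, hmb κ] at hmc
  have hcc : ∀ h : EucSp n → ℝ, Continuous h → Integrable (fun z => κ z * h z) := fun h hh =>
    (κ.continuous.mul hh).integrable_of_hasCompactSupport κ.hasCompactSupport.mul_right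
  have i1 : Integrable fun z => κ z * g t1 (x + z) := hcc _ (c1.comp (continuous_const.add continuous_id))
  have i0 : Integrable fun z => κ z * g t (x + z) := hcc _ (c0.comp (continuous_const.add continuous_id))
  have i2 : Integrable fun z => κ z * g t2 (x + z) := hcc _ (c2.comp (continuous_const.add continuous_id))
  have hmc' : ∫ z, κ z * g t (x + z) ≤ l * (∫ z, κ z * g t1 (x + z)) + (1 - l) * ∫ z, κ z * g t2 (x + z) := hmc
  have i3 : Integrable fun z => l * (κ z * g t1 (x + z)) + (1 - l) * (κ z * g t2 (x + z)) :=
    (i1.const_mul _).add (i2.const_mul _)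
  have hE : ∫ z, κ z * Ψ (x + z) = (∫ z, κ z * g t (x + z)) -
      (l * (∫ z, κ z * g t1 (x + z)) + (1 - l) * ∫ z, κ z * g t2 (x + z)) := by
    rw [← integral_const_mul, ← integral_const_mul, ← integral_add (i1.const_mul _) (i2.const_mul _),
      ← integral_sub i0 i3]
    refine integral_congr_ae (Eventually.of_forall fun z => ?_)
    simp only [hΨ]
    ring
  have hpos : 0 < ∫ z, κ z * Ψ (x + z) := by
    refine Continuous.integral_pos_of_hasCompactSupport_nonneg_nonzero (x := 0) (κ.continuous.mul cΨ')
      κ.hasCompactSupport.mul_right ?_ ?_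
    · intro z
      show 0 ≤ κ z * Ψ (x + z)
      by_cases hz : ‖z‖ < r
      · exact mul_nonneg κ.nonneg (hball (by rw [dist_zero_right]; exact hz.trans_le (min_le_left _ _))).le
      · rw [κ.zero_of_le_dist (by rw [dist_zero_right]; exact not_lt.mp hz), zero_mul]
    · have : κ 0 = 1 := κ.one_of_mem_closedBall (Metric.mem_closedBall_self κ.rIn_pos.le)
      rw [this, one_mul, add_zero]
      exact hx.ne'
  linarith



theorem convex_slope_limit (Φ : ℝ → ℝ) {s0 M : ℝ} (hs0 : 0 < s0) (hM : ∀ s, s0 ≤ s → Φ s ≤ M)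
    (hc : ∀ a s b, s0 ≤ a → a < s → s < b → (b - a) * Φ s ≤ (b - s) * Φ a + (s - a) * Φ b) :
    ∃ L : ℝ, 0 ≤ L ∧ Tendsto (fun s => -Φ s / s) atTop (𝓝 L) ∧
      ∀ a b, s0 ≤ a → a < b → L ≤ (Φ a - Φ b) / (b - a) := by
  let q : ℝ → ℝ := fun s => (Φ (max s (s0 + 1)) - Φ s0) / (max s (s0 + 1) - s0)
  have hq0 : ∀ x y, s0 < x → x ≤ y → (Φ x - Φ s0) / (x - s0) ≤ (Φ y - Φ s0) / (y - s0) := by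
    intro x y hx hxy
    rcases hxy.eq_or_lt with rfl | hlt
    · exact le_rfl
    · rw [div_le_div_iff₀ (by linarith) (by linarith)]
      have := hc s0 x y le_rfl hx hlt
      nlinarith
  have hmono : Monotone q := by
    intro x y hxy
    refine hq0 _ _ ?_ (max_le_max_right _ hxy)
    exact lt_of_lt_of_le (by linarith) (le_max_right _ _)
  have hbd : ∀ s, q s ≤ |M - Φ s0| := by
    intro s
    have h1 : s0 + 1 ≤ max s (s0 + 1) := le_max_right _ _
    have h2 := hM (max s (s0 + 1)) (by linarith)
    show (Φ (max s (s0 + 1)) - Φ s0) / (max s (s0 + 1) - s0) ≤ _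
    rw [div_le_iff₀ (by linarith)]
    have h3 := le_abs_self (M - Φ s0)
    nlinarith [abs_nonneg (M - Φ s0)]
  have hlim := tendsto_atTop_ciSup hmono ⟨|M - Φ s0|, by rintro _ ⟨s, rfl⟩; exact hbd s⟩
  set B := ⨆ i, q i with hB
  clear_value B
  have hdiv : ∀ c : ℝ, Tendsto (fun s : ℝ => c / s) atTop (𝓝 0) := fun c => tendsto_const_nhds.div_atTop tendsto_id
  have hsub : Tendsto (fun s : ℝ => 1 - s0 / s) atTop (𝓝 (1 - 0)) := tendsto_const_nhds.sub (hdiv s0)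
  have hlim2 : Tendsto (fun s => -Φ s / s) atTop (𝓝 (-B)) := by
    have h1 : Tendsto (fun s => -(q s * (1 - s0 / s) + Φ s0 / s)) atTop (𝓝 (-(B * (1 - 0) + 0))) :=
      ((hlim.mul hsub).add (hdiv _)).neg
    simp only [sub_zero, mul_one, add_zero] at h1
    refine h1.congr' ?_
    filter_upwards [eventually_ge_atTop (s0 + 1)] with s hs
    simp only [q]
    rw [max_eq_left hs]
    have h2 : s - s0 ≠ 0 := by linarith
    have h3 : s ≠ 0 := by linarith
    field_simp
    ring
  refine ⟨-B, ?_, hlim2, ?_⟩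
  · have h1 := hdiv (-M)
    refine le_of_tendsto_of_tendsto h1 hlim2 ?_
    filter_upwards [eventually_ge_atTop s0] with s hs
    have := hM s hs
    have hs2 : 0 < s := by linarith
    gcongr
  · intro a b ha hab
    have h1 : Tendsto (fun s => -Φ a / s + (1 - a / s) * ((Φ a - Φ b) / (b - a))) atTop
        (𝓝 (0 + (1 - 0) * ((Φ a - Φ b) / (b - a)))) :=
      (hdiv _).add ((tendsto_const_nhds.sub (hdiv a)).mul tendsto_const_nhds)
    simp only [sub_zero, one_mul, zero_add] at h1
    refine le_of_tendsto_of_tendsto hlim2 h1 ?_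
    filter_upwards [eventually_gt_atTop b] with s hs
    have h2 := hc a b s ha hab hs
    have hs' : 0 < s := by linarith
    have hba : 0 < b - a := by linarith
    have e : -Φ a / s + (1 - a / s) * ((Φ a - Φ b) / (b - a)) =
        (-Φ a + (s - a) * ((Φ a - Φ b) / (b - a))) / s := by field_simp
    rw [e]
    gcongr
    rw [← sub_le_iff_le_add', ← mul_div_assoc, le_div_iff₀ hba]
    nlinarith

theorem density_exists {p : ℝ} (hp : 2 < p) (V : ℝ → ℝ) {T0 M : ℝ} (hT0 : 0 < T0)
    (hM : ∀ t, 0 < t → t ≤ T0 → V t ≤ M)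
    (hc : ∀ t1 t t2 l : ℝ, 0 < t1 → t1 < t → t < t2 → t2 ≤ T0 → 
      t ^ (2 - p) = l * t1 ^ (2 - p) + (1 - l) * t2 ^ (2 - p) → V t ≤ l * V t1 + (1 - l) * V t2) :
    ∃ L : ℝ, 0 ≤ L ∧ Tendsto (fun t => V t / rieszKernel p t) (𝓝[>] 0) (𝓝 L) ∧
      ∀ a b, 0 < a → a < b → b ≤ T0 → L ≤ (V b - V a) / (a ^ (2 - p) - b ^ (2 - p)) := by
  have hp0 : 2 - p < 0 := by linarith
  have hpi : (2 - p)⁻¹ < 0 := inv_lt_zero.mpr hp0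
  have hts : ∀ t : ℝ, 0 < t → (t ^ (2 - p)) ^ (2 - p)⁻¹ = t := fun t ht => Real.rpow_rpow_inv ht.le hp0.ne
  have hst : ∀ s : ℝ, 0 < s → (s ^ (2 - p)⁻¹) ^ (2 - p) = s := fun s hs => Real.rpow_inv_rpow hs.le hp0.ne
  have hs0 : 0 < T0 ^ (2 - p) := Real.rpow_pos_of_pos hT0 _
  have hle : ∀ s, T0 ^ (2 - p) ≤ s → s ^ (2 - p)⁻¹ ≤ T0 := by
    intro s hs
    rw [← hts T0 hT0]
    exact Real.rpow_le_rpow_of_nonpos hs0 hs hpi.le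
  obtain ⟨L, hL0, hLt, hLb⟩ := convex_slope_limit (fun s => V (s ^ (2 - p)⁻¹)) (M := M) hs0
    (fun s hs => hM _ (Real.rpow_pos_of_pos (hs0.trans_le hs) _) (hle s hs)) (by
      intro a s b ha has hsb
      have ha0 := hs0.trans_le ha
      have hs' := ha0.trans has
      have hb' := hs'.trans hsb
      have := hc (b ^ (2 - p)⁻¹) (s ^ (2 - p)⁻¹) (a ^ (2 - p)⁻¹) ((s - a) / (b - a)) (Real.rpow_pos_of_pos hb' _)
        (Real.rpow_lt_rpow_of_neg hs' hsb hpi) (Real.rpow_lt_rpow_of_neg ha0 has hpi) (hle a ha) (by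
          rw [hst _ hs', hst _ hb', hst _ ha0]
          have : b - a ≠ 0 := by linarith
          field_simp
          ring)
      have hba : 0 < b - a := by linarith
      have h2 := mul_le_mul_of_nonneg_left this hba.le
      refine h2.trans (le_of_eq ?_)
      field_simp
      ring)
  refine ⟨L, hL0, ?_, ?_⟩
  · have h1 : Tendsto (fun t : ℝ => t ^ (2 - p)) (𝓝[>] 0) atTop := by
      have := tendsto_rpow_neg_nhdsGT_zero hp0
      exact this
    refine (hLt.comp h1).congr' ?_
    filter_upwards [self_mem_nhdsWithin] with t ht
    have ht' : 0 < t := ht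
    simp only [Function.comp, hts t ht', rieszKernel]
    rw [if_neg (by linarith), if_neg (by linarith), neg_div, div_neg]
  · intro a b ha hab hb
    have h := hLb (b ^ (2 - p)) (a ^ (2 - p)) (Real.rpow_le_rpow_of_nonpos (ha.trans hab) hb hp0.le)
      (Real.rpow_lt_rpow_of_neg ha hab hp0)
    simpa only [hts a ha, hts b (ha.trans hab)] using h


open scoped SchwartzMap LineDeriv ContDiff

theorem avg_eq {n : ℕ} (f : EucSp n → ℝ) (x : EucSp n) {t : ℝ} (ht : 0 < t) :
    ⨍ y in Metric.closedBall x t, f y = (volume.real (Metric.closedBall (0 : EucSp n) 1))⁻¹ *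
      ∫ y in Metric.closedBall (0 : EucSp n) 1, f (x + t • y) := by
  rw [setAverage_eq, ball_scale f x ht, Measure.addHaar_real_closedBall' volume x ht.le, finrank_euclideanSpace_fin,
    smul_eq_mul, _root_.mul_inv_rev]
  ring

theorem unitBall_pos (n : ℕ) : 0 < volume.real (Metric.closedBall (0 : EucSp n) 1) :=
  ENNReal.toReal_pos (Metric.measure_closedBall_pos volume _ one_pos).ne' measure_closedBall_lt_top.ne

theorem ballAvg_density {n : ℕ} (hn : 1 ≤ n) {p : ℝ} (hp : 2 < p)
    {F : Set (Matrix (Fin n) (Fin n) ℝ)}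
    (hF : IsConeSubequation F) (hFconv : Convex ℝ F)
    (hST : STInvariant F) (hchar : HasRieszChar F p)
    {Ω : Set (EucSp n)} (hΩ : IsOpen Ω) (h0 : (0 : EucSp n) ∈ Ω)
    {u : EucSp n → EReal} (hu : IsFSubharmonicOn F Ω u)
    (hloc : LocallyIntegrableOn (fun y => (u y).toReal) Ω
      (volume : Measure (EucSp n)))
    (hae : ∀ᵐ y ∂(volume : Measure (EucSp n)), y ∈ Ω → u y ≠ ⊥) :
    ∃ ρ : ℝ, 0 < ρ ∧ Metric.closedBall 0 ρ ⊆ Ω ∧ ∀ x : EucSp n, ‖x‖ ≤ ρ →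
      ∃ L : ℝ, 0 ≤ L ∧ Tendsto (fun t => ballAvg u x t / rieszKernel p t) (𝓝[>] 0) (𝓝 L) ∧
        ∀ a b, 0 < a → a < b → b ≤ ρ → L ≤ (ballAvg u x b - ballAvg u x a) / (a ^ (2 - p) - b ^ (2 - p)) := by
  obtain ⟨ρ, hρ, hsub⟩ := Metric.nhds_basis_closedBall.mem_iff.mp (hΩ.mem_nhds h0)
  have hIntg : IntegrableOn (fun y => (u y).toReal) (Metric.closedBall 0 ρ) :=
    hloc.integrableOn_compact_subset hsub (isCompact_closedBall _ _)
  have hf0 : Integrable ((Metric.closedBall (0 : EucSp n) ρ).indicator fun y => (u y).toReal) :=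
    (integrable_indicator_iff measurableSet_closedBall).mpr hIntg
  set f0 := (Metric.closedBall (0 : EucSp n) ρ).indicator fun y => (u y).toReal with hf0d
  let f := hf0.1.mk f0
  have hfae : f0 =ᵐ[volume] f := hf0.1.ae_eq_mk
  have hfm : StronglyMeasurable f := hf0.1.stronglyMeasurable_mk
  have hf : Integrable f := hf0.congr hfae
  have hP : ∀ w, GoodFrame F w → ∀ η : 𝓢(EucSp n, ℝ), (∀ x, 0 ≤ η x) →
      tsupport η ⊆ Metric.closedBall 0 (ρ / 2) → 0 ≤ ∫ x, f x * opL w η x := by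
    intro w hw η hη hηs
    refine (distrib_main hw hΩ hu hloc hae hρ hsub η hη hηs).trans (le_of_eq ?_)
    refine integral_congr_ae ?_
    filter_upwards [hfae] with y hy
    rw [← hy]
    by_cases hyρ : ‖y‖ ≤ ρ
    · rw [hf0d, indicator_of_mem (by simpa using hyρ)]
    · rw [opL_support w η hηs y (by linarith), mul_zero, mul_zero]
  obtain ⟨xm, hxm, hmax⟩ := UpperSemicontinuousOn.exists_isMaxOn (s := Metric.closedBall (0 : EucSp n) ρ)
    (f := u) ⟨0, by simpa using hρ.le⟩ (isCompact_closedBall _ _) (hu.1.mono hsub)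
  have hM : ∀ y ∈ Metric.closedBall (0 : EucSp n) ρ, (u y).toReal ≤ max (u xm).toReal 0 := by
    intro y hy
    by_cases hb : u y = ⊥
    · rw [hb]; simp
    · exact (EReal.toReal_le_toReal (hmax hy) hb (hu.2.1 xm (hsub hxm)).ne).trans (le_max_left _ _)
  set M := max (u xm).toReal 0
  have hsubx : ∀ x : EucSp n, ‖x‖ ≤ ρ / 8 → ∀ t ≤ ρ / 8, Metric.closedBall x t ⊆ Metric.closedBall 0 ρ := by
    intro x hx t ht y hy
    rw [mem_closedBall_zero_iff]
    rw [mem_closedBall_iff_norm] at hy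
    have := norm_add_le (y - x) x
    rw [sub_add_cancel] at this
    linarith
  have havg : ∀ x : EucSp n, ‖x‖ ≤ ρ / 8 → ∀ t, 0 < t → t ≤ ρ / 8 → ballAvg u x t =
      (volume.real (Metric.closedBall (0 : EucSp n) 1))⁻¹ * ∫ y in Metric.closedBall (0 : EucSp n) 1, f (x + t • y) := by
    intro x hx t ht ht2
    rw [← avg_eq f x ht]
    unfold ballAvg
    rw [setAverage_eq, setAverage_eq]
    congr 1
    refine setIntegral_congr_ae measurableSet_closedBall ?_
    filter_upwards [hfae] with y hy hyx
    rw [← hy, hf0d, indicator_of_mem (hsubx x hx t ht2 hyx)]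
  refine ⟨ρ / 8, by linarith, (Metric.closedBall_subset_closedBall (by linarith)).trans hsub, ?_⟩
  intro x hx
  refine density_exists hp (fun t => ballAvg u x t) (M := M) (by linarith) ?_ ?_
  · intro t ht ht2
    show ballAvg u x t ≤ M
    unfold ballAvg
    have hpos : 0 < volume.real (Metric.closedBall x t) := ENNReal.toReal_pos
      (Metric.measure_closedBall_pos volume _ ht).ne' measure_closedBall_lt_top.ne
    rw [setAverage_eq, smul_eq_mul, inv_mul_le_iff₀ hpos]
    have h1 : ∫ y in Metric.closedBall x t, (u y).toReal ≤ ∫ y in Metric.closedBall x t, M :=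
      setIntegral_mono_on (hIntg.mono_set (hsubx x hx t ht2)) (integrableOn_const measure_closedBall_lt_top.ne)
        measurableSet_closedBall fun y hy => hM y (hsubx x hx t ht2 hy)
    rwa [setIntegral_const, smul_eq_mul] at h1
  · intro t1 t t2 l h1 h1t ht2 ht2ρ hl
    show ballAvg u x t ≤ l * ballAvg u x t1 + (1 - l) * ballAvg u x t2
    rw [havg x hx t1 h1 (by linarith), havg x hx t (by linarith) (by linarith), havg x hx t2 (by linarith) ht2ρ]
    have := ball_conv hn hF hFconv hST hp hchar hf hfm hP x h1 h1t ht2 hl (by linarith)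
    have h3 := mul_le_mul_of_nonneg_left this (inv_nonneg.mpr (unitBall_pos n).le)
    refine h3.trans (le_of_eq ?_)
    ring



theorem kernel_locInt {n : ℕ} (hn : 1 ≤ n) {p : ℝ} (hp : 2 < p) (hpn : p ≤ n) :
    LocallyIntegrable (fun x : EucSp n => rieszKernel p ‖x‖) := by
  refine locallyIntegrable_of_norm_le_rpow (C := 1) (α := p - 2) (by simpa using hn)
    (by rw [finrank_euclideanSpace_fin]; linarith) ?_ ?_
  · refine Eventually.of_forall fun x => ?_
    rw [rieszKernel, if_neg (by linarith), if_neg (by linarith), norm_neg, one_mul, neg_sub,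
      Real.norm_eq_abs, abs_of_nonneg (Real.rpow_nonneg (norm_nonneg _) _)]
  · simp only [rieszKernel, if_neg (show ¬ p < 2 by linarith), if_neg (show ¬ p = 2 by linarith)]
    exact (measurable_norm.pow_const (2 - p)).neg.aestronglyMeasurable

theorem scaled_avg_bound {n : ℕ} (hn : 1 ≤ n) {p : ℝ} (hp : 2 < p) (hpn : p ≤ n) {u : EucSp n → EReal}
    {Θ : ℝ} (hΘ : 0 ≤ Θ) {ρ : ℝ} (hIntg : IntegrableOn (fun y => (u y).toReal) (Metric.closedBall (0 : EucSp n) ρ))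
    {x : EucSp n} (hx : x ≠ 0) (hxρ : 2 * ‖x‖ ≤ ρ) {τ : ℝ} (hτ : 0 < τ) (hτ2 : τ ≤ 1 / 2) :
    |‖x‖ ^ (p - 2) * ballAvg u x (τ * ‖x‖)| ≤ Θ * 2 ^ (p - 2) +
      (volume.real (Metric.closedBall (0 : EucSp n) 1))⁻¹ * (τ ^ n)⁻¹ *
      ∫ z in Metric.closedBall (0 : EucSp n) 2, |‖x‖ ^ (p - 2) * (u (‖x‖ • z)).toReal - Θ * rieszKernel p ‖z‖| := by
  set r := ‖x‖ with hr
  have hr0 : 0 < r := norm_pos_iff.mpr hx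
  set e := r⁻¹ • x with he
  have hre : r • e = x := by rw [he, smul_smul, mul_inv_cancel₀ hr0.ne', one_smul]
  have hen : ‖e‖ = 1 := by rw [he, norm_smul, norm_inv, Real.norm_eq_abs, abs_of_pos hr0, ← hr, inv_mul_cancel₀ hr0.ne']
  clear_value r e
  set c := (volume.real (Metric.closedBall (0 : EucSp n) 1))⁻¹ with hc
  have hB := unitBall_pos n
  have hc0 : 0 < c := inv_pos.mpr hB
  have hsub : Metric.closedBall e τ ⊆ Metric.closedBall (0 : EucSp n) 2 := by
    intro z hz
    rw [mem_closedBall_iff_norm] at hz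
    rw [mem_closedBall_zero_iff]
    have := norm_add_le (z - e) e
    rw [sub_add_cancel] at this
    linarith
  have hlow : ∀ z ∈ Metric.closedBall e τ, 1 / 2 ≤ ‖z‖ := by
    intro z hz
    rw [mem_closedBall_iff_norm'] at hz
    have := norm_add_le (e - z) z
    rw [sub_add_cancel] at this
    linarith
  have hKi : IntegrableOn (fun z : EucSp n => Θ * rieszKernel p ‖z‖) (Metric.closedBall 0 2) :=
    ((kernel_locInt hn hp hpn).integrableOn_isCompact (isCompact_closedBall _ _)).const_mul Θ
  have hUi : IntegrableOn (fun z : EucSp n => r ^ (p - 2) * (u (r • z)).toReal) (Metric.closedBall 0 2) := by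
    have h1 : Integrable ((Metric.closedBall (0 : EucSp n) ρ).indicator fun y => (u y).toReal) :=
      (integrable_indicator_iff measurableSet_closedBall).mpr hIntg
    have h2 := (h1.comp_smul hr0.ne').const_mul (r ^ (p - 2))
    refine h2.integrableOn.congr_fun ?_ measurableSet_closedBall
    intro z hz
    rw [mem_closedBall_zero_iff] at hz
    have : r • z ∈ Metric.closedBall (0 : EucSp n) ρ := by
      rw [mem_closedBall_zero_iff, norm_smul, Real.norm_eq_abs, abs_of_pos hr0]
      nlinarith
    simp only [indicator_of_mem this]
  have hA : r ^ (p - 2) * ballAvg u x (τ * r) = c * ((τ ^ n)⁻¹ *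
      ∫ z in Metric.closedBall e τ, r ^ (p - 2) * (u (r • z)).toReal) := by
    have h1 : ballAvg u x (τ * r) = c * ∫ y in Metric.closedBall (0 : EucSp n) 1, (u (x + (τ * r) • y)).toReal :=
      avg_eq (fun y => (u y).toReal) x (mul_pos hτ hr0)
    have h2 := ball_scale (fun z => r ^ (p - 2) * (u (r • z)).toReal) e hτ
    rw [← h2, h1, integral_const_mul]
    have h3 : ∀ y : EucSp n, r • (e + τ • y) = x + (τ * r) • y := fun y => by
      rw [smul_add, hre, smul_smul, mul_comm r τ]
    simp only [h3]
    ring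
  have hsplit : ∫ z in Metric.closedBall e τ, r ^ (p - 2) * (u (r • z)).toReal =
      (∫ z in Metric.closedBall e τ, (r ^ (p - 2) * (u (r • z)).toReal - Θ * rieszKernel p ‖z‖)) +
      ∫ z in Metric.closedBall e τ, Θ * rieszKernel p ‖z‖ := by
    rw [integral_sub (hUi.mono_set hsub) (hKi.mono_set hsub)]
    ring
  have hdI : IntegrableOn (fun z => |r ^ (p - 2) * (u (r • z)).toReal - Θ * rieszKernel p ‖z‖|)
      (Metric.closedBall (0 : EucSp n) 2) := (hUi.sub hKi).abs
  have hE1 : |∫ z in Metric.closedBall e τ, (r ^ (p - 2) * (u (r • z)).toReal - Θ * rieszKernel p ‖z‖)| ≤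
      ∫ z in Metric.closedBall (0 : EucSp n) 2, |r ^ (p - 2) * (u (r • z)).toReal - Θ * rieszKernel p ‖z‖| := by
    refine abs_integral_le_integral_abs.trans ?_
    exact setIntegral_mono_set hdI (Eventually.of_forall fun z => abs_nonneg _) hsub.eventuallyLE
  have hE2 : |∫ z in Metric.closedBall e τ, Θ * rieszKernel p ‖z‖| ≤ Θ * 2 ^ (p - 2) * (τ ^ n * c⁻¹) := by
    have h1 := norm_setIntegral_le_of_norm_le_const (μ := volume) (s := Metric.closedBall e τ)
      (f := fun z => Θ * rieszKernel p ‖z‖) (C := Θ * 2 ^ (p - 2)) measure_closedBall_lt_top (by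
        intro z hz
        have h2 := hlow z hz
        rw [rieszKernel, if_neg (by linarith), if_neg (by linarith), Real.norm_eq_abs, abs_mul, abs_of_nonneg hΘ, abs_neg,
          abs_of_nonneg (Real.rpow_nonneg (norm_nonneg _) _)]
        refine mul_le_mul_of_nonneg_left ?_ hΘ
        have h3 := Real.rpow_le_rpow_of_nonpos (show (0:ℝ) < 1 / 2 by norm_num) h2 (show 2 - p ≤ 0 by linarith)
        refine h3.trans (le_of_eq ?_)
        rw [one_div, Real.inv_rpow (by norm_num), ← Real.rpow_neg (by norm_num), neg_sub])
    rw [Measure.addHaar_real_closedBall' volume e hτ.le, finrank_euclideanSpace_fin] at h1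
    rw [hc, inv_inv]
    exact h1
  rw [hA, hsplit, abs_mul, abs_mul, abs_of_pos hc0, abs_of_pos (inv_pos.mpr (pow_pos hτ n))]
  have h5 := abs_add_le (∫ z in Metric.closedBall e τ, (r ^ (p - 2) * (u (r • z)).toReal - Θ * rieszKernel p ‖z‖))
    (∫ z in Metric.closedBall e τ, Θ * rieszKernel p ‖z‖)
  have h6 := mul_le_mul_of_nonneg_left (h5.trans (add_le_add hE1 hE2)) (mul_pos hc0 (inv_pos.mpr (pow_pos hτ n))).le
  rw [← mul_assoc]
  refine h6.trans (le_of_eq ?_)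
  have : τ ^ n ≠ 0 := (pow_pos hτ n).ne'
  field_simp
  ring

end


/-- If strong uniqueness of tangents holds for `u` at `0` (the rescalings
`u_r(x) = r^{p−2} u(rx)` converge in `L¹_loc` to `Θ K_p(|x|)`), then the volume
density exists near `0` and tends to `0` as `x → 0`, `x ≠ 0`. -/
theorem stmt12 (n : ℕ) (hn : 1 ≤ n) (p : ℝ) (hp : 2 < p)
    (F : Set (Matrix (Fin n) (Fin n) ℝ))
    (hF : IsConeSubequation F) (hFconv : Convex ℝ F)
    (hST : STInvariant F) (hchar : HasRieszChar F p)
    (Ω : Set (EucSp n)) (hΩ : IsOpen Ω) (h0 : (0 : EucSp n) ∈ Ω)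
    (u : EucSp n → EReal) (hu : IsFSubharmonicOn F Ω u)
    (hloc : LocallyIntegrableOn (fun y => (u y).toReal) Ω
      (volume : Measure (EucSp n)))
    (hae : ∀ᵐ y ∂(volume : Measure (EucSp n)), y ∈ Ω → u y ≠ ⊥)
    (Θ : ℝ) (hΘ : 0 ≤ Θ)
    (hconv : ∀ R : ℝ, 0 < R →
      Tendsto (fun r : ℝ =>
          ∫ x in Metric.closedBall (0 : EucSp n) R,
            |r ^ (p - 2) * (u (r • x)).toReal - Θ * rieszKernel p ‖x‖|)
        (𝓝[>] 0) (𝓝 0)) :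
    ∃ ρ : ℝ, 0 < ρ ∧ ∃ d : EucSp n → ℝ,
      (∀ x : EucSp n, x ≠ 0 → ‖x‖ < ρ →
        Tendsto (fun t : ℝ => ballAvg u x t / rieszKernel p t) (𝓝[>] 0) (𝓝 (d x))) ∧
      Tendsto d (𝓝[≠] (0 : EucSp n)) (𝓝 0) := by
  obtain ⟨ρ, hρ, hρΩ, hdens⟩ := ballAvg_density hn hp hF hFconv hST hchar hΩ h0 hu hloc hae
  have hpn : p ≤ n := riesz_le_dim hn hF hFconv hchar
  have hIntg : IntegrableOn (fun y => (u y).toReal) (Metric.closedBall 0 ρ) :=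
    hloc.integrableOn_compact_subset hρΩ (isCompact_closedBall _ _)
  choose! d hd0 hdt hdb using hdens
  refine ⟨ρ, hρ, d, fun x _ hxρ => hdt x hxρ.le, ?_⟩
  set c := (volume.real (Metric.closedBall (0 : EucSp n) 1))⁻¹ with hc
  set A := Θ * (2 : ℝ) ^ (p - 2) with hA
  have hA0 : 0 ≤ A := mul_nonneg hΘ (Real.rpow_nonneg (by norm_num) _)
  rw [Metric.tendsto_nhds]
  intro ε hε
  have h1 : Tendsto (fun t : ℝ => t ^ (2 - p)) (𝓝[>] 0) atTop := tendsto_rpow_neg_nhdsGT_zero (by linarith)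
  have h2 : ∀ᶠ t : ℝ in 𝓝[>] 0, t < 1 / 2 :=
    mem_nhdsWithin_of_mem_nhds (Iio_mem_nhds (by norm_num))
  obtain ⟨τ, hτ1, hτ2, hτ0⟩ := ((h1.eventually_gt_atTop ((1 / 2 : ℝ) ^ (2 - p) + (2 * A + 1) / ε)).and
    (h2.and self_mem_nhdsWithin)).exists
  have hτ : 0 < τ := hτ0
  have hnorm : Tendsto (fun x : EucSp n => ‖x‖) (𝓝[≠] 0) (𝓝[>] 0) := tendsto_norm_nhdsNE_zero
  have hE : Tendsto (fun x : EucSp n => (c * (τ ^ n)⁻¹ + c * ((1 / 2 : ℝ) ^ n)⁻¹) *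
      ∫ z in Metric.closedBall (0 : EucSp n) 2, |‖x‖ ^ (p - 2) * (u (‖x‖ • z)).toReal - Θ * rieszKernel p ‖z‖|)
      (𝓝[≠] 0) (𝓝 ((c * (τ ^ n)⁻¹ + c * ((1 / 2 : ℝ) ^ n)⁻¹) * 0)) :=
    ((hconv 2 (by norm_num)).comp hnorm).const_mul _
  rw [mul_zero] at hE
  have hsm : ∀ᶠ x : EucSp n in 𝓝[≠] 0, ‖x‖ < ρ / 2 :=
    hnorm.eventually (mem_nhdsWithin_of_mem_nhds (Iio_mem_nhds (by linarith)))
  filter_upwards [hE.eventually (gt_mem_nhds one_pos), hsm, self_mem_nhdsWithin] with x hx1 hx2 hx3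
  have hx : x ≠ 0 := hx3
  have hr0 : 0 < ‖x‖ := norm_pos_iff.mpr hx
  have hxρ : ‖x‖ ≤ ρ := by linarith
  have b1 := scaled_avg_bound hn hp hpn hΘ hIntg hx (by linarith) hτ hτ2.le
  have b2 := scaled_avg_bound hn hp hpn hΘ hIntg hx (by linarith) (show (0 : ℝ) < 1 / 2 by norm_num) le_rfl
  have b3 := hdb x hxρ (τ * ‖x‖) (1 / 2 * ‖x‖) (mul_pos hτ hr0) (mul_lt_mul_of_pos_right hτ2 hr0) (by linarith)
  rw [Real.mul_rpow hτ.le hr0.le, Real.mul_rpow (by norm_num) hr0.le, ← sub_mul] at b3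
  rw [← hc, ← hA] at b1 b2
  generalize (∫ z in Metric.closedBall (0 : EucSp n) 2,
    |‖x‖ ^ (p - 2) * (u (‖x‖ • z)).toReal - Θ * rieszKernel p ‖z‖|) = E at b1 b2 hx1
  have hq : 0 < (2 * A + 1) / ε := by positivity
  have hD : 0 < τ ^ (2 - p) - (1 / 2 : ℝ) ^ (2 - p) := by linarith
  have hrp : 0 < ‖x‖ ^ (2 - p) := Real.rpow_pos_of_pos hr0 _
  have hrp2 : 0 < ‖x‖ ^ (p - 2) := Real.rpow_pos_of_pos hr0 _
  have hrr : ‖x‖ ^ (p - 2) * ‖x‖ ^ (2 - p) = 1 := by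
    rw [← Real.rpow_add hr0]; simp
  rw [le_div_iff₀ (mul_pos hD hrp)] at b3
  have b4 := mul_le_mul_of_nonneg_left b3 hrp2.le
  have b5 : ‖x‖ ^ (p - 2) * (d x * ((τ ^ (2 - p) - (1 / 2 : ℝ) ^ (2 - p)) * ‖x‖ ^ (2 - p))) =
      d x * (τ ^ (2 - p) - (1 / 2 : ℝ) ^ (2 - p)) := by
    linear_combination (d x * (τ ^ (2 - p) - (1 / 2 : ℝ) ^ (2 - p))) * hrr
  rw [b5, mul_sub] at b4
  have b6 := (abs_le.mp b1).1
  have b7 := (abs_le.mp b2).2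
  have b8 : d x * (τ ^ (2 - p) - (1 / 2 : ℝ) ^ (2 - p)) < 2 * A + 1 := by linarith
  rw [Real.dist_eq, sub_zero, abs_of_nonneg (hd0 x hxρ)]
  by_contra hcon
  rw [not_lt] at hcon
  have b9 : (2 * A + 1) / ε < τ ^ (2 - p) - (1 / 2 : ℝ) ^ (2 - p) := by linarith
  rw [div_lt_iff₀ hε] at b9
  nlinarith

end
end

section
/- Let n ≥ 2 and let G be a closed subgroup of the orthogonal group O(n) that acts transitively on the unit sphere S^{n−1} ⊂ ℝⁿ. Let f : S^{n−1} → ℝ be a function with the property that for every g ∈ G the function x ↦ max{f(x), f(gx)} is continuously differentiable (C¹) on S^{n−1}. Then f is constant. -/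
open Set Filter Topology Matrix Metric
open scoped Manifold

noncomputable section

open Classical in
/-- degree-zero homogeneous extension of a function on the sphere -/
def extSph {E : Type*} [NormedAddCommGroup E] [NormedSpace ℝ E]
    (f : sphere (0 : E) 1 → ℝ) (z : E) : ℝ :=
  if h : z ≠ 0 then f ⟨‖z‖⁻¹ • z, by simp [norm_smul, h]⟩ else 0

lemma extSph_of_ne {E : Type*} [NormedAddCommGroup E] [NormedSpace ℝ E]
    (f : sphere (0 : E) 1 → ℝ) {z : E} (h : z ≠ 0) :
    extSph f z = f ⟨‖z‖⁻¹ • z, by simp [norm_smul, h]⟩ := by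
  simp [extSph, h]

lemma extSph_coe {E : Type*} [NormedAddCommGroup E] [NormedSpace ℝ E]
    (f : sphere (0 : E) 1 → ℝ) (x : sphere (0 : E) 1) :
    extSph f (x : E) = f x := by
  have hx : ‖(x : E)‖ = 1 := by simp
  have h : (x : E) ≠ 0 := by
    intro h; simp [h] at hx
  rw [extSph_of_ne f h]
  congr 1
  ext1
  simp [hx]

lemma extSph_smul {E : Type*} [NormedAddCommGroup E] [NormedSpace ℝ E]
    (f : sphere (0 : E) 1 → ℝ) {z : E} (h : z ≠ 0) {c : ℝ} (hc : 0 < c) :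
    extSph f (c • z) = extSph f z := by
  rw [extSph_of_ne f h, extSph_of_ne f (smul_ne_zero hc.ne' h)]
  congr 1
  ext1
  simp only [norm_smul, Real.norm_eq_abs, abs_of_pos hc, smul_smul]
  congr 1
  field_simp

lemma extSph_contDiffAt {E : Type*} [NormedAddCommGroup E] [InnerProductSpace ℝ E] {m : ℕ}
    [Fact (Module.finrank ℝ E = m + 1)]
    (f : sphere (0 : E) 1 → ℝ) (hf : ContMDiff (𝓡 m) 𝓘(ℝ, ℝ) 1 f) {z : E} (hz : z ≠ 0) :
    ContDiffAt ℝ 1 (extSph f) z := by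
  let U : TopologicalSpace.Opens E := ⟨{0}ᶜ, isOpen_compl_singleton⟩
  have hN : ContMDiff 𝓘(ℝ, E) 𝓘(ℝ, E) 1 (fun z : U => ‖(z : E)‖⁻¹ • (z : E)) := by
    intro x
    have hx : (x : E) ≠ 0 := x.2
    apply (contMDiffAt_subtype_iff (U := U) (f := fun z : E => ‖z‖⁻¹ • z) (x := x)).2
    apply ContDiffAt.contMDiffAt
    exact ((contDiffAt_norm ℝ hx).inv (by simpa using hx)).smul contDiffAt_id
  have hm : ∀ z : U, ‖(z : E)‖⁻¹ • (z : E) ∈ sphere (0 : E) 1 := by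
    intro z
    have : (z : E) ≠ 0 := z.2
    simp [norm_smul, this]
  have h2 := hf.comp (hN.codRestrict_sphere (n := m) hm)
  rw [← contMDiffAt_iff_contDiffAt]
  apply (contMDiffAt_subtype_iff (U := U) (f := extSph f) (x := ⟨z, hz⟩)).1
  convert h2.contMDiffAt using 1
  ext1 w
  have : (w : E) ≠ 0 := w.2
  rw [extSph_of_ne f this]
  rfl

lemma fderiv_max_eq {E : Type*} [NormedAddCommGroup E] [NormedSpace ℝ E] {a b : E → ℝ} {x : E}
    (ha : DifferentiableAt ℝ a x) (hb : DifferentiableAt ℝ b x)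
    (hm : DifferentiableAt ℝ (fun z => max (a z) (b z)) x) (h : a x = b x) :
    fderiv ℝ a x = fderiv ℝ b x := by
  have key : ∀ c : E → ℝ, DifferentiableAt ℝ c x → (∀ z, c z ≤ max (a z) (b z)) →
      c x = max (a x) (b x) → fderiv ℝ c x = fderiv ℝ (fun z => max (a z) (b z)) x := by
    intro c hc hle he
    have h1 : IsLocalMin (fun z => max (a z) (b z) - c z) x := by
      apply Eventually.of_forall
      intro z
      have := hle z
      simp only
      linarith
    have h2 := h1.fderiv_eq_zero
    rw [fderiv_fun_sub hm hc, sub_eq_zero] at h2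
    exact h2.symm
  rw [key a ha (fun z => le_max_left _ _) (by simp [h]),
    key b hb (fun z => le_max_right _ _) (by simp [h])]

abbrev act {n : ℕ} (g : Matrix (Fin n) (Fin n) ℝ) (x : EuclideanSpace ℝ (Fin n)) :
    EuclideanSpace ℝ (Fin n) := Matrix.toEuclideanLin g x

lemma act_continuous {n : ℕ} {X : Type*} [TopologicalSpace X] {g : X → Matrix (Fin n) (Fin n) ℝ}
    {x : X → EuclideanSpace ℝ (Fin n)} (hg : Continuous g) (hx : Continuous x) :
    Continuous (fun p => act (g p) (x p)) := by
  have : Continuous (fun p => (WithLp.toLp 2 (g p *ᵥ WithLp.ofLp (x p)) :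
      EuclideanSpace ℝ (Fin n))) := by
    apply (PiLp.continuous_toLp 2 _).comp
    exact hg.matrix_mulVec ((PiLp.continuous_ofLp 2 _).comp hx)
  exact this

lemma act_mul {n : ℕ} (g h : Matrix (Fin n) (Fin n) ℝ) (x : EuclideanSpace ℝ (Fin n)) :
    act (g * h) x = act g (act h x) := by
  simp [act, Matrix.toLpLin_mul_same]

lemma act_one {n : ℕ} (x : EuclideanSpace ℝ (Fin n)) : act 1 x = x := by
  simp [act]

lemma act_norm {n : ℕ} {g : Matrix (Fin n) (Fin n) ℝ}
    (hg : g ∈ Matrix.orthogonalGroup (Fin n) ℝ) (x : EuclideanSpace ℝ (Fin n)) :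
    ‖act g x‖ = ‖x‖ := by
  have h1 : gᵀ * g = 1 := (Matrix.mem_orthogonalGroup_iff' (Fin n) ℝ).1 hg
  have h2 : ‖act g x‖ ^ 2 = ‖x‖ ^ 2 := by
    have hh : ∀ y : EuclideanSpace ℝ (Fin n), ‖y‖ ^ 2 = WithLp.ofLp y ⬝ᵥ WithLp.ofLp y := by
      intro y
      rw [EuclideanSpace.norm_sq_eq]
      simp [dotProduct, sq]
    rw [hh, hh]
    change (g *ᵥ WithLp.ofLp x) ⬝ᵥ (g *ᵥ WithLp.ofLp x) = _
    rw [Matrix.dotProduct_mulVec, Matrix.vecMul_mulVec, ← Matrix.dotProduct_mulVec, h1]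
    simp
  exact (pow_left_inj₀ (norm_nonneg _) (norm_nonneg _) two_ne_zero).1 h2

lemma compact_of_orth {n : ℕ} (G : Set (Matrix (Fin n) (Fin n) ℝ))
    (hGsub : G ⊆ (Matrix.orthogonalGroup (Fin n) ℝ : Set (Matrix (Fin n) (Fin n) ℝ)))
    (hGclosed : IsClosed G) : IsCompact G := by
  have hK : IsCompact (Set.pi univ (fun _ : Fin n => Set.pi univ (fun _ : Fin n => Icc (-1 : ℝ) 1))) :=
    isCompact_univ_pi (fun _ => isCompact_univ_pi (fun _ => isCompact_Icc))
  refine IsCompact.of_isClosed_subset (X := Matrix (Fin n) (Fin n) ℝ) hK hGclosed ?_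
  intro g hg i _ j _
  have := entry_norm_bound_of_unitary (𝕜 := ℝ) (U := g) (hGsub hg) i j
  exact abs_le.1 this

lemma core {n : ℕ} (hn : 2 ≤ n) (G : Set (Matrix (Fin n) (Fin n) ℝ))
    (hGsub : G ⊆ (Matrix.orthogonalGroup (Fin n) ℝ : Set (Matrix (Fin n) (Fin n) ℝ)))
    (hGc : IsCompact G)
    (hG1 : (1 : Matrix (Fin n) (Fin n) ℝ) ∈ G)
    (hGmul : ∀ g ∈ G, ∀ h ∈ G, g * h ∈ G)
    (hGtrans : ∀ x y : EuclideanSpace ℝ (Fin n), ‖x‖ = 1 → ‖y‖ = 1 →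
      ∃ g ∈ G, Matrix.toEuclideanLin g x = y)
    (F : EuclideanSpace ℝ (Fin n) → ℝ)
    (hF : ∀ z, z ≠ 0 → ContDiffAt ℝ 1 F z)
    (hhom : ∀ z, z ≠ 0 → ∀ c : ℝ, 0 < c → F (c • z) = F z)
    (hmax : ∀ g ∈ G, ∀ z, z ≠ 0 → DifferentiableAt ℝ (fun z => max (F z) (F (act g z))) z) :
    ∀ x y, x ≠ 0 → y ≠ 0 → F x = F y := by
  have hact0 : ∀ g ∈ G, ∀ z, z ≠ 0 → act g z ≠ 0 := by
    intro g hg z hz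
    rw [← norm_ne_zero_iff, act_norm (hGsub hg)]
    exact norm_ne_zero_iff.2 hz
  have hd : ∀ z, z ≠ 0 → DifferentiableAt ℝ F z := fun z hz => (hF z hz).differentiableAt (by simp)
  by_cases hcase : ∀ z, z ≠ 0 → fderiv ℝ F z = 0
  · intro x y hx hy
    have hr : 1 < Module.rank ℝ (EuclideanSpace ℝ (Fin n)) := by
      rw [← Module.finrank_eq_rank]
      simp only [finrank_euclideanSpace, Fintype.card_fin]
      exact_mod_cast hn
    refine IsOpen.is_const_of_fderiv_eq_zero (𝕜 := ℝ) (s := {0}ᶜ) isOpen_compl_singleton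
      (isConnected_compl_singleton_of_one_lt_rank hr 0).isPreconnected
      (fun z hz => (hd z hz).differentiableWithinAt) (fun z hz => hcase z hz) hx hy
  exfalso
  push Not at hcase
  obtain ⟨x₀, hx₀, hne⟩ := hcase
  obtain ⟨v, hv⟩ : ∃ v, 0 < fderiv ℝ F x₀ v := by
    obtain ⟨w, hw⟩ := DFunLike.ne_iff.1 hne
    rcases lt_or_gt_of_ne hw with h | h
    · refine ⟨-w, ?_⟩
      simp only [map_neg]
      simp only [_root_.zero_apply] at h
      linarith
    · exact ⟨w, h⟩
  have hder : ∀ g ∈ G, F (act g x₀) = F x₀ → 0 < fderiv ℝ F (act g x₀) (act g v) := by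
    intro g hg he
    let L : EuclideanSpace ℝ (Fin n) →L[ℝ] EuclideanSpace ℝ (Fin n) :=
      LinearMap.toContinuousLinearMap (Matrix.toEuclideanLin g)
    have hb : HasFDerivAt (fun z => F (act g z)) ((fderiv ℝ F (act g x₀)).comp L) x₀ := by
      have h1 := (hd _ (hact0 g hg x₀ hx₀)).hasFDerivAt
      exact HasFDerivAt.comp x₀ (f := L) h1 L.hasFDerivAt
    have := fderiv_max_eq (hd x₀ hx₀) hb.differentiableAt (hmax g hg x₀ hx₀) he.symm
    rw [hb.fderiv] at this
    rw [this] at hv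
    exact hv
  have hFc : ∀ z, z ≠ 0 → ContinuousAt F z := fun z hz => (hF z hz).continuousAt
  have hcx : Continuous (fun p : ℝ × Matrix (Fin n) (Fin n) ℝ => act p.2 x₀) :=
    act_continuous continuous_snd continuous_const
  have hcv : Continuous (fun p : ℝ × Matrix (Fin n) (Fin n) ℝ => act p.2 v) :=
    act_continuous continuous_snd continuous_const
  have hcy : Continuous (fun p : ℝ × Matrix (Fin n) (Fin n) ℝ => act p.2 (x₀ + p.1 • v)) :=
    act_continuous continuous_snd (by fun_prop)
  have hloc : ∀ g ∈ G, ∀ᶠ p : ℝ × Matrix (Fin n) (Fin n) ℝ in 𝓝 (0, g),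
      0 < p.1 → F x₀ ≤ F (act p.2 x₀) → F x₀ < F (act p.2 (x₀ + p.1 • v)) := by
    intro g hg
    have hz := hact0 g hg x₀ hx₀
    have tx : Tendsto (fun p : ℝ × Matrix (Fin n) (Fin n) ℝ => act p.2 x₀) (𝓝 (0, g))
        (𝓝 (act g x₀)) := hcx.tendsto (0, g)
    have ty : Tendsto (fun p : ℝ × Matrix (Fin n) (Fin n) ℝ => act p.2 (x₀ + p.1 • v)) (𝓝 (0, g))
        (𝓝 (act g x₀)) := by
      have := hcy.tendsto (0, g)
      simpa using this
    have tv : Tendsto (fun p : ℝ × Matrix (Fin n) (Fin n) ℝ => act p.2 v) (𝓝 (0, g))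
        (𝓝 (act g v)) := hcv.tendsto (0, g)
    rcases lt_trichotomy (F (act g x₀)) (F x₀) with h | h | h
    · have := ((hFc _ hz).tendsto.comp tx).eventually_lt_const h
      filter_upwards [this] with p hp _ hp2
      simp only [Function.comp] at hp
      linarith
    · have hc := hder g hg h
      set L := fderiv ℝ F (act g x₀) with hL
      set c := L (act g v) with hcdef
      have hs : HasStrictFDerivAt F L (act g x₀) := (hF _ hz).hasStrictFDerivAt (by simp)
      set M := ‖act g v‖ + 1 with hM
      have hMpos : 0 < M := by positivity
      have e1 := hs.isLittleO.def (c := c / (2 * M)) (by positivity)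
      have e2 := (ty.prodMk_nhds tx).eventually e1
      have e3 := ((L.continuous.tendsto _).comp tv).eventually_const_lt
        (show c / 2 < L (act g v) by linarith)
      have e4 := tv.norm.eventually_lt_const (show ‖act g v‖ < M by linarith)
      filter_upwards [e2, e3, e4] with p h2 h3 h4 hp hx
      have hsub : act p.2 (x₀ + p.1 • v) - act p.2 x₀ = p.1 • act p.2 v := by
        simp only [act, map_add, map_smul]; abel
      rw [hsub, map_smul, norm_smul, Real.norm_eq_abs, Real.norm_eq_abs, abs_of_pos hp,
        smul_eq_mul] at h2
      simp only [Function.comp] at h3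
      have h5 := (abs_le.1 h2).1
      have h6 : c / (2 * M) * (p.1 * ‖act p.2 v‖) ≤ p.1 * (c / 2) := by
        calc c / (2 * M) * (p.1 * ‖act p.2 v‖) ≤ c / (2 * M) * (p.1 * M) := by gcongr
          _ = p.1 * (c / 2) := by field_simp
      have h7 : p.1 * (c / 2) < p.1 * L (act p.2 v) := by gcongr
      linarith
    · have := ((hFc _ hz).tendsto.comp ty).eventually_const_lt h
      filter_upwards [this] with p hp _ _
      exact hp
  have hall := hGc.eventually_forall_of_forall_eventually (x₀ := (0 : ℝ))
    (P := fun s g => 0 < s → F x₀ ≤ F (act g x₀) → F x₀ < F (act g (x₀ + s • v))) hloc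
  have hyne : ∀ᶠ s : ℝ in 𝓝 0, x₀ + s • v ≠ 0 := by
    have : Continuous (fun s : ℝ => x₀ + s • v) := by fun_prop
    exact this.continuousAt.eventually_ne (by simpa using hx₀)
  obtain ⟨s, ⟨hs1, hs2⟩, hs0⟩ := (((hall.and hyne).filter_mono nhdsWithin_le_nhds).and
    (self_mem_nhdsWithin : ∀ᶠ s : ℝ in 𝓝[>] 0, s ∈ Ioi 0)).exists
  have hs0 : 0 < s := hs0
  set y := x₀ + s • v with hy
  -- continuity on `G` of orbit functions
  have hcont : ∀ z, z ≠ 0 → ContinuousOn (fun g => F (act g z)) G := by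
    intro z hz g hg
    apply ContinuousAt.continuousWithinAt
    have h1 : Continuous (fun g : Matrix (Fin n) (Fin n) ℝ => act g z) :=
      act_continuous continuous_id continuous_const
    exact ContinuousAt.comp (f := fun g : Matrix (Fin n) (Fin n) ℝ => act g z)
      (hFc _ (hact0 g hg z hz)) h1.continuousAt
  have hKc : IsCompact (G ∩ (fun g => F (act g x₀)) ⁻¹' Ici (F x₀)) :=
    hGc.of_isClosed_subset ((hcont x₀ hx₀).preimage_isClosed_of_isClosed hGc.isClosed isClosed_Ici)
      inter_subset_left
  have h1K : (1 : Matrix (Fin n) (Fin n) ℝ) ∈ G ∩ (fun g => F (act g x₀)) ⁻¹' Ici (F x₀) := by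
    refine ⟨hG1, ?_⟩
    simp [act_one]
  obtain ⟨g₁, hg₁, hmin⟩ := hKc.exists_isMinOn ⟨1, h1K⟩ ((hcont y hs2).mono inter_subset_left)
  set t := F (act g₁ y) with ht
  have htlt : F x₀ < t := hs1 g₁ hg₁.1 hs0 hg₁.2
  -- the element `k`
  obtain ⟨k, hk, hkx⟩ := hGtrans (‖x₀‖⁻¹ • x₀) (‖y‖⁻¹ • y) (by simp [norm_smul, hx₀])
    (by simp [norm_smul, hs2])
  have hFk : ∀ g ∈ G, F (act (g * k) x₀) = F (act g y) := by
    intro g hg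
    have p1 : 0 < ‖x₀‖⁻¹ := by positivity
    have p2 : 0 < ‖y‖⁻¹ := by positivity
    rw [← hhom _ (hact0 _ (hGmul g hg k hk) x₀ hx₀) _ p1, ← hhom _ (hact0 g hg y hs2) _ p2]
    have e1 : ‖x₀‖⁻¹ • act (g * k) x₀ = act g (act k (‖x₀‖⁻¹ • x₀)) := by
      rw [act_mul]; simp only [act, map_smul]
    have e2 : ‖y‖⁻¹ • act g y = act g (‖y‖⁻¹ • y) := by simp only [act, map_smul]
    rw [e1, e2]
    congr 2
  have hpow : ∀ m : ℕ, k ^ m ∈ G := by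
    intro m
    induction m with
    | zero => simpa using hG1
    | succ m ih => rw [pow_succ]; exact hGmul _ ih _ hk
  have hstep : ∀ m : ℕ, t ≤ F (act (k ^ (m + 1)) x₀) := by
    have hs : ∀ m : ℕ, F x₀ ≤ F (act (k ^ m) x₀) → t ≤ F (act (k ^ (m + 1)) x₀) := by
      intro m hm
      rw [pow_succ, hFk _ (hpow m)]
      exact hmin ⟨hpow m, hm⟩
    intro m
    induction m with
    | zero => exact hs 0 (by simp [act_one])
    | succ m ih => exact hs _ (htlt.le.trans ih)
  haveI : FirstCountableTopology (Matrix (Fin n) (Fin n) ℝ) :=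
    inferInstanceAs (FirstCountableTopology (Fin n → Fin n → ℝ))
  obtain ⟨l, hl, φ, hφ, hlim⟩ := hGc.tendsto_subseq hpow
  have horth : ∀ g ∈ G, gᵀ * g = 1 := fun g hg =>
    (Matrix.mem_orthogonalGroup_iff' (Fin n) ℝ).1 (hGsub hg)
  have hlim2 : Tendsto (fun j => (k ^ φ j)ᵀ * k ^ φ (j + 1)) atTop (𝓝 (lᵀ * l)) := by
    have a1 : Tendsto (fun j => (k ^ φ j)ᵀ) atTop (𝓝 lᵀ) :=
      ((continuous_id.matrix_transpose).tendsto l).comp hlim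
    have a2 : Tendsto (fun j => k ^ φ (j + 1)) atTop (𝓝 l) := hlim.comp (tendsto_add_atTop_nat 1)
    exact a1.mul a2
  rw [horth l hl] at hlim2
  have hlim3 : Tendsto (fun j => F (act ((k ^ φ j)ᵀ * k ^ φ (j + 1)) x₀)) atTop (𝓝 (F x₀)) := by
    have h1 : Continuous (fun g : Matrix (Fin n) (Fin n) ℝ => act g x₀) :=
      act_continuous continuous_id continuous_const
    have h2 := (h1.tendsto 1).comp hlim2
    rw [act_one] at h2
    exact (hFc x₀ hx₀).tendsto.comp h2
  have : t ≤ F x₀ := by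
    refine ge_of_tendsto' hlim3 (fun j => ?_)
    have hlt : φ j < φ (j + 1) := hφ (Nat.lt_succ_self j)
    obtain ⟨d, hd⟩ := Nat.exists_eq_add_of_lt hlt
    have : (k ^ φ j)ᵀ * k ^ φ (j + 1) = k ^ (d + 1) := by
      rw [hd, add_assoc, pow_add, ← mul_assoc, horth _ (hpow _), one_mul]
    rw [this]
    exact hstep d
  linarith

/-- If `G` is a closed subgroup of `O(n)` acting transitively on the unit sphere
`S^{n−1} ⊂ ℝⁿ` (`n ≥ 2`) and `f : S^{n−1} → ℝ` is such that `x ↦ max (f x) (f (g x))`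
is `C¹` on the sphere for every `g ∈ G`, then `f` is constant. -/
theorem stmt13 (n : ℕ) (hn : 2 ≤ n)
    [Fact (Module.finrank ℝ (EuclideanSpace ℝ (Fin n)) = n - 1 + 1)]
    (G : Set (Matrix (Fin n) (Fin n) ℝ))
    (hGsub : G ⊆ (Matrix.orthogonalGroup (Fin n) ℝ : Set (Matrix (Fin n) (Fin n) ℝ)))
    (hGclosed : IsClosed G)
    (hG1 : (1 : Matrix (Fin n) (Fin n) ℝ) ∈ G)
    (hGmul : ∀ g ∈ G, ∀ h ∈ G, g * h ∈ G)
    (hGinv : ∀ g ∈ G, g⁻¹ ∈ G)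
    (hGtrans : ∀ x y : EuclideanSpace ℝ (Fin n), ‖x‖ = 1 → ‖y‖ = 1 →
      ∃ g ∈ G, Matrix.toEuclideanLin g x = y)
    (f : sphere (0 : EuclideanSpace ℝ (Fin n)) 1 → ℝ)
    (hf : ∀ g ∈ G,
      ∀ σ : sphere (0 : EuclideanSpace ℝ (Fin n)) 1 → sphere (0 : EuclideanSpace ℝ (Fin n)) 1,
        (∀ x : sphere (0 : EuclideanSpace ℝ (Fin n)) 1,
          ((σ x : EuclideanSpace ℝ (Fin n)) = Matrix.toEuclideanLin g (x : EuclideanSpace ℝ (Fin n)))) →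
        ContMDiff (𝓡 (n - 1)) 𝓘(ℝ, ℝ) 1 (fun x => max (f x) (f (σ x)))) :
    ∀ x y : sphere (0 : EuclideanSpace ℝ (Fin n)) 1, f x = f y := by
  have hsig : ∀ g ∈ G, ∀ x : sphere (0 : EuclideanSpace ℝ (Fin n)) 1,
      act g (x : EuclideanSpace ℝ (Fin n)) ∈ sphere (0 : EuclideanSpace ℝ (Fin n)) 1 := by
    intro g hg x
    simp only [mem_sphere_iff_norm, sub_zero]
    rw [act_norm (hGsub hg)]
    simp
  have hfC : ContMDiff (𝓡 (n - 1)) 𝓘(ℝ, ℝ) 1 f := by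
    have := hf 1 hG1 id (fun x => by simp)
    simpa using this
  have hmain := core hn G hGsub (compact_of_orth G hGsub hGclosed) hG1 hGmul hGtrans (extSph f)
    (fun z hz => extSph_contDiffAt f hfC hz) (fun z hz c hc => extSph_smul f hz hc) (by
      intro g hg z hz
      have h1 := extSph_contDiffAt _ (hf g hg (fun x => ⟨act g x, hsig g hg x⟩) (fun x => rfl)) hz
      refine (h1.differentiableAt (by simp)).congr_of_eventuallyEq ?_
      filter_upwards [isOpen_ne.mem_nhds hz] with w hw
      have hw : w ≠ 0 := hw
      have hgw : act g w ≠ 0 := by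
        rw [← norm_ne_zero_iff, act_norm (hGsub hg)]
        exact norm_ne_zero_iff.2 hw
      rw [extSph_of_ne f hw, extSph_of_ne f hgw, extSph_of_ne _ hw]
      congr 2
      ext1
      simp only [act_norm (hGsub hg)]
      simp [act])
  intro x y
  have hne : ∀ x : sphere (0 : EuclideanSpace ℝ (Fin n)) 1, (x : EuclideanSpace ℝ (Fin n)) ≠ 0 := by
    intro x h
    have : ‖(x : EuclideanSpace ℝ (Fin n))‖ = 1 := by simp
    simp [h] at this
  have := hmain x y (hne x) (hne y)
  rwa [extSph_coe, extSph_coe] at this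

end
end
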